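/- arXiv:2007.09575 — 3 statements merged into one kernel-verified Lean document; each statement's English description precedes it below -/
import Mathlib

section
/- Let B ∈ ℝ and C > 0, and consider the Whittaker–Hill operator with potential v(x) = −(B·cos 2x + C·cos 4x). (i) If B/(4√(2C)) = n + 1/2 or B/(4√(2C)) = −(n + 1/2) for some nonnegative integer n, then every even gap beyond the first n is closed, i.e., γ_{2m} = 0 for all integers m > n. (ii) If B/(4√(2C)) = n + 1 or B/(4√(2C)) = −(n + 1) for some nonnegative integer n, then every odd gap beyond the first n+1 is closed, i.e., γ_{2m−1} = 0 for all integers m ≥ n + 2. -/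
open Real

noncomputable section

/-- `f` is a (possibly zero) solution of `-f'' + v f = λ f` that is `π`-periodic. -/
def IsPerEF (v : ℝ → ℝ) (lam : ℝ) (f : ℝ → ℝ) : Prop :=
  ContDiff ℝ 2 f ∧ (∀ x, -(deriv (deriv f) x) + v x * f x = lam * f x) ∧
    ∀ x, f (x + Real.pi) = f x

/-- `f` is a (possibly zero) solution of `-f'' + v f = λ f` with `f(x+π) = -f(x)`. -/
def IsSemiEF (v : ℝ → ℝ) (lam : ℝ) (f : ℝ → ℝ) : Prop :=
  ContDiff ℝ 2 f ∧ (∀ x, -(deriv (deriv f) x) + v x * f x = lam * f x) ∧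
    ∀ x, f (x + Real.pi) = -f x

/-- Multiplicity of `λ` as a periodic eigenvalue: the dimension of the space of
π-periodic solutions. -/
def perMult (v : ℝ → ℝ) (lam : ℝ) : ℕ :=
  Module.finrank ℝ (Submodule.span ℝ {f : ℝ → ℝ | IsPerEF v lam f})

/-- Multiplicity of `λ` as a semi-periodic eigenvalue. -/
def semiMult (v : ℝ → ℝ) (lam : ℝ) : ℕ :=
  Module.finrank ℝ (Submodule.span ℝ {f : ℝ → ℝ | IsSemiEF v lam f})

/-- `lamP` enumerates the periodic eigenvalues of `-D² + v` in nondecreasing order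
with multiplicity (indices `0, 1, 2, …`). -/
def EnumPer (v : ℝ → ℝ) (lamP : ℕ → ℝ) : Prop :=
  Monotone lamP ∧ (∀ n, ∃ f, f ≠ 0 ∧ IsPerEF v (lamP n) f) ∧
    ∀ lam : ℝ, Nat.card {n : ℕ // lamP n = lam} = perMult v lam

/-- `lamM` enumerates the semi-periodic eigenvalues of `-D² + v` in nondecreasing order
with multiplicity (indices `1, 2, 3, …`). -/
def EnumSemi (v : ℝ → ℝ) (lamM : ℕ → ℝ) : Prop :=
  MonotoneOn lamM {n : ℕ | 1 ≤ n} ∧ (∀ n, 1 ≤ n → ∃ f, f ≠ 0 ∧ IsSemiEF v (lamM n) f) ∧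
    ∀ lam : ℝ, Nat.card {n : ℕ // 1 ≤ n ∧ lamM n = lam} = semiMult v lam

/-- The length of the `n`-th instability interval: `λ_{n+1}^- - λ_n^-` for odd `n`,
`λ_n^+ - λ_{n-1}^+` for even `n`. -/
def gapLen (lamP lamM : ℕ → ℝ) (n : ℕ) : ℝ :=
  if Odd n then lamM (n + 1) - lamM n else lamP n - lamP (n - 1)

namespace WH
open scoped ContDiff

/-- Smooth functions on the line. -/
def Sm (𝕜 : Type) [RCLike 𝕜] : Submodule 𝕜 (ℝ → 𝕜) where
  carrier := {f | ContDiff ℝ ∞ f}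
  add_mem' := fun {f g} hf hg => ContDiff.add (f := f) (g := g) (𝕜 := ℝ) (n := ∞) hf hg
  zero_mem' := (contDiff_const : ContDiff ℝ ∞ (fun _ : ℝ => (0 : 𝕜)))
  smul_mem' := fun c f hf =>
    ContDiff.smul (f := fun _ => c) (g := f) (𝕜 := ℝ) (n := ∞) contDiff_const hf

lemma Sm_smooth {𝕜 : Type} [RCLike 𝕜] (f : Sm 𝕜) : ContDiff ℝ ∞ f.1 := f.2

/-- Differentiation on smooth functions. -/
def dd (𝕜 : Type) [RCLike 𝕜] : Sm 𝕜 →ₗ[𝕜] Sm 𝕜 where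
  toFun f := ⟨deriv f.1, (contDiff_infty_iff_deriv.1 f.2).2⟩
  map_add' f g := by
    ext x
    have hf : Differentiable ℝ f.1 := (contDiff_infty_iff_deriv.1 f.2).1
    have hg : Differentiable ℝ g.1 := (contDiff_infty_iff_deriv.1 g.2).1
    exact deriv_add (hf x) (hg x)
  map_smul' c f := by
    ext x
    have hf : Differentiable ℝ f.1 := (contDiff_infty_iff_deriv.1 f.2).1
    exact deriv_const_smul c (hf x)

/-- Multiplication by a smooth function. -/
def mulS {𝕜 : Type} [RCLike 𝕜] (w : Sm 𝕜) : Sm 𝕜 →ₗ[𝕜] Sm 𝕜 where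
  toFun f := ⟨fun x => w.1 x * f.1 x, ContDiff.mul (Sm_smooth w) (Sm_smooth f)⟩
  map_add' f g := by
    ext x
    exact mul_add _ _ _
  map_smul' c f := by
    ext x
    exact mul_left_comm _ _ _

lemma dd_hasDeriv {𝕜 : Type} [RCLike 𝕜] (f : Sm 𝕜) (x : ℝ) :
    HasDerivAt f.1 ((dd 𝕜 f).1 x) x :=
  ((contDiff_infty_iff_deriv.1 f.2).1 x).hasDerivAt

lemma dd_eq {𝕜 : Type} [RCLike 𝕜] (f : Sm 𝕜) {x : ℝ} {d : 𝕜} (h : HasDerivAt f.1 d x) :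
    (dd 𝕜 f).1 x = d := (dd_hasDeriv f x).unique h

lemma Sm_cont {𝕜 : Type} [RCLike 𝕜] (f : Sm 𝕜) : Continuous f.1 := (Sm_smooth f).continuous

/-- The potential. -/
def pot (a : ℝ) (N : ℕ) (x : ℝ) : ℝ :=
  -(4 * a * (N + 1) * cos (2 * x) + 2 * a ^ 2 * cos (4 * x))

lemma pot_smooth (a : ℝ) (N : ℕ) : ContDiff ℝ ∞ (pot a N) := by
  unfold pot; fun_prop

/-- The Hill operator on smooth functions. -/
def Lop (a : ℝ) (N : ℕ) : Sm ℝ →ₗ[ℝ] Sm ℝ :=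
  -(dd ℝ ∘ₗ dd ℝ) + mulS ⟨pot a N, pot_smooth a N⟩

lemma Lop_apply (a : ℝ) (N : ℕ) (f : Sm ℝ) (x : ℝ) :
    (Lop a N f).1 x = -(dd ℝ (dd ℝ f)).1 x + pot a N x * f.1 x := rfl

/-- Functions with `f (x + π) = (-1)^N f x`. -/
def Per (N : ℕ) : Submodule ℝ (Sm ℝ) where
  carrier := {f | ∀ x, f.1 (x + π) = (-1) ^ N * f.1 x}
  add_mem' := by
    intro f g hf hg x
    have h1 := hf x
    have h2 := hg x
    change f.1 (x + π) + g.1 (x + π) = (-1) ^ N * (f.1 x + g.1 x)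
    rw [h1, h2]; ring
  zero_mem' := by
    intro x
    change (0 : ℝ) = (-1) ^ N * 0
    ring
  smul_mem' := by
    intro c f hf x
    have h1 := hf x
    change c * f.1 (x + π) = (-1) ^ N * (c * f.1 x)
    rw [h1]; ring

/-- The eigenspace. -/
def E (a : ℝ) (N : ℕ) (lam : ℝ) : Submodule ℝ (Sm ℝ) :=
  Per N ⊓ Module.End.eigenspace (Lop a N) lam

lemma mem_E {a : ℝ} {N : ℕ} {lam : ℝ} {f : Sm ℝ} :
    f ∈ E a N lam ↔ f ∈ Per N ∧ Lop a N f = lam • f := by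
  rw [E, Submodule.mem_inf, Module.End.mem_eigenspace_iff]

lemma eig_apply {a : ℝ} {N : ℕ} {lam : ℝ} {f : Sm ℝ} (h : Lop a N f = lam • f) (x : ℝ) :
    (dd ℝ (dd ℝ f)).1 x = (pot a N x - lam) * f.1 x := by
  have h1 : (Lop a N f).1 x = lam * f.1 x := by rw [h]; rfl
  rw [Lop_apply] at h1
  linarith

lemma eig_of {a : ℝ} {N : ℕ} {lam : ℝ} {f : Sm ℝ}
    (h : ∀ x, (dd ℝ (dd ℝ f)).1 x = (pot a N x - lam) * f.1 x) : Lop a N f = lam • f := by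
  ext x
  change (Lop a N f).1 x = lam * f.1 x
  rw [Lop_apply, h]; ring

lemma pot_bound (a : ℝ) (N : ℕ) (x : ℝ) : |pot a N x| ≤ |4 * a * (N + 1)| + |2 * a ^ 2| := by
  unfold pot
  rw [abs_neg]
  refine (abs_add_le _ _).trans ?_
  rw [abs_mul, abs_mul (2 * a ^ 2)]
  exact add_le_add (mul_le_of_le_one_right (abs_nonneg _) (abs_cos_le_one _))
    (mul_le_of_le_one_right (abs_nonneg _) (abs_cos_le_one _))

lemma ode_unique {a : ℝ} {N : ℕ} {lam : ℝ} {f : Sm ℝ} (h : Lop a N f = lam • f) {x₀ : ℝ}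
    (h0 : f.1 x₀ = 0) (h1 : (dd ℝ f).1 x₀ = 0) : f = 0 := by
  set R : ℝ := |4 * a * (N + 1)| + |2 * a ^ 2| + |lam| with hR
  have hR0 : 0 ≤ R := by positivity
  let F : ℝ → ℝ × ℝ → ℝ × ℝ := fun t p => (p.2, (pot a N t - lam) * p.1)
  have hb : ∀ t, |pot a N t - lam| ≤ R := by
    intro t
    refine (abs_sub _ _).trans ?_
    have := pot_bound a N t
    linarith
  have hL : ∀ t, LipschitzOnWith (max 1 R).toNNReal (F t)
      Set.univ := by
    intro t
    rw [lipschitzOnWith_univ]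
    refine LipschitzWith.of_dist_le_mul ?_
    rintro ⟨p1, p2⟩ ⟨q1, q2⟩
    rw [Real.coe_toNNReal _ (le_max_of_le_left zero_le_one)]
    change dist (p2, (pot a N t - lam) * p1) (q2, (pot a N t - lam) * q1) ≤ max 1 R * _
    rw [Prod.dist_eq, Prod.dist_eq, Real.dist_eq, Real.dist_eq, Real.dist_eq]
    dsimp only
    rw [← mul_sub, abs_mul]
    apply max_le
    · calc |p2 - q2| = 1 * |p2 - q2| := (one_mul _).symm
        _ ≤ _ := mul_le_mul (le_max_left _ _) (le_max_right _ _) (abs_nonneg _)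
          (le_max_of_le_left zero_le_one)
    · exact mul_le_mul ((hb t).trans (le_max_right _ _)) (le_max_left _ _) (abs_nonneg _)
          (le_max_of_le_left zero_le_one)
  have key := ODE_solution_unique_univ (v := F) (s := fun _ => Set.univ)
    (f := fun t => (f.1 t, (dd ℝ f).1 t)) (g := fun _ => ((0 : ℝ), (0 : ℝ))) (t₀ := x₀) (hv := hL)
    (hf := fun t => ⟨by
      have e1 := dd_hasDeriv f t
      have e2 := dd_hasDeriv (dd ℝ f) t
      rw [eig_apply h t] at e2
      exact e1.prodMk e2, trivial⟩)
    (hg := fun t => ⟨by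
      have := hasDerivAt_const t ((0 : ℝ), (0 : ℝ))
      convert this using 1
      simp [F], trivial⟩)
    (heq := by simp [h0, h1])
  ext x
  exact congrArg Prod.fst (congrFun key x)

end WH

namespace WH
open scoped ContDiff
open Filter Topology

/-- core of Sturm comparison for positive functions -/
lemma sturm_core {a : ℝ} {N : ℕ} {mu lam : ℝ} {g u : Sm ℝ} (hg : Lop a N g = mu • g)
    (hu : Lop a N u = lam • u) (hml : mu ≤ lam) {x y : ℝ} (hxy : x < y)
    (hx : g.1 x = 0) (hy : g.1 y = 0) (hd : 0 < (dd ℝ g).1 x)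
    (hgp : ∀ z ∈ Set.Ioo x y, 0 < g.1 z) (hup : ∀ z ∈ Set.Ico x y, 0 < u.1 z) : False := by
  have huy : 0 ≤ u.1 y := by
    have h1 : Tendsto u.1 (𝓝[<] y) (𝓝 (u.1 y)) := ((Sm_cont u).tendsto y).mono_left nhdsWithin_le_nhds
    refine ge_of_tendsto h1 ?_
    filter_upwards [Ico_mem_nhdsLT hxy] with z hz
    exact (hup z hz).le
  have hgy : (dd ℝ g).1 y ≤ 0 := by
    have h1 := (hasDerivAt_iff_tendsto_slope.1 (dd_hasDeriv g y)).mono_left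
      (nhdsWithin_mono y (fun z (hz : z ∈ Set.Iio y) => ne_of_lt hz))
    refine le_of_tendsto h1 ?_
    filter_upwards [Ioo_mem_nhdsLT hxy] with z hz
    rw [slope_def_field, hy, sub_zero]
    exact div_nonpos_of_nonneg_of_nonpos (hgp z hz).le (sub_neg.2 hz.2).le
  set W : ℝ → ℝ := fun t => (dd ℝ g).1 t * u.1 t - g.1 t * (dd ℝ u).1 t with hW
  have hWd : ∀ t, HasDerivAt W ((lam - mu) * (g.1 t * u.1 t)) t := by
    intro t
    have := ((dd_hasDeriv (dd ℝ g) t).mul (dd_hasDeriv u t)).sub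
      ((dd_hasDeriv g t).mul (dd_hasDeriv (dd ℝ u) t))
    refine HasDerivAt.congr_deriv (f := W) this ?_
    rw [eig_apply hg, eig_apply hu]; ring
  have hmono : MonotoneOn W (Set.Icc x y) := by
    apply monotoneOn_of_deriv_nonneg (convex_Icc x y)
    · exact fun t _ => (hWd t).continuousAt.continuousWithinAt
    · exact fun t _ => (hWd t).differentiableAt.differentiableWithinAt
    · intro t ht
      rw [interior_Icc] at ht
      rw [(hWd t).deriv]
      exact mul_nonneg (sub_nonneg.2 hml)
        (mul_nonneg (hgp t ht).le (hup t ⟨ht.1.le, ht.2⟩).le)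
  have h1 := hmono (Set.left_mem_Icc.2 hxy.le) (Set.right_mem_Icc.2 hxy.le) hxy.le
  have h2 : 0 < W x := by
    simp only [hW, hx, zero_mul, sub_zero]
    exact mul_pos hd (hup x ⟨le_rfl, hxy⟩)
  have h3 : W y ≤ 0 := by
    simp only [hW, hy, zero_mul, sub_zero]
    exact mul_nonpos_of_nonpos_of_nonneg hgy huy
  linarith

lemma neg_eig {a : ℝ} {N : ℕ} {lam : ℝ} {f : Sm ℝ} (h : Lop a N f = lam • f) :
    Lop a N (-f) = lam • (-f) := by
  rw [map_neg, h, smul_neg]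

lemma const_sign {f : ℝ → ℝ} (hf : Continuous f) {s : Set ℝ} (hs : s.OrdConnected)
    (h : ∀ z ∈ s, f z ≠ 0) : (∀ z ∈ s, 0 < f z) ∨ (∀ z ∈ s, f z < 0) := by
  by_contra! hcon
  obtain ⟨⟨p, hp, hp1⟩, ⟨q, hq, hq1⟩⟩ := hcon
  have hpre : IsPreconnected s := isPreconnected_iff_ordConnected.2 hs
  obtain ⟨z, hz, hz0⟩ := hpre.intermediate_value hp hq hf.continuousOn ⟨hp1, hq1⟩
  exact h z hz hz0

/-- Sturm comparison. -/
lemma sturm {a : ℝ} {N : ℕ} {mu lam : ℝ} {g u : Sm ℝ} (hg : Lop a N g = mu • g)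
    (hu : Lop a N u = lam • u) (hml : mu ≤ lam) (hg0 : g ≠ 0) {x y : ℝ} (hxy : x < y)
    (hx : g.1 x = 0) (hy : g.1 y = 0) : ∃ z ∈ Set.Ico x y, u.1 z = 0 := by
  by_contra! hno
  have hd : (dd ℝ g).1 x ≠ 0 := fun h => hg0 (ode_unique hg hx h)
  -- first zero after x
  obtain ⟨d, hxd, hd1⟩ : ∃ d > x, ∀ z ∈ Set.Ioo x d, g.1 z ≠ 0 := by
    have h1 : ∀ᶠ z in 𝓝[≠] x, g.1 z ≠ 0 := by
      have := (dd_hasDeriv g x).eventually_ne (c := 0) hd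
      exact this
    have h2 : ∀ᶠ z in 𝓝[>] x, g.1 z ≠ 0 :=
      h1.filter_mono (nhdsWithin_mono x (fun z (hz : z ∈ Set.Ioi x) => ne_of_gt hz))
    obtain ⟨d, hd, hd'⟩ := mem_nhdsGT_iff_exists_Ioo_subset.1 h2
    exact ⟨d, hd, fun z hz => hd' hz⟩
  set Z : Set ℝ := {z | z ∈ Set.Icc d y ∧ g.1 z = 0} with hZ
  have hZc : IsCompact Z := by
    have : Z = Set.Icc d y ∩ g.1 ⁻¹' {0} := by ext z; simp [hZ]
    rw [this]
    exact isCompact_Icc.inter_right (isClosed_singleton.preimage (Sm_cont g))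
  have hdy : d ≤ y := by
    by_contra! h
    exact hd1 y ⟨hxy, h⟩ hy
  have hZn : Z.Nonempty := ⟨y, ⟨hdy, le_rfl⟩, hy⟩
  obtain ⟨y', ⟨⟨hy1, hy2⟩, hy3⟩, hmin⟩ := hZc.exists_isLeast hZn
  have hgne : ∀ z ∈ Set.Ioo x y', g.1 z ≠ 0 := by
    intro z hz h0
    rcases lt_or_ge z d with h | h
    · exact hd1 z ⟨hz.1, h⟩ h0
    · have := hmin (show z ∈ Z from ⟨⟨h, hz.2.le.trans hy2⟩, h0⟩)
      exact absurd hz.2 (not_lt.2 this)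
  have hxy' : x < y' := lt_of_lt_of_le hxd hy1
  have hune : ∀ z ∈ Set.Ico x y', u.1 z ≠ 0 := fun z hz => hno z ⟨hz.1, hz.2.trans_le hy2⟩
  have main : ∀ g' u' : Sm ℝ, Lop a N g' = mu • g' → Lop a N u' = lam • u' →
      g' ≠ 0 → g'.1 x = 0 → g'.1 y' = 0 → (∀ z ∈ Set.Ioo x y', 0 < g'.1 z) →
      (∀ z ∈ Set.Ico x y', 0 < u'.1 z) → False := by
    intro g' u' h1 h2 h3 h4 h5 h6 h7
    refine sturm_core h1 h2 hml hxy' h4 h5 ?_ h6 h7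
    refine lt_of_le_of_ne ?_ (fun h => h3 (ode_unique h1 h4 h.symm))
    have e1 := (hasDerivAt_iff_tendsto_slope.1 (dd_hasDeriv g' x)).mono_left
      (nhdsWithin_mono x (fun z (hz : z ∈ Set.Ioi x) => ne_of_gt hz))
    refine ge_of_tendsto e1 ?_
    filter_upwards [Ioo_mem_nhdsGT hxy'] with z hz
    rw [slope_def_field, h4, sub_zero]
    exact div_nonneg (h6 z hz).le (sub_pos.2 hz.1).le
  have nn : ∀ f : Sm ℝ, ∀ z, (-f).1 z = -(f.1 z) := fun f z => rfl
  rcases const_sign (Sm_cont g) Set.ordConnected_Ioo hgne with hgs | hgs <;>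
  rcases const_sign (Sm_cont u) Set.ordConnected_Ico hune with hus | hus
  · exact main g u hg hu hg0 hx hy3 hgs hus
  · exact main g (-u) hg (neg_eig hu) hg0 hx hy3 hgs (fun z hz => by
      rw [nn]; exact neg_pos.2 (hus z hz))
  · exact main (-g) u (neg_eig hg) hu (neg_ne_zero.2 hg0) (by rw [nn, hx, neg_zero])
      (by rw [nn, hy3, neg_zero]) (fun z hz => by
      rw [nn]; exact neg_pos.2 (hgs z hz)) hus
  · exact main (-g) (-u) (neg_eig hg) (neg_eig hu) (neg_ne_zero.2 hg0) (by rw [nn, hx, neg_zero])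
      (by rw [nn, hy3, neg_zero]) (fun z hz => by
      rw [nn]; exact neg_pos.2 (hgs z hz)) (fun z hz => by
      rw [nn]; exact neg_pos.2 (hus z hz))

end WH

namespace WH
open scoped ContDiff
open Filter Topology

/-- basis functions -/
def bas (a : ℝ) (N j : ℕ) : Sm ℝ :=
  ⟨fun x => exp (a * cos (2 * x)) * (cos x ^ j * sin x ^ (N - j)), by
    change ContDiff ℝ ∞ _
    fun_prop⟩

/-- The invariant subspace. -/
def V (a : ℝ) (N : ℕ) : Submodule ℝ (Sm ℝ) :=
  Submodule.span ℝ (Set.range fun j : Fin (N + 1) => bas a N j)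

lemma bas_mem (a : ℝ) (N j : ℕ) (hj : j ≤ N) : bas a N j ∈ V a N :=
  Submodule.subset_span ⟨⟨j, Nat.lt_succ_of_le hj⟩, rfl⟩

lemma bas_apply (a : ℝ) (N j : ℕ) (x : ℝ) :
    (bas a N j).1 x = exp (a * cos (2 * x)) * (cos x ^ j * sin x ^ (N - j)) := rfl

lemma cos_two_pi (x : ℝ) : cos (2 * (x + π)) = cos (2 * x) := by
  rw [show 2 * (x + π) = 2 * x + 2 * π by ring, cos_add_two_pi]

lemma V_le_Per (a : ℝ) (N : ℕ) : V a N ≤ Per N := by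
  rw [V, Submodule.span_le]
  rintro _ ⟨⟨j, hj⟩, rfl⟩
  change ∀ x, _
  intro x
  dsimp only
  rw [bas_apply, bas_apply, cos_two_pi, cos_add_pi, sin_add_pi, neg_pow (cos x), neg_pow (sin x)]
  have : (-1 : ℝ) ^ N = (-1) ^ j * (-1) ^ (N - j) := by
    rw [← pow_add]; congr 1; omega
  rw [this]; ring

/-- the inner product -/
def ip (f g : Sm ℝ) : ℝ := ∫ x in (0 : ℝ)..π, f.1 x * g.1 x

lemma V_poly {a : ℝ} {N : ℕ} {u : Sm ℝ} (hu : u ∈ V a N) :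
    ∃ Q : Polynomial ℂ, Q.natDegree ≤ N ∧ ∀ x : ℝ,
      (u.1 x : ℂ) * Complex.exp (x * Complex.I) ^ N =
        (exp (a * cos (2 * x)) : ℝ) * Q.eval (Complex.exp (x * Complex.I) ^ 2) := by
  refine Submodule.span_induction (p := fun u _ => ∃ Q : Polynomial ℂ, Q.natDegree ≤ N ∧ ∀ x : ℝ,
      (u.1 x : ℂ) * Complex.exp (x * Complex.I) ^ N =
        (exp (a * cos (2 * x)) : ℝ) * Q.eval (Complex.exp (x * Complex.I) ^ 2)) ?_ ?_ ?_ ?_ hu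
  · rintro _ ⟨⟨j, hj⟩, rfl⟩
    refine ⟨Polynomial.C ((1 / 2) ^ j * (1 / (2 * Complex.I)) ^ (N - j)) *
      ((Polynomial.X + Polynomial.C 1) ^ j * (Polynomial.X + Polynomial.C (-1)) ^ (N - j)), ?_, ?_⟩
    · refine (Polynomial.natDegree_C_mul_le _ _).trans ?_
      refine Polynomial.natDegree_mul_le.trans ?_
      refine (add_le_add Polynomial.natDegree_pow_le Polynomial.natDegree_pow_le).trans ?_
      rw [Polynomial.natDegree_X_add_C, Polynomial.natDegree_X_add_C]
      omega
    · intro x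
      dsimp only
      rw [bas_apply]
      simp only [Polynomial.eval_mul, Polynomial.eval_C, Polynomial.eval_pow, Polynomial.eval_add,
        Polynomial.eval_X]
      set z := Complex.exp (x * Complex.I) with hz
      have hzz : z * Complex.exp (-x * Complex.I) = 1 := by
        rw [hz, ← Complex.exp_add]; simp
      have h1 : (cos x : ℂ) * z = (1 / 2) * (z ^ 2 + 1) := by
        rw [Complex.ofReal_cos, Complex.cos, ← hz]
        linear_combination (1 / 2) * hzz
      have h2 : (sin x : ℂ) * z = (1 / (2 * Complex.I)) * (z ^ 2 + -1) := by
        rw [Complex.ofReal_sin, Complex.sin, ← hz]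
        rw [one_div, mul_inv, Complex.inv_I]
        linear_combination (Complex.I / 2) * hzz
      have h3 : z ^ N = z ^ j * z ^ (N - j) := by
        rw [← pow_add]; congr 1; omega
      push_cast
      rw [h3]
      calc _ = Complex.exp (a * Complex.cos (2 * x)) *
            (((cos x : ℝ) * z) ^ j * ((sin x : ℝ) * z) ^ (N - j)) := by
            push_cast
            rw [mul_pow, mul_pow]; ring
        _ = _ := by
            rw [h1, h2, mul_pow, mul_pow]; ring
  · exact ⟨0, by simp, fun x => by simp⟩
  · rintro f g _ _ ⟨P, hP, hP'⟩ ⟨Q, hQ, hQ'⟩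
    refine ⟨P + Q, (Polynomial.natDegree_add_le _ _).trans (max_le hP hQ), fun x => ?_⟩
    rw [Polynomial.eval_add, mul_add, ← hP', ← hQ', ← add_mul, ← Complex.ofReal_add]
    rfl
  · rintro c f _ ⟨P, hP, hP'⟩
    refine ⟨Polynomial.C (c : ℂ) * P, (Polynomial.natDegree_C_mul_le _ _).trans hP, fun x => ?_⟩
    rw [Polynomial.eval_mul, Polynomial.eval_C, mul_left_comm, ← hP', ← mul_assoc,
      ← Complex.ofReal_mul]
    rfl

lemma V_zeros {a : ℝ} {N : ℕ} {u : Sm ℝ} (hu : u ∈ V a N) (hu0 : u ≠ 0) (c : ℝ) (s : Finset ℝ)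
    (hs : ∀ x ∈ s, x ∈ Set.Ico c (c + π) ∧ u.1 x = 0) : s.card ≤ N := by
  obtain ⟨Q, hQ, hQ'⟩ := V_poly hu
  have hQ0 : Q ≠ 0 := by
    rintro rfl
    apply hu0
    ext x
    have := hQ' x
    simpa [Complex.exp_ne_zero] using this
  refine le_trans ?_ hQ
  refine le_trans ?_ (Polynomial.card_roots' Q)
  refine le_trans ?_ (Multiset.toFinset_card_le _)
  refine Finset.card_le_card_of_injOn (fun x : ℝ => Complex.exp (x * Complex.I) ^ 2) ?_ ?_
  · intro x hx
    have := hQ' x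
    rw [(hs x hx).2] at this
    simp only [Finset.mem_coe, Multiset.mem_toFinset]
    rw [Polynomial.mem_roots hQ0, Polynomial.IsRoot]
    have h2 : ((exp (a * cos (2 * x)) : ℝ) : ℂ) ≠ 0 := by
      exact_mod_cast (exp_pos _).ne'
    simp only [Complex.ofReal_zero, zero_mul] at this
    exact (mul_eq_zero.1 this.symm).resolve_left h2
  · intro x hx y hy hxy
    have h1 := (hs x hx).1
    have h2 := (hs y hy).1
    dsimp only at hxy
    rw [← Complex.exp_nat_mul, ← Complex.exp_nat_mul, Complex.exp_eq_exp_iff_exists_int] at hxy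
    obtain ⟨n, hn⟩ := hxy
    have h3 : x = y + n * π := by
      have h4 := congrArg Complex.im hn
      simp at h4
      linarith
    have hpi := pi_pos
    have hn1 : (n : ℝ) < 1 := by
      by_contra! h
      nlinarith [h1.1, h1.2, h2.1, h2.2]
    have hn2 : (-1 : ℝ) < n := by
      by_contra! h
      nlinarith [h1.1, h1.2, h2.1, h2.2]
    have hn3 : n = 0 := by
      have : n < 1 := by exact_mod_cast hn1
      have : -1 < n := by exact_mod_cast hn2
      omega
    rw [h3, hn3]; simp

lemma transfer_zeros {a : ℝ} {N : ℕ} {mu lam : ℝ} {g u : Sm ℝ} (hg : Lop a N g = mu • g)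
    (hu : Lop a N u = lam • u) (hml : mu ≤ lam) (hg0 : g ≠ 0) (d : ℝ) (hd : g.1 d = 0)
    (s : Finset ℝ) : (∀ x ∈ s, x < d ∧ g.1 x = 0) →
    ∃ t : Finset ℝ, t.card = s.card ∧ ∀ z ∈ t, u.1 z = 0 ∧ z < d ∧ ∃ x ∈ s, x ≤ z := by
  induction s using Finset.induction_on_min with
  | empty => exact fun _ => ⟨∅, rfl, by simp⟩
  | insert x s hx ih =>
    intro h
    obtain ⟨t, ht, ht'⟩ := ih (fun y hy => h y (Finset.mem_insert_of_mem hy))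
    have hne : (insert d s).Nonempty := ⟨d, Finset.mem_insert_self _ _⟩
    set y := (insert d s).min' hne with hy
    have hym : y ∈ insert d s := Finset.min'_mem _ _
    have hyd : y ≤ d := Finset.min'_le _ _ (Finset.mem_insert_self _ _)
    have hxd := h x (Finset.mem_insert_self _ _)
    have hgy : g.1 y = 0 := by
      rcases Finset.mem_insert.1 hym with h1 | h1
      · rw [h1]; exact hd
      · exact (h y (Finset.mem_insert_of_mem h1)).2
    have hxy : x < y := by
      rcases Finset.mem_insert.1 hym with h1 | h1
      · rw [h1]; exact hxd.1
      · exact hx y h1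
    obtain ⟨z, hz, hz0⟩ := sturm hg hu hml hg0 hxy hxd.2 hgy
    have hzt : z ∉ t := by
      intro hzt
      obtain ⟨_, _, x', hx', hle⟩ := ht' z hzt
      have := Finset.min'_le _ _ (Finset.mem_insert_of_mem (a := x') (b := d) hx')
      have h2 := hz.2
      linarith
    refine ⟨insert z t, ?_, ?_⟩
    · rw [Finset.card_insert_of_notMem hzt, Finset.card_insert_of_notMem, ht]
      intro hxs
      exact lt_irrefl _ (hx x hxs)
    · intro z' hz'
      rcases Finset.mem_insert.1 hz' with rfl | h1
      · exact ⟨hz0, hz.2.trans_le hyd, x, Finset.mem_insert_self _ _, hz.1⟩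
      · obtain ⟨h2, h3, x', h4, h5⟩ := ht' z' h1
        exact ⟨h2, h3, x', Finset.mem_insert_of_mem h4, h5⟩

lemma g_zeros {a : ℝ} {N : ℕ} {mu lam : ℝ} {g u : Sm ℝ} (hg : Lop a N g = mu • g)
    (hgp : g ∈ Per N) (huV : u ∈ V a N) (hu0 : u ≠ 0)
    (hu : Lop a N u = lam • u) (hml : mu ≤ lam) (hg0 : g ≠ 0)
    (s : Finset ℝ) (hs : ∀ x ∈ s, x ∈ Set.Ico 0 π ∧ g.1 x = 0) : s.card ≤ N := by
  rcases s.eq_empty_or_nonempty with rfl | hne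
  · simp
  set x0 := s.min' hne with hx0
  have hm := hs x0 (Finset.min'_mem _ _)
  have hgd : g.1 (x0 + π) = 0 := by
    have h1 : g.1 (x0 + π) = (-1) ^ N * g.1 x0 := hgp x0
    rw [h1, hm.2, mul_zero]
  obtain ⟨t, ht, ht'⟩ := transfer_zeros hg hu hml hg0 (x0 + π) hgd s (fun x hx => by
    have := hs x hx
    have h1 := this.1.2
    have h2 := hm.1.1
    exact ⟨by linarith, this.2⟩)
  rw [← ht]
  refine V_zeros huV hu0 x0 t (fun z hz => ?_)
  obtain ⟨h1, h2, x, hx, h3⟩ := ht' z hz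
  exact ⟨⟨(Finset.min'_le _ _ hx).trans h3, h2⟩, h1⟩

end WH

namespace WH
open scoped ContDiff
open Filter Topology

/-- homogeneous trigonometric polynomials -/
def H (N : ℕ) : Submodule ℂ (ℝ → ℂ) :=
  Submodule.span ℂ (Set.range fun j : Fin (N + 1) =>
    fun x : ℝ => ((cos x : ℝ) : ℂ) ^ (j : ℕ) * ((sin x : ℝ) : ℂ) ^ (N - j))

lemma H_cos {N : ℕ} {q : ℝ → ℂ} (hq : q ∈ H N) :
    (fun x => ((cos x : ℝ) : ℂ) * q x) ∈ H (N + 1) := by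
  refine Submodule.span_induction
    (p := fun q _ => (fun x => ((cos x : ℝ) : ℂ) * q x) ∈ H (N + 1)) ?_ ?_ ?_ ?_ hq
  · rintro _ ⟨⟨j, hj⟩, rfl⟩
    refine Submodule.subset_span ⟨⟨j + 1, by omega⟩, ?_⟩
    funext x
    dsimp only
    rw [show N + 1 - (j + 1) = N - j by omega]
    ring
  · convert (H (N + 1)).zero_mem using 1
    funext x; simp
  · intro f g _ _ hf hg
    convert (H (N + 1)).add_mem hf hg using 1
    funext x; simp [mul_add]
  · intro c f _ hf
    convert (H (N + 1)).smul_mem c hf using 1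
    funext x; simp [mul_left_comm]

lemma H_sin {N : ℕ} {q : ℝ → ℂ} (hq : q ∈ H N) :
    (fun x => ((sin x : ℝ) : ℂ) * q x) ∈ H (N + 1) := by
  refine Submodule.span_induction
    (p := fun q _ => (fun x => ((sin x : ℝ) : ℂ) * q x) ∈ H (N + 1)) ?_ ?_ ?_ ?_ hq
  · rintro _ ⟨⟨j, hj⟩, rfl⟩
    refine Submodule.subset_span ⟨⟨j, by omega⟩, ?_⟩
    funext x
    dsimp only
    rw [show N + 1 - j = N - j + 1 by omega]
    ring
  · convert (H (N + 1)).zero_mem using 1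
    funext x; simp
  · intro f g _ _ hf hg
    convert (H (N + 1)).add_mem hf hg using 1
    funext x; simp [mul_add]
  · intro c f _ hf
    convert (H (N + 1)).smul_mem c hf using 1
    funext x; simp [mul_left_comm]

lemma H_lin {N : ℕ} {q : ℝ → ℂ} (hq : q ∈ H N) (α β : ℂ) :
    (fun x => (α * ((cos x : ℝ) : ℂ) + β * ((sin x : ℝ) : ℂ)) * q x) ∈ H (N + 1) := by
  convert (H (N + 1)).add_mem ((H (N + 1)).smul_mem α (H_cos hq))
    ((H (N + 1)).smul_mem β (H_sin hq)) using 1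
  funext x
  simp only [Pi.add_apply, Pi.smul_apply, smul_eq_mul]
  ring

lemma H_two {N : ℕ} {q : ℝ → ℂ} (hq : q ∈ H N) : q ∈ H (N + 2) := by
  convert (H (N + 2)).add_mem (H_cos (H_cos hq)) (H_sin (H_sin hq)) using 1
  funext x
  simp only [Pi.add_apply]
  have : ((cos x : ℝ) : ℂ) ^ 2 + ((sin x : ℝ) : ℂ) ^ 2 = 1 := by
    exact_mod_cast cos_sq_add_sin_sq x
  linear_combination (-q x) * this

lemma H_two_mul {N : ℕ} {q : ℝ → ℂ} (hq : q ∈ H N) (k : ℕ) : q ∈ H (N + 2 * k) := by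
  induction k with
  | zero => exact hq
  | succ k ih => exact H_two ih

lemma H_one : (fun _ => 1 : ℝ → ℂ) ∈ H 0 :=
  Submodule.subset_span ⟨0, by funext x; simp⟩

lemma H_prod (s : Finset ℝ) :
    (fun x : ℝ => ((∏ i ∈ s, sin (x - i) : ℝ) : ℂ)) ∈ H s.card := by
  induction s using Finset.induction_on with
  | empty => simpa using H_one
  | insert i s hi ih =>
    rw [Finset.card_insert_of_notMem hi]
    convert H_lin ih (-(sin i : ℝ)) ((cos i : ℝ)) using 1
    funext x
    rw [Finset.prod_insert hi, sin_sub]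
    push_cast
    ring

lemma H_exp (j k : ℕ) : (fun x : ℝ => Complex.exp (x * Complex.I) ^ j *
    Complex.exp (-x * Complex.I) ^ k) ∈ H (j + k) := by
  induction j with
  | zero =>
    induction k with
    | zero => simpa using H_one
    | succ k ih =>
      rw [← add_assoc]
      convert H_lin ih 1 (-Complex.I) using 1
      funext x
      rw [Complex.ofReal_cos, Complex.ofReal_sin]
      have : Complex.exp (-x * Complex.I) = Complex.cos x - Complex.sin x * Complex.I := by
        rw [Complex.exp_mul_I, Complex.cos_neg, Complex.sin_neg]; ring
      rw [pow_succ, this]; ring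
  | succ j ih =>
    rw [show j + 1 + k = j + k + 1 by ring]
    convert H_lin ih 1 (Complex.I) using 1
    funext x
    rw [Complex.ofReal_cos, Complex.ofReal_sin]
    rw [pow_succ, Complex.exp_mul_I]; ring

lemma H_orth {a : ℝ} {N : ℕ} {g : Sm ℝ} (hg : ∀ u ∈ V a N, ip g u = 0) {q : ℝ → ℂ} (hq : q ∈ H N) :
    Continuous q ∧
    ∫ x in (0 : ℝ)..π, ((g.1 x * exp (a * cos (2 * x)) : ℝ) : ℂ) * q x = 0 := by
  have hc : Continuous fun x : ℝ => ((g.1 x * exp (a * cos (2 * x)) : ℝ) : ℂ) := by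
    have := Sm_cont g
    fun_prop
  refine Submodule.span_induction (p := fun q _ => Continuous q ∧
    ∫ x in (0 : ℝ)..π, ((g.1 x * exp (a * cos (2 * x)) : ℝ) : ℂ) * q x = 0) ?_ ?_ ?_ ?_ hq
  · rintro _ ⟨⟨j, hj⟩, rfl⟩
    refine ⟨by fun_prop, ?_⟩
    have h1 := hg _ (bas_mem a N j (Nat.lt_succ_iff.1 hj))
    have h2 := congrArg (fun r : ℝ => (r : ℂ)) h1
    simp only [ip, ← intervalIntegral.integral_ofReal, Complex.ofReal_zero] at h2
    rw [← h2]
    congr 1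
    funext x
    rw [bas_apply]
    push_cast
    ring
  · exact ⟨continuous_zero, by simp⟩
  · rintro f h _ _ ⟨hf, hf'⟩ ⟨hh, hh'⟩
    refine ⟨hf.add hh, ?_⟩
    simp only [Pi.add_apply, mul_add]
    have e1 : Continuous fun x : ℝ => ((g.1 x * exp (a * cos (2 * x)) : ℝ) : ℂ) * f x := hc.mul hf
    have e2 : Continuous fun x : ℝ => ((g.1 x * exp (a * cos (2 * x)) : ℝ) : ℂ) * h x := hc.mul hh
    rw [intervalIntegral.integral_add (e1.intervalIntegrable _ _)
      (e2.intervalIntegrable _ _), hf', hh', add_zero]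
  · rintro c f _ ⟨hf, hf'⟩
    refine ⟨hf.const_smul c, ?_⟩
    simp only [Pi.smul_apply, smul_eq_mul, mul_left_comm _ c]
    rw [intervalIntegral.integral_const_mul, hf', mul_zero]

lemma sin_zero_of_abs_lt {t : ℝ} (h : sin t = 0) (h1 : -π < t) (h2 : t < π) : t = 0 :=
  (sin_eq_zero_iff_of_lt_of_lt h1 h2).1 h

/-- a continuous function with local sign everywhere has a global sign -/
lemma global_sign {F : ℝ → ℝ} (h : ∀ x, (∀ᶠ y in 𝓝 x, 0 ≤ F y) ∨ (∀ᶠ y in 𝓝 x, F y ≤ 0))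
    (h0 : ∀ x, ¬ (∀ᶠ y in 𝓝 x, F y = 0)) : (∀ x, 0 ≤ F x) ∨ (∀ x, F x ≤ 0) := by
  have hA : IsOpen {x | ∀ᶠ y in 𝓝 x, 0 ≤ F y} := isOpen_setOfPred_eventually_nhds
  have hB : IsOpen {x | ∀ᶠ y in 𝓝 x, F y ≤ 0} := isOpen_setOfPred_eventually_nhds
  have hcov : (Set.univ : Set ℝ) ⊆ {x | ∀ᶠ y in 𝓝 x, 0 ≤ F y} ∪ {x | ∀ᶠ y in 𝓝 x, F y ≤ 0} :=
    fun x _ => h x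
  have hdis : (Set.univ : Set ℝ) ∩ ({x | ∀ᶠ y in 𝓝 x, 0 ≤ F y} ∩ {x | ∀ᶠ y in 𝓝 x, F y ≤ 0}) = ∅ := by
    ext x
    simp only [Set.univ_inter, Set.mem_inter_iff, Set.mem_ofPred_eq, Set.mem_empty_iff_false,
      iff_false, not_and]
    intro h1 h2
    apply h0 x
    filter_upwards [h1, h2] with y hy1 hy2
    exact le_antisymm hy2 hy1
  rcases isPreconnected_iff_subset_of_disjoint.1 (isPreconnected_univ (α := ℝ)) _ _ hA hB hcov hdis with h1 | h1
  · left
    intro x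
    have h2 : ∀ᶠ y in 𝓝 x, 0 ≤ F y := h1 (Set.mem_univ x)
    exact h2.self_of_nhds
  · right
    intro x
    have h2 : ∀ᶠ y in 𝓝 x, F y ≤ 0 := h1 (Set.mem_univ x)
    exact h2.self_of_nhds

lemma local_sign_zero {g w : ℝ → ℝ} {x g' w' : ℝ} (hg : HasDerivAt g g' x) (hw : HasDerivAt w w' x)
    (hg0 : g x = 0) (hw0 : w x = 0) (hg' : g' ≠ 0) (hw' : w' ≠ 0) :
    (∀ᶠ y in 𝓝 x, 0 ≤ g y * w y) ∨ (∀ᶠ y in 𝓝 x, g y * w y ≤ 0) := by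
  have h1 := (hasDerivAt_iff_tendsto_slope.1 hg).mul (hasDerivAt_iff_tendsto_slope.1 hw)
  have h2 : ∀ y, g y * w y = (slope g x y * slope w x y) * (y - x) ^ 2 := by
    intro y
    by_cases hy : y = x
    · subst hy; simp [hg0]
    · have : y - x ≠ 0 := sub_ne_zero.2 hy
      rw [slope_def_field, slope_def_field, hg0, hw0]
      field_simp
      ring
  rcases lt_or_gt_of_ne (mul_ne_zero hg' hw') with h | h
  · right
    have h3 := h1.eventually (gt_mem_nhds h)
    rw [eventually_nhdsWithin_iff] at h3
    filter_upwards [h3] with y hy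
    by_cases hyx : y = x
    · subst hyx; simp [hg0]
    · rw [h2]
      exact mul_nonpos_of_nonpos_of_nonneg (hy hyx).le (sq_nonneg _)
  · left
    have h3 := h1.eventually (lt_mem_nhds h)
    rw [eventually_nhdsWithin_iff] at h3
    filter_upwards [h3] with y hy
    by_cases hyx : y = x
    · subst hyx; simp [hg0]
    · rw [h2]
      exact mul_nonneg (hy hyx).le (sq_nonneg _)

/-- Eigenfunctions orthogonal to `V` lie above those in `V`. -/
theorem order {a : ℝ} {N : ℕ} {mu lam : ℝ} {g u : Sm ℝ} (hg : g ∈ E a N mu) (hg0 : g ≠ 0)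
    (hgV : ∀ u ∈ V a N, ip g u = 0) (huV : u ∈ V a N) (hu0 : u ≠ 0)
    (hu : Lop a N u = lam • u) : lam < mu := by
  by_contra! hml
  obtain ⟨hgp, hge⟩ := mem_E.1 hg
  have hpi := pi_pos
  have hfin : {x : ℝ | x ∈ Set.Ico 0 π ∧ g.1 x = 0}.Finite := by
    by_contra hinf
    obtain ⟨t, ht, htc⟩ := (show Set.Infinite _ from hinf).exists_subset_card_eq (N + 1)
    have := g_zeros hge hgp huV hu0 hu hml hg0 t (fun x hx => ht hx)
    omega
  set s := hfin.toFinset with hs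
  have hsm : ∀ x, x ∈ s ↔ x ∈ Set.Ico 0 π ∧ g.1 x = 0 := fun x => by
    rw [hs, Set.Finite.mem_toFinset]; rfl
  have hcard : s.card ≤ N := g_zeros hge hgp huV hu0 hu hml hg0 s (fun x hx => (hsm x).1 hx)
  set w : ℝ → ℝ := fun x => ∏ i ∈ s, sin (x - i) with hw
  have hwc : Continuous w := by fun_prop
  have hgper : ∀ x, g.1 (x + π) = (-1) ^ N * g.1 x := hgp
  have hwper : ∀ x, w (x + π) = (-1) ^ s.card * w x := by
    intro x
    simp only [hw]
    rw [← Finset.prod_const, ← Finset.prod_mul_distrib]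
    refine Finset.prod_congr rfl (fun i _ => ?_)
    rw [show x + π - i = x - i + π by ring, sin_add_pi]; ring
  have hpair : Function.Periodic (fun x => (|g.1 x|, |w x|)) π := by
    intro x
    dsimp only
    rw [hgper, hwper, abs_mul, abs_mul, abs_neg_one_pow, abs_neg_one_pow, one_mul, one_mul]
  have hz : ∀ x, g.1 x = 0 ↔ w x = 0 := by
    intro x
    obtain ⟨y, hy, hxy⟩ := hpair.exists_mem_Ico₀ hpi x
    have e1 : |g.1 x| = |g.1 y| := congrArg Prod.fst hxy
    have e2 : |w x| = |w y| := congrArg Prod.snd hxy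
    rw [← abs_eq_zero, e1, ← abs_eq_zero (a := w x), e2, abs_eq_zero, abs_eq_zero]
    constructor
    · intro h
      have hys : y ∈ s := (hsm y).2 ⟨hy, h⟩
      exact Finset.prod_eq_zero hys (by simp)
    · intro h
      obtain ⟨i, hi, hi0⟩ := Finset.prod_eq_zero_iff.1 h
      have him := (hsm i).1 hi
      have : y - i = 0 := sin_zero_of_abs_lt hi0 (by linarith [hy.1, him.1.2])
        (by linarith [hy.2, him.1.1])
      rw [show y = i by linarith]
      exact him.2
  have hwd : ∀ x, w x = 0 → ∃ w', w' ≠ 0 ∧ HasDerivAt w w' x := by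
    intro x hx
    obtain ⟨i, hi, hi0⟩ := Finset.prod_eq_zero_iff.1 hx
    have hsplit : w = fun x => sin (x - i) * ∏ j ∈ s.erase i, sin (x - j) := by
      funext x
      exact (Finset.mul_prod_erase s (fun j => sin (x - j)) hi).symm
    have hrest : ∏ j ∈ s.erase i, sin (x - j) ≠ 0 := by
      rw [Finset.prod_ne_zero_iff]
      intro j hj h0
      obtain ⟨hji, hjs⟩ := Finset.mem_erase.1 hj
      have h1 : sin (i - j) = 0 := by
        rw [show i - j = (x - j) - (x - i) by ring, sin_sub, h0, hi0]; ring
      have h2 := (hsm i).1 hi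
      have h3 := (hsm j).1 hjs
      have : i - j = 0 := sin_zero_of_abs_lt h1 (by linarith [h2.1.1, h3.1.2])
        (by linarith [h2.1.2, h3.1.1])
      exact hji (by linarith)
    have hdr : DifferentiableAt ℝ (fun x => ∏ j ∈ s.erase i, sin (x - j)) x := by fun_prop
    have hd1 : HasDerivAt (fun x => sin (x - i)) (cos (x - i)) x := by
      have := (hasDerivAt_sin (x - i)).comp x ((hasDerivAt_id x).sub_const i)
      rw [mul_one] at this
      exact this
    refine ⟨cos (x - i) * ∏ j ∈ s.erase i, sin (x - j), mul_ne_zero ?_ hrest, ?_⟩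
    · intro hc
      have := sin_sq_add_cos_sq (x - i)
      rw [hc, hi0] at this
      norm_num at this
    · rw [hsplit]
      refine HasDerivAt.congr_deriv (hd1.mul hdr.hasDerivAt) ?_
      rw [hi0]; ring
  have hgd : ∀ x, g.1 x = 0 → (dd ℝ g).1 x ≠ 0 := fun x hx h => hg0 (ode_unique hge hx h)
  set F : ℝ → ℝ := fun x => g.1 x * w x with hF
  have hFc : Continuous F := (Sm_cont g).mul hwc
  have hloc : ∀ x, (∀ᶠ y in 𝓝 x, 0 ≤ F y) ∨ (∀ᶠ y in 𝓝 x, F y ≤ 0) := by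
    intro x
    by_cases hx : g.1 x = 0
    · have hwx := (hz x).1 hx
      obtain ⟨w', hw', hw'd⟩ := hwd x hwx
      exact local_sign_zero (dd_hasDeriv g x) hw'd hx hwx (hgd x hx) hw'
    · have hwx : w x ≠ 0 := fun h => hx ((hz x).2 h)
      rcases lt_or_gt_of_ne (show F x ≠ 0 from mul_ne_zero hx hwx) with h | h
      · right
        filter_upwards [hFc.continuousAt.eventually (gt_mem_nhds h)] with y hy using hy.le
      · left
        filter_upwards [hFc.continuousAt.eventually (lt_mem_nhds h)] with y hy using hy.le
  have hnz : ∀ x, ¬ (∀ᶠ y in 𝓝 x, F y = 0) := by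
    intro x hx
    have h1 : ∀ᶠ y in 𝓝 x, g.1 y = 0 := by
      filter_upwards [hx] with y hy
      rcases mul_eq_zero.1 hy with h | h
      · exact h
      · exact (hz y).2 h
    have h2 : HasDerivAt g.1 0 x := (hasDerivAt_const x (0 : ℝ)).congr_of_eventuallyEq h1
    exact hgd x h1.self_of_nhds (dd_eq g h2)
  have hsign := global_sign hloc hnz
  have hFper : ∀ x, F (x + π) = (-1) ^ (N + s.card) * F x := by
    intro x
    simp only [hF]
    rw [hgper, hwper, pow_add]; ring
  have hFne : ∃ x, F x ≠ 0 := by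
    by_contra! h
    exact hnz 0 (Eventually.of_forall h)
  have hpar : Even (N + s.card) := by
    by_contra hodd
    rw [Nat.not_even_iff_odd] at hodd
    obtain ⟨x, hx⟩ := hFne
    have h1 := hFper x
    rw [hodd.neg_one_pow] at h1
    apply hx
    rcases hsign with h | h
    · linarith [h x, h (x + π)]
    · linarith [h x, h (x + π)]
  obtain ⟨k, hk⟩ : ∃ k, N = s.card + 2 * k := by
    obtain ⟨r, hr⟩ := hpar
    exact ⟨r - s.card, by omega⟩
  have hwH : (fun x : ℝ => ((w x : ℝ) : ℂ)) ∈ H N := by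
    rw [hk]; exact H_two_mul (H_prod s) k
  have horth := (H_orth hgV hwH).2
  have hIntF : ∫ x in (0 : ℝ)..π, exp (a * cos (2 * x)) * F x = 0 := by
    have h1 : ((∫ x in (0 : ℝ)..π, exp (a * cos (2 * x)) * F x : ℝ) : ℂ) = 0 := by
      rw [← intervalIntegral.integral_ofReal, ← horth]
      congr 1
      funext x
      simp only [hF]
      push_cast
      ring
    exact_mod_cast h1
  have hGc : Continuous fun x => exp (a * cos (2 * x)) * F x := by fun_prop
  have hFabs : Function.Periodic (fun x => |F x|) π := by
    intro x
    dsimp only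
    rw [hFper, abs_mul, abs_neg_one_pow, one_mul]
  obtain ⟨x, hx⟩ := hFne
  obtain ⟨y, hy, hxy⟩ := hFabs.exists_mem_Ico₀ hpi x
  have hyne : F y ≠ 0 := by
    intro h
    rw [h, abs_zero, abs_eq_zero] at hxy
    exact hx hxy
  rcases hsign with h | h
  · have : 0 < ∫ x in (0 : ℝ)..π, exp (a * cos (2 * x)) * F x :=
      intervalIntegral.integral_pos hpi hGc.continuousOn
        (fun x _ => mul_nonneg (exp_pos _).le (h x))
        ⟨y, ⟨hy.1, hy.2.le⟩, mul_pos (exp_pos _) (lt_of_le_of_ne (h y) hyne.symm)⟩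
    linarith
  · have : 0 < ∫ x in (0 : ℝ)..π, -(exp (a * cos (2 * x)) * F x) :=
      intervalIntegral.integral_pos hpi hGc.neg.continuousOn
        (fun x _ => neg_nonneg.2 (mul_nonpos_of_nonneg_of_nonpos (exp_pos _).le (h x)))
        ⟨y, ⟨hy.1, hy.2.le⟩, neg_pos.2 (mul_neg_of_pos_of_neg (exp_pos _) (lt_of_le_of_ne (h y) hyne))⟩
    rw [intervalIntegral.integral_neg] at this
    linarith

end WH

namespace WH
open scoped ContDiff
open Filter Topology Polynomial

/-- root polynomial -/
def pN (N r : ℕ) : ℂ[X] := ∏ j ∈ Finset.range r, (X - C (2 * (j : ℂ) - N))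

lemma pN_up (N : ℕ) : (pN N (N + 1)).comp (X + C 2) * (X - C (N : ℂ)) =
    (X + C ((N : ℂ) + 2)) * pN N (N + 1) := by
  unfold pN
  rw [Polynomial.prod_comp]
  rw [Finset.prod_range_succ', Finset.prod_range_succ]
  have : ∀ j ∈ Finset.range N, (X - C (2 * ((j + 1 : ℕ) : ℂ) - N)).comp (X + C 2) =
      X - C (2 * (j : ℂ) - N) := by
    intro j _
    simp only [sub_comp, X_comp, C_comp]
    push_cast
    rw [show (2 * ((j : ℂ) + 1) - N) = (2 * (j : ℂ) - N) + 2 by ring, C_add]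
    ring
  rw [Finset.prod_congr rfl this]
  simp only [sub_comp, X_comp, C_comp]
  have e1 : (C (2 * ((0 : ℕ) : ℂ) - N) : ℂ[X]) = - C (N : ℂ) := by simp
  have e2 : (C (2 * (N : ℂ) - N) : ℂ[X]) = C (N : ℂ) := by congr 1; ring
  rw [e1, e2, C_add]
  ring

lemma pN_down (N : ℕ) : (pN N (N + 1)).comp (X - C 2) * (X + C (N : ℂ)) =
    (X - C ((N : ℂ) + 2)) * pN N (N + 1) := by
  have h1 : (pN N (N + 1)).comp (X - C 2) =
      ∏ j ∈ Finset.range (N + 1), (X - C (2 * ((j + 1 : ℕ) : ℂ) - N)) := by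
    unfold pN
    rw [Polynomial.prod_comp]
    refine Finset.prod_congr rfl (fun j _ => ?_)
    simp only [sub_comp, X_comp, C_comp]
    push_cast
    rw [show (2 * ((j : ℂ) + 1) - N) = (2 * (j : ℂ) - N) + 2 by ring, C_add]
    ring
  have h2 := Finset.prod_range_succ' (fun j : ℕ => (X - C (2 * (j : ℂ) - N) : ℂ[X])) (N + 1)
  have h3 := Finset.prod_range_succ (fun j : ℕ => (X - C (2 * (j : ℂ) - N) : ℂ[X])) (N + 1)
  rw [h1]
  have e1 : (X + C (N : ℂ) : ℂ[X]) = X - C (2 * ((0 : ℕ) : ℂ) - N) := by simp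
  have e2 : (C (2 * ((N + 1 : ℕ) : ℂ) - N) : ℂ[X]) = C ((N : ℂ) + 2) := by
    congr 1; push_cast; ring
  rw [e1, ← h2, h3, e2]
  unfold pN
  ring

lemma pN_neg (N : ℕ) : (pN N (N + 1)).comp (-X) = (-1) ^ (N + 1) * pN N (N + 1) := by
  unfold pN
  rw [Polynomial.prod_comp]
  rw [← Finset.prod_range_reflect]
  conv_rhs => rw [← Finset.card_range (N + 1), ← Finset.prod_const, Finset.card_range,
    ← Finset.prod_mul_distrib]
  refine Finset.prod_congr rfl (fun j hj => ?_)
  have hj' : j ≤ N := Nat.lt_succ_iff.1 (Finset.mem_range.1 hj)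
  simp only [sub_comp, X_comp, C_comp]
  rw [show N + 1 - 1 - j = N - j by omega, Nat.cast_sub hj']
  rw [show (2 * ((N : ℂ) - j) - N) = -(2 * (j : ℂ) - N) by ring, C_neg]
  ring

lemma aeval_semiconj {A : Type*} [Ring A] [Algebra ℂ A] {K K' M : A} (h : K * M = M * K')
    (q : ℂ[X]) : aeval K q * M = M * aeval K' q := by
  induction q using Polynomial.induction_on' with
  | add p q hp hq => rw [map_add, map_add, add_mul, mul_add, hp, hq]
  | monomial n c =>
    rw [aeval_monomial, aeval_monomial]
    have hn : K ^ n * M = M * K' ^ n := by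
      induction n with
      | zero => simp
      | succ n ih => rw [pow_succ, mul_assoc, h, ← mul_assoc, ih, mul_assoc, ← pow_succ]
    rw [mul_assoc, hn, ← mul_assoc, ← mul_assoc, Algebra.commutes]

/-- abstract intertwining relation -/
lemma intertwine {A : Type*} [Ring A] [Algebra ℂ A] {K M M' : A}
    (h : K * M = M * (K + algebraMap ℂ A 2)) (h' : K * M' = M' * (K - algebraMap ℂ A 2))
    (c : ℂ) (N : ℕ) :
    aeval K (pN N (N + 1)) * (K * K + c • (M * (K - algebraMap ℂ A N))
      - c • (M' * (K + algebraMap ℂ A N))) =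
    (K * K + c • (M * (K + algebraMap ℂ A ((N : ℂ) + 2)))
      - c • (M' * (K - algebraMap ℂ A ((N : ℂ) + 2)))) * aeval K (pN N (N + 1)) := by
  set D := aeval K (pN N (N + 1)) with hD
  have e0 : D * (K * K) = (K * K) * D := by
    have h1 := aeval_semiconj (K := K) (K' := K) (M := K * K) (mul_assoc _ _ _).symm (pN N (N + 1))
    exact h1
  have e1 : D * M * (K - algebraMap ℂ A N) = M * (K + algebraMap ℂ A ((N : ℂ) + 2)) * D := by
    rw [hD, aeval_semiconj h, mul_assoc, mul_assoc]
    congr 1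
    have := congrArg (aeval K) (pN_up N)
    simpa [aeval_comp] using this
  have e2 : D * M' * (K + algebraMap ℂ A N) = M' * (K - algebraMap ℂ A ((N : ℂ) + 2)) * D := by
    rw [hD, aeval_semiconj h', mul_assoc, mul_assoc]
    congr 1
    have := congrArg (aeval K) (pN_down N)
    simpa [aeval_comp] using this
  rw [mul_sub, mul_add, sub_mul, add_mul, e0, mul_smul_comm, mul_smul_comm, smul_mul_assoc,
    smul_mul_assoc, ← mul_assoc, ← mul_assoc D M', e1, e2]

/-- the momentum operator -/
def K : Module.End ℂ (Sm ℂ) := (-Complex.I) • dd ℂ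

lemma K_apply (f : Sm ℂ) (x : ℝ) : (K f).1 x = -Complex.I * (dd ℂ f).1 x := rfl

/-- exponentials -/
def ex (b : ℂ) : Sm ℂ := ⟨fun x => Complex.exp (b * x), by
  change ContDiff ℝ ∞ _
  have : ContDiff ℝ ∞ (fun x : ℝ => (x : ℂ)) := Complex.ofRealCLM.contDiff
  fun_prop⟩

lemma ex_deriv (b : ℂ) (x : ℝ) : HasDerivAt (ex b).1 (b * Complex.exp (b * x)) x := by
  have h1 : HasDerivAt (fun x : ℝ => b * (x : ℂ)) b x := by
    have := (Complex.ofRealCLM.hasDerivAt (x := x)).const_mul b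
    refine HasDerivAt.congr_deriv this ?_
    simp
  have := h1.cexp
  refine HasDerivAt.congr_deriv this ?_
  ring

lemma mulS_apply (w f : Sm ℂ) (x : ℝ) : (mulS w f).1 x = w.1 x * f.1 x := rfl

lemma K_ex (b : ℂ) : K * (mulS (ex b)) =
    (mulS (ex b)) * (K + algebraMap ℂ (Module.End ℂ (Sm ℂ)) (-Complex.I * b)) := by
  ext f x
  change (K (mulS (ex b) f)).1 x = (mulS (ex b) (K f + (-Complex.I * b) • f)).1 x
  rw [K_apply, mulS_apply]
  change _ = _ * ((K f).1 x + (-Complex.I * b) * f.1 x)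
  rw [K_apply]
  have h1 : HasDerivAt (mulS (ex b) f).1 _ x := (ex_deriv b x).mul (dd_hasDeriv f x)
  rw [dd_eq _ h1]
  change _ = Complex.exp (b * x) * _
  change -Complex.I * (_ + Complex.exp (b * x) * _) = _
  ring

/-- Ince operator -/
def Tc (a m : ℂ) : Module.End ℂ (Sm ℂ) :=
  K * K + (2 * a) • (mulS (ex (2 * Complex.I)) * (K - algebraMap ℂ _ m))
      - (2 * a) • (mulS (ex (-(2 * Complex.I))) * (K + algebraMap ℂ _ m))

lemma Tc_intertwine (a : ℂ) (N : ℕ) :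
    aeval K (pN N (N + 1)) * Tc a N = Tc a (-((N : ℂ) + 2)) * aeval K (pN N (N + 1)) := by
  have h1 := K_ex (2 * Complex.I)
  rw [show -Complex.I * (2 * Complex.I) = 2 by linear_combination (-2) * Complex.I_mul_I] at h1
  have h2 := K_ex (-(2 * Complex.I))
  rw [show -Complex.I * (-(2 * Complex.I)) = -2 by linear_combination (2) * Complex.I_mul_I,
    map_neg, ← sub_eq_add_neg] at h2
  have := intertwine (A := Module.End ℂ (Sm ℂ)) (K := K) (M := mulS (ex (2 * Complex.I)))
    (M' := mulS (ex (-(2 * Complex.I)))) h1 h2 (2 * a) N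
  unfold Tc
  rw [this, map_neg, sub_neg_eq_add, ← sub_eq_add_neg]

lemma Tc_apply (a m : ℂ) (f : Sm ℂ) (x : ℝ) : (Tc a m f).1 x =
    -(dd ℂ (dd ℂ f)).1 x + 4 * a * Complex.sin (2 * x) * (dd ℂ f).1 x
      - 4 * a * m * Complex.cos (2 * x) * f.1 x := by
  change (K (K f)).1 x + (2 * a) * (Complex.exp (2 * Complex.I * x) * ((K f).1 x - m * f.1 x))
    - (2 * a) * (Complex.exp (-(2 * Complex.I) * x) * ((K f).1 x + m * f.1 x)) = _
  have hKK : (K (K f)).1 x = -(dd ℂ (dd ℂ f)).1 x := by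
    rw [K_apply]
    have : dd ℂ (K f) = -Complex.I • dd ℂ (dd ℂ f) := by
      rw [K, LinearMap.smul_apply, map_smul]
    rw [this]
    change -Complex.I * (-Complex.I * _) = _
    linear_combination ((dd ℂ (dd ℂ f)).1 x) * Complex.I_mul_I
  rw [hKK, K_apply]
  have e1 : Complex.exp (2 * Complex.I * x) = Complex.cos (2 * x) + Complex.sin (2 * x) * Complex.I := by
    rw [← Complex.exp_mul_I]; congr 1; ring
  have e2 : Complex.exp (-(2 * Complex.I) * x) =
      Complex.cos (2 * x) - Complex.sin (2 * x) * Complex.I := by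
    rw [show -(2 * Complex.I) * (x : ℂ) = (-(2 * x)) * Complex.I by ring, Complex.exp_mul_I,
      Complex.cos_neg, Complex.sin_neg]; ring
  rw [e1, e2]
  linear_combination (-4 * a * Complex.sin (2 * x) * (dd ℂ f).1 x) * Complex.I_mul_I

/-- precomposition with an affine map -/
def aff {𝕜 : Type} [RCLike 𝕜] (s t : ℝ) : Sm 𝕜 →ₗ[𝕜] Sm 𝕜 where
  toFun f := ⟨fun x => f.1 (s * x + t), by
    change ContDiff ℝ ∞ _
    exact (Sm_smooth f).comp (by fun_prop)⟩
  map_add' f g := rfl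
  map_smul' c f := rfl

lemma aff_apply {𝕜 : Type} [RCLike 𝕜] (s t : ℝ) (f : Sm 𝕜) (x : ℝ) :
    (aff s t f).1 x = f.1 (s * x + t) := rfl

lemma dd_aff {𝕜 : Type} [RCLike 𝕜] (s t : ℝ) (f : Sm 𝕜) :
    dd 𝕜 (aff s t f) = (s : 𝕜) • aff s t (dd 𝕜 f) := by
  ext x
  refine dd_eq _ ?_
  have h1 : HasDerivAt (fun x : ℝ => s * x + t) s x := by
    simpa using ((hasDerivAt_id x).const_mul s).add_const t
  have h2 := HasDerivAt.scomp x (dd_hasDeriv f (s * x + t)) h1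
  refine HasDerivAt.congr_deriv h2 ?_
  change _ = (s : 𝕜) * _
  rw [RCLike.real_smul_eq_coe_mul]
  rfl

lemma K_aff (s t : ℝ) : K * aff s t = aff s t * ((s : ℂ) • K) := by
  ext f x
  change (K (aff s t f)).1 x = (aff s t ((s : ℂ) • (K f))).1 x
  rw [K_apply, dd_aff]
  change -Complex.I * ((s : ℂ) * _) = (s : ℂ) * (-Complex.I * _)
  rw [mul_left_comm]
  rfl

end WH

namespace WH
open scoped ContDiff
open Filter Topology Polynomial

/-- complexification -/
def cx (f : Sm ℝ) : Sm ℂ := ⟨fun x => (f.1 x : ℂ), by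
  change ContDiff ℝ ∞ _
  exact Complex.ofRealCLM.contDiff.comp (Sm_smooth f)⟩

/-- real part -/
def reS (f : Sm ℂ) : Sm ℝ := ⟨fun x => (f.1 x).re, by
  change ContDiff ℝ ∞ _
  exact Complex.reCLM.contDiff.comp (Sm_smooth f)⟩

/-- imaginary part -/
def imS (f : Sm ℂ) : Sm ℝ := ⟨fun x => (f.1 x).im, by
  change ContDiff ℝ ∞ _
  exact Complex.imCLM.contDiff.comp (Sm_smooth f)⟩

lemma dd_cx (f : Sm ℝ) : dd ℂ (cx f) = cx (dd ℝ f) := by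
  ext x
  exact dd_eq _ (dd_hasDeriv f x).ofReal_comp

lemma dd_reS (f : Sm ℂ) : dd ℝ (reS f) = reS (dd ℂ f) := by
  ext x
  refine dd_eq _ ?_
  exact (Complex.reCLM.hasFDerivAt.comp_hasDerivAt x (dd_hasDeriv f x))

lemma dd_imS (f : Sm ℂ) : dd ℝ (imS f) = imS (dd ℂ f) := by
  ext x
  refine dd_eq _ ?_
  exact (Complex.imCLM.hasFDerivAt.comp_hasDerivAt x (dd_hasDeriv f x))

/-- multiplication by `exp (-a cos (2 x))` -/
def em (a : ℝ) (f : Sm ℝ) : Sm ℝ := mulS ⟨fun x => exp (-(a * cos (2 * x))), by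
  change ContDiff ℝ ∞ _
  fun_prop⟩ f

lemma em_apply (a : ℝ) (f : Sm ℝ) (x : ℝ) :
    (em a f).1 x = exp (-(a * cos (2 * x))) * f.1 x := rfl

lemma hasDeriv_cos2 (x : ℝ) : HasDerivAt (fun x : ℝ => cos (2 * x)) (-2 * sin (2 * x)) x := by
  have h1 : HasDerivAt (fun x : ℝ => 2 * x) 2 x := by
    simpa using (hasDerivAt_id x).const_mul (2 : ℝ)
  refine HasDerivAt.congr_deriv h1.cos ?_
  ring

lemma hasDeriv_sin2 (x : ℝ) : HasDerivAt (fun x : ℝ => sin (2 * x)) (2 * cos (2 * x)) x := by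
  have h1 : HasDerivAt (fun x : ℝ => 2 * x) 2 x := by
    simpa using (hasDerivAt_id x).const_mul (2 : ℝ)
  refine HasDerivAt.congr_deriv h1.sin ?_
  ring

lemma hasDeriv_e (a x : ℝ) : HasDerivAt (fun x : ℝ => exp (-(a * cos (2 * x))))
    (2 * a * sin (2 * x) * exp (-(a * cos (2 * x)))) x := by
  refine HasDerivAt.congr_deriv ((hasDeriv_cos2 x).const_mul a).neg.exp ?_
  change exp (-(a * cos (2 * x))) * _ = _
  ring

lemma dd_em (a : ℝ) (f : Sm ℝ) (x : ℝ) : (dd ℝ (em a f)).1 x =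
    exp (-(a * cos (2 * x))) * ((dd ℝ f).1 x + 2 * a * sin (2 * x) * f.1 x) := by
  refine dd_eq _ ?_
  refine HasDerivAt.congr_deriv (f := (em a f).1) ((hasDeriv_e a x).mul (dd_hasDeriv f x)) ?_
  ring

lemma dd_dd_em (a : ℝ) (f : Sm ℝ) (x : ℝ) : (dd ℝ (dd ℝ (em a f))).1 x =
    exp (-(a * cos (2 * x))) * ((dd ℝ (dd ℝ f)).1 x + 4 * a * sin (2 * x) * (dd ℝ f).1 x
      + (4 * a ^ 2 * sin (2 * x) ^ 2 + 4 * a * cos (2 * x)) * f.1 x) := by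
  refine dd_eq _ ?_
  have h0 : (dd ℝ (em a f)).1 = fun x => exp (-(a * cos (2 * x))) *
      ((dd ℝ f).1 x + 2 * a * sin (2 * x) * f.1 x) := funext (dd_em a f)
  rw [h0]
  have h1 := (hasDeriv_e a x).mul ((dd_hasDeriv (dd ℝ f) x).add
    (((hasDeriv_sin2 x).const_mul (2 * a)).mul (dd_hasDeriv f x)))
  refine HasDerivAt.congr_deriv h1 ?_
  change _ * ((dd ℝ f).1 x + 2 * a * sin (2 * x) * f.1 x) + _ = _
  ring

lemma cos_four (x : ℝ) : cos (4 * x) = 1 - 2 * sin (2 * x) ^ 2 := by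
  rw [show 4 * x = 2 * (2 * x) by ring, cos_two_mul, ← sin_sq_add_cos_sq (2 * x)]; ring

lemma Tc_em {a : ℝ} {N : ℕ} {mu : ℝ} {h : Sm ℝ} (hh : Lop a N h = mu • h) :
    Tc a N (cx (em a h)) = ((mu + 2 * a ^ 2 : ℝ) : ℂ) • cx (em a h) := by
  ext x
  rw [Tc_apply, dd_cx, dd_cx]
  change -(((dd ℝ (dd ℝ (em a h))).1 x : ℝ) : ℂ) + 4 * a * Complex.sin (2 * x) *
    (((dd ℝ (em a h)).1 x : ℝ) : ℂ) - 4 * a * N * Complex.cos (2 * x) * (((em a h).1 x : ℝ) : ℂ) =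
    ((mu + 2 * a ^ 2 : ℝ) : ℂ) * (((em a h).1 x : ℝ) : ℂ)
  have key : -((dd ℝ (dd ℝ (em a h))).1 x) + 4 * a * sin (2 * x) *
    ((dd ℝ (em a h)).1 x) - 4 * a * N * cos (2 * x) * ((em a h).1 x) =
    (mu + 2 * a ^ 2) * ((em a h).1 x) := by
    rw [dd_dd_em, dd_em, em_apply, eig_apply hh]
    unfold pot
    rw [cos_four]
    ring
  have := congrArg (fun r : ℝ => (r : ℂ)) key
  push_cast at this ⊢
  exact this

/-- shifted back-transform of a solution of the partner equation -/
lemma back {a : ℝ} {N : ℕ} {mu : ℝ} {ρ : Sm ℝ}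
    (hρ : ∀ x, -(dd ℝ (dd ℝ ρ)).1 x + 4 * a * sin (2 * x) * (dd ℝ ρ).1 x
      + 4 * a * (N + 2) * cos (2 * x) * ρ.1 x = (mu + 2 * a ^ 2) * ρ.1 x) :
    Lop a N (em a (aff 1 (π / 2) ρ)) = mu • em a (aff 1 (π / 2) ρ) := by
  apply eig_of
  intro x
  have e1 : dd ℝ (aff 1 (π / 2) ρ) = aff 1 (π / 2) (dd ℝ ρ) := by
    rw [dd_aff]; simp
  have e2 : dd ℝ (dd ℝ (aff 1 (π / 2) ρ)) = aff 1 (π / 2) (dd ℝ (dd ℝ ρ)) := by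
    rw [e1, dd_aff]; simp
  rw [dd_dd_em, em_apply, e2, e1, aff_apply, aff_apply, aff_apply]
  have h1 := hρ (1 * x + π / 2)
  have s1 : sin (2 * (1 * x + π / 2)) = - sin (2 * x) := by
    rw [show 2 * (1 * x + π / 2) = 2 * x + π by ring, sin_add_pi]
  have c1 : cos (2 * (1 * x + π / 2)) = - cos (2 * x) := by
    rw [show 2 * (1 * x + π / 2) = 2 * x + π by ring, cos_add_pi]
  rw [s1, c1] at h1
  unfold pot
  rw [cos_four]
  linear_combination (-exp (-(a * cos (2 * x)))) * h1

lemma ker_K {k : ℂ} {ψ : Sm ℂ} (h : (aeval K (X - C k)) ψ = 0) :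
    ∃ c : ℂ, ∀ x : ℝ, ψ.1 x = c * Complex.exp (Complex.I * k * x) := by
  have h1 : K ψ = k • ψ := by
    simp only [map_sub, aeval_X, aeval_C] at h
    exact sub_eq_zero.1 h
  have h2 : ∀ x, (dd ℂ ψ).1 x = Complex.I * k * ψ.1 x := by
    intro x
    have h3 : -Complex.I * (dd ℂ ψ).1 x = k * ψ.1 x := by
      rw [← K_apply, h1]; rfl
    linear_combination Complex.I * h3 + (dd ℂ ψ).1 x * Complex.I_mul_I
  have hd : ∀ x : ℝ, HasDerivAt (fun x : ℝ => ψ.1 x * (ex (-(Complex.I * k))).1 x) 0 x := by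
    intro x
    refine HasDerivAt.congr_deriv ((dd_hasDeriv ψ x).mul (ex_deriv _ x)) ?_
    rw [h2]
    change _ * Complex.exp _ + _ = _
    ring
  have hc := is_const_of_deriv_eq_zero (fun x => (hd x).differentiableAt) (fun x => (hd x).deriv)
  refine ⟨ψ.1 0 * (ex (-(Complex.I * k))).1 0, fun x => ?_⟩
  rw [← hc x 0]
  change _ = ψ.1 x * Complex.exp (-(Complex.I * k) * x) * _
  rw [mul_assoc, ← Complex.exp_add]
  simp

lemma pN_coprime (N r : ℕ) : IsCoprime (pN N r) (X - C (2 * (r : ℂ) - N)) := by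
  unfold pN
  refine IsCoprime.prod_left (fun j hj => ?_)
  have hinj : Function.Injective (fun j : ℕ => 2 * (j : ℂ) - N) := by
    intro i j hij
    have : (i : ℂ) = j := by
      have h : 2 * (i : ℂ) - N = 2 * (j : ℂ) - N := hij
      linear_combination h / 2
    exact_mod_cast this
  exact pairwise_coprime_X_sub_C hinj (Finset.mem_range.1 hj).ne

lemma ker_orth {a : ℝ} {N : ℕ} {g : Sm ℝ} (hg : ∀ u ∈ V a N, ip g u = 0) (r : ℕ) (hr : r ≤ N + 1) :
    ∀ ψ : Sm ℂ, aeval K (pN N r) ψ = 0 →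
      ∫ x in (0 : ℝ)..π, ((g.1 x * exp (a * cos (2 * x)) : ℝ) : ℂ) * ψ.1 x = 0 := by
  have hcw : Continuous fun x : ℝ => ((g.1 x * exp (a * cos (2 * x)) : ℝ) : ℂ) := by
    have := Sm_cont g
    fun_prop
  induction r with
  | zero =>
    intro ψ h
    have : ψ = 0 := by simpa [pN] using h
    rw [this]
    simp
  | succ r ih =>
    intro ψ h
    have e1 : pN N (r + 1) = pN N r * (X - C (2 * (r : ℂ) - N)) := by
      unfold pN; rw [Finset.prod_range_succ]
    rw [e1] at h
    have hm : ψ ∈ LinearMap.ker (aeval K (pN N r * (X - C (2 * (r : ℂ) - N)))) := h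
    rw [← sup_ker_aeval_eq_ker_aeval_mul_of_coprime K (pN_coprime N r)] at hm
    obtain ⟨ψ1, h1, ψ2, h2, rfl⟩ := Submodule.mem_sup.1 hm
    have i1 := ih (by omega) ψ1 h1
    obtain ⟨c, hc⟩ := ker_K h2
    have i2 : ∫ x in (0 : ℝ)..π, ((g.1 x * exp (a * cos (2 * x)) : ℝ) : ℂ) * ψ2.1 x = 0 := by
      have hH := H_exp r (N - r)
      rw [show r + (N - r) = N by omega] at hH
      have := (H_orth hg ((H N).smul_mem c hH)).2
      rw [← this]
      congr 1
      funext x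
      rw [hc]
      congr 1
      simp only [Pi.smul_apply, smul_eq_mul]
      rw [← Complex.exp_nat_mul, ← Complex.exp_nat_mul, ← Complex.exp_add]
      congr 2
      rw [Nat.cast_sub (by omega)]
      ring
    have c1 : Continuous fun x : ℝ => ((g.1 x * exp (a * cos (2 * x)) : ℝ) : ℂ) * ψ1.1 x :=
      hcw.mul (Sm_cont ψ1)
    have c2 : Continuous fun x : ℝ => ((g.1 x * exp (a * cos (2 * x)) : ℝ) : ℂ) * ψ2.1 x :=
      hcw.mul (Sm_cont ψ2)
    calc _ = ∫ x in (0 : ℝ)..π, (((g.1 x * exp (a * cos (2 * x)) : ℝ) : ℂ) * ψ1.1 x +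
          ((g.1 x * exp (a * cos (2 * x)) : ℝ) : ℂ) * ψ2.1 x) := by
          congr 1
          funext x
          rw [← mul_add]; rfl
      _ = 0 := by
          rw [intervalIntegral.integral_add (c1.intervalIntegrable _ _)
            (c2.intervalIntegrable _ _), i1, i2, add_zero]

lemma Per_abs {N : ℕ} {f : Sm ℝ} (hf : f ∈ Per N) : Function.Periodic (fun x => |f.1 x|) π := by
  intro x
  have h : f.1 (x + π) = (-1) ^ N * f.1 x := hf x
  dsimp only
  rw [h, abs_mul, abs_neg_one_pow, one_mul]

lemma ip_pos {N : ℕ} {f : Sm ℝ} (hf : f ∈ Per N) (h0 : f ≠ 0) : 0 < ip f f := by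
  have : ∃ x, f.1 x ≠ 0 := by
    by_contra! h
    exact h0 (by ext x; exact h x)
  obtain ⟨x, hx⟩ := this
  obtain ⟨y, hy, hxy⟩ := (Per_abs hf).exists_mem_Ico₀ pi_pos x
  have hy0 : f.1 y ≠ 0 := by
    intro h
    rw [h, abs_zero, abs_eq_zero] at hxy
    exact hx hxy
  exact intervalIntegral.integral_pos pi_pos ((Sm_cont f).mul (Sm_cont f)).continuousOn
    (fun x _ => mul_self_nonneg _) ⟨y, ⟨hy.1, hy.2.le⟩, mul_self_pos.2 hy0⟩

lemma neg_pow_smul {A : Type*} [Ring A] [Algebra ℂ A] (D : A) (n : ℕ) :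
    (-1 : A) ^ n * D = (-1 : ℂ) ^ n • D := by
  rw [Algebra.smul_def, map_pow, map_neg, map_one]

/-- key: a nonzero eigenfunction of definite parity orthogonal to `V` has a partner. -/
lemma partner {a : ℝ} {N : ℕ} {mu ε : ℝ} {h : Sm ℝ} (hh : h ∈ E a N mu) (h0 : h ≠ 0)
    (hV : ∀ u ∈ V a N, ip h u = 0) (hpar : ∀ x, h.1 (-x) = ε * h.1 x) :
    ∃ h2 ∈ E a N mu, h2 ≠ 0 ∧ ∀ x, h2.1 (-x) = -ε * h2.1 x := by
  obtain ⟨hper, heig⟩ := mem_E.1 hh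
  set D := aeval K (pN N (N + 1)) with hD
  set φ := cx (em a h) with hφ
  set χ := D φ with hχ
  have hχ0 : χ ≠ 0 := by
    intro hz
    have h1 := ker_orth hV (N + 1) le_rfl φ hz
    have h2 : ((ip h h : ℝ) : ℂ) = 0 := by
      rw [ip, ← intervalIntegral.integral_ofReal, ← h1]
      congr 1
      funext x
      change _ = _ * (((em a h).1 x : ℝ) : ℂ)
      rw [em_apply, ← Complex.ofReal_mul]
      congr 1
      have : exp (a * cos (2 * x)) * exp (-(a * cos (2 * x))) = 1 := by
        rw [← exp_add]; simp
      linear_combination (- h.1 x * h.1 x) * this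
    have h3 : ip h h = 0 := by exact_mod_cast h2
    exact absurd h3 (ip_pos hper h0).ne'
  have hT : Tc a (-((N : ℂ) + 2)) χ = ((mu + 2 * a ^ 2 : ℝ) : ℂ) • χ := by
    have h1 := LinearMap.congr_fun (Tc_intertwine a N) φ
    change D (Tc a N φ) = Tc a (-((N : ℂ) + 2)) χ at h1
    rw [← h1, hφ, Tc_em heig, map_smul]
  have hTx : ∀ x : ℝ, -(dd ℂ (dd ℂ χ)).1 x + ((4 * a * sin (2 * x) : ℝ) : ℂ) * (dd ℂ χ).1 x
      + ((4 * a * (N + 2) * cos (2 * x) : ℝ) : ℂ) * χ.1 x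
      = ((mu + 2 * a ^ 2 : ℝ) : ℂ) * χ.1 x := by
    intro x
    have h1 := congrArg (fun f : Sm ℂ => f.1 x) hT
    rw [Tc_apply] at h1
    change _ = ((mu + 2 * a ^ 2 : ℝ) : ℂ) * χ.1 x at h1
    rw [← h1]
    push_cast
    ring
  have hχper : ∀ x, χ.1 (x + π) = (((-1) ^ N : ℝ) : ℂ) * χ.1 x := by
    have h1 : D * aff 1 π = aff 1 π * D := by
      have := K_aff 1 π
      rw [Complex.ofReal_one, one_smul] at this
      exact aeval_semiconj (A := Module.End ℂ (Sm ℂ)) this _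
    have h2 : aff 1 π φ = (((-1) ^ N : ℝ) : ℂ) • φ := by
      ext x
      change (((em a h).1 (1 * x + π) : ℝ) : ℂ) = _ * (((em a h).1 x : ℝ) : ℂ)
      rw [em_apply, em_apply, one_mul, cos_two_pi]
      have h3 : h.1 (x + π) = (-1) ^ N * h.1 x := hper x
      rw [h3, ← Complex.ofReal_mul]
      congr 1
      ring
    have h3 := LinearMap.congr_fun h1 φ
    change D (aff 1 π φ) = aff 1 π χ at h3
    rw [h2, map_smul] at h3
    intro x
    have h4 := congrArg (fun f : Sm ℂ => f.1 x) h3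
    change (((-1) ^ N : ℝ) : ℂ) * χ.1 x = χ.1 (1 * x + π) at h4
    rw [h4, one_mul]
  have hχpar : ∀ x, χ.1 (-x) = (((-1) ^ (N + 1) * ε : ℝ) : ℂ) * χ.1 x := by
    have h1 : D * aff (-1) 0 = aff (-1) 0 * ((-1 : ℂ) ^ (N + 1) • D) := by
      have := K_aff (-1) 0
      have e := aeval_semiconj (A := Module.End ℂ (Sm ℂ)) this (pN N (N + 1))
      rw [hD, e]
      congr 1
      have e2 := congrArg (aeval K) (pN_neg N)
      rw [aeval_comp] at e2
      simp only [map_neg, aeval_X, map_mul, map_pow, map_one] at e2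
      have e3 : (((-1 : ℝ) : ℂ)) • K = -K := by
        ext f x
        change ((-1 : ℝ) : ℂ) * (K f).1 x = -((K f).1 x)
        push_cast
        ring
      rw [e3, e2]
      exact neg_pow_smul (A := Module.End ℂ (Sm ℂ)) _ _
    have h2 : aff (-1) 0 φ = (ε : ℂ) • φ := by
      ext x
      change (((em a h).1 (-1 * x + 0) : ℝ) : ℂ) = _ * (((em a h).1 x : ℝ) : ℂ)
      rw [em_apply, em_apply, show -1 * x + 0 = -x by ring, hpar, mul_neg, cos_neg,
        ← Complex.ofReal_mul]
      congr 1
      ring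
    have h3 := LinearMap.congr_fun h1 φ
    change D (aff (-1) 0 φ) = aff (-1) 0 ((-1 : ℂ) ^ (N + 1) • χ) at h3
    rw [h2, map_smul] at h3
    intro x
    have h4 := congrArg (fun f : Sm ℂ => f.1 x) h3
    change (ε : ℂ) * χ.1 x = (-1 : ℂ) ^ (N + 1) * χ.1 (-1 * x + 0) at h4
    rw [show -1 * x + 0 = -x by ring] at h4
    push_cast
    have hs : ((-1 : ℂ) ^ (N + 1)) * ((-1 : ℂ) ^ (N + 1)) = 1 := by
      rw [← mul_pow]; simp
    linear_combination (-(-1 : ℂ) ^ (N + 1)) * h4 - χ.1 (-x) * hs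
  -- pass to a real function
  obtain ⟨ρ, hρ0, hρe, hρper, hρpar⟩ : ∃ ρ : Sm ℝ, ρ ≠ 0 ∧
      (∀ x, -(dd ℝ (dd ℝ ρ)).1 x + 4 * a * sin (2 * x) * (dd ℝ ρ).1 x
        + 4 * a * (N + 2) * cos (2 * x) * ρ.1 x = (mu + 2 * a ^ 2) * ρ.1 x) ∧
      (∀ x, ρ.1 (x + π) = (-1) ^ N * ρ.1 x) ∧
      (∀ x, ρ.1 (-x) = (-1) ^ (N + 1) * ε * ρ.1 x) := by
    by_cases hre : reS χ = 0
    · refine ⟨imS χ, ?_, ?_, ?_, ?_⟩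
      · intro him
        apply hχ0
        ext x
        apply Complex.ext
        · exact congrArg (fun f : Sm ℝ => f.1 x) hre
        · exact congrArg (fun f : Sm ℝ => f.1 x) him
      · intro x
        have := congrArg Complex.im (hTx x)
        simp only [Complex.add_im, Complex.neg_im, Complex.im_ofReal_mul] at this
        rw [dd_imS, dd_imS]
        exact this
      · intro x
        have := congrArg Complex.im (hχper x)
        rw [Complex.im_ofReal_mul] at this
        exact this
      · intro x
        have := congrArg Complex.im (hχpar x)
        rw [Complex.im_ofReal_mul] at this
        exact this
    · refine ⟨reS χ, hre, ?_, ?_, ?_⟩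
      · intro x
        have := congrArg Complex.re (hTx x)
        simp only [Complex.add_re, Complex.neg_re, Complex.re_ofReal_mul] at this
        rw [dd_reS, dd_reS]
        exact this
      · intro x
        have := congrArg Complex.re (hχper x)
        rw [Complex.re_ofReal_mul] at this
        exact this
      · intro x
        have := congrArg Complex.re (hχpar x)
        rw [Complex.re_ofReal_mul] at this
        exact this
  have hap : ∀ x, (em a (aff 1 (π / 2) ρ)).1 x = exp (-(a * cos (2 * x))) * ρ.1 (x + π / 2) := by
    intro x
    rw [em_apply, aff_apply, one_mul]
  refine ⟨em a (aff 1 (π / 2) ρ), mem_E.2 ⟨?_, back hρe⟩, ?_, ?_⟩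
  · intro x
    rw [hap, hap, cos_two_pi, show x + π + π / 2 = x + π / 2 + π by ring, hρper]
    ring
  · intro hz
    apply hρ0
    ext x
    have h1 := hap (x - π / 2)
    rw [hz, sub_add_cancel] at h1
    change 0 = _ at h1
    exact (mul_eq_zero.1 h1.symm).resolve_left (exp_pos _).ne'
  · intro x
    rw [hap, hap, mul_neg, cos_neg]
    have h1 := hρpar (x - π / 2)
    rw [show -(x - π / 2) = -x + π / 2 by ring] at h1
    have h2 := hρper (x - π / 2)
    rw [show x - π / 2 + π = x + π / 2 by ring] at h2
    rw [h1, h2, pow_succ]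
    ring

end WH

namespace WH
open scoped ContDiff
open Filter Topology

lemma ip_comm (f g : Sm ℝ) : ip f g = ip g f := by
  unfold ip; congr 1; funext x; ring

lemma ip_int (f g : Sm ℝ) :
    IntervalIntegrable (fun x => f.1 x * g.1 x) MeasureTheory.volume 0 π :=
  (show Continuous fun x => f.1 x * g.1 x from (Sm_cont f).mul (Sm_cont g)).intervalIntegrable _ _

lemma ip_add_left (f g h : Sm ℝ) : ip (f + g) h = ip f h + ip g h := by
  unfold ip
  rw [← intervalIntegral.integral_add (ip_int f h) (ip_int g h)]
  congr 1; funext x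
  exact add_mul _ _ _

lemma ip_smul_left (c : ℝ) (f h : Sm ℝ) : ip (c • f) h = c * ip f h := by
  unfold ip
  rw [← intervalIntegral.integral_const_mul]
  congr 1; funext x
  exact mul_assoc _ _ _

/-- `ip · h` as a linear map. -/
def ipL (h : Sm ℝ) : Sm ℝ →ₗ[ℝ] ℝ where
  toFun f := ip f h
  map_add' f g := ip_add_left f g h
  map_smul' c f := ip_smul_left c f h

lemma ipL_apply (f h : Sm ℝ) : ipL h f = ip f h := rfl

lemma dd_Per {N : ℕ} {f : Sm ℝ} (hf : f ∈ Per N) : dd ℝ f ∈ Per N := by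
  change ∀ x, _
  intro x
  have h1 : HasDerivAt (fun y => f.1 (y + π)) ((dd ℝ f).1 (x + π)) x :=
    (dd_hasDeriv f (x + π)).comp_add_const x π
  have h2 : HasDerivAt (fun y => (-1 : ℝ) ^ N * f.1 y) ((-1) ^ N * (dd ℝ f).1 x) x :=
    (dd_hasDeriv f x).const_mul _
  have h3 : (fun y => f.1 (y + π)) = fun y => (-1 : ℝ) ^ N * f.1 y := by
    funext y; exact hf y
  rw [h3] at h1
  exact h1.unique h2

lemma Lop_symm {a : ℝ} {N : ℕ} {f g : Sm ℝ} (hf : f ∈ Per N) (hg : g ∈ Per N) :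
    ip (Lop a N f) g = ip f (Lop a N g) := by
  rw [← sub_eq_zero]
  unfold ip
  rw [← intervalIntegral.integral_sub (ip_int _ _) (ip_int _ _)]
  have hd : ∀ x : ℝ, HasDerivAt (fun x => f.1 x * (dd ℝ g).1 x - (dd ℝ f).1 x * g.1 x)
      ((Lop a N f).1 x * g.1 x - f.1 x * (Lop a N g).1 x) x := by
    intro x
    refine HasDerivAt.congr_deriv (((dd_hasDeriv f x).mul (dd_hasDeriv (dd ℝ g) x)).sub
      ((dd_hasDeriv (dd ℝ f) x).mul (dd_hasDeriv g x))) ?_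
    rw [Lop_apply, Lop_apply]; ring
  have hc : Continuous fun x => (Lop a N f).1 x * g.1 x - f.1 x * (Lop a N g).1 x := by
    have := Sm_cont f
    have := Sm_cont g
    have := Sm_cont (Lop a N f)
    have := Sm_cont (Lop a N g)
    fun_prop
  rw [intervalIntegral.integral_eq_sub_of_hasDerivAt (fun x _ => hd x) (hc.intervalIntegrable _ _)]
  have e1 : f.1 π = (-1) ^ N * f.1 0 := by have := hf 0; rwa [zero_add] at this
  have e2 : g.1 π = (-1) ^ N * g.1 0 := by have := hg 0; rwa [zero_add] at this
  have e3 : (dd ℝ f).1 π = (-1) ^ N * (dd ℝ f).1 0 := by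
    have := dd_Per hf 0; rwa [zero_add] at this
  have e4 : (dd ℝ g).1 π = (-1) ^ N * (dd ℝ g).1 0 := by
    have := dd_Per hg 0; rwa [zero_add] at this
  rw [e1, e2, e3, e4]
  have hs : ((-1 : ℝ) ^ N) * ((-1 : ℝ) ^ N) = 1 := by
    rw [← mul_pow]; simp
  linear_combination (f.1 0 * (dd ℝ g).1 0 - (dd ℝ f).1 0 * g.1 0) * hs

lemma mon_deriv (j m : ℕ) (x : ℝ) :
    HasDerivAt (fun x => cos x ^ j * sin x ^ m)
      (-(j * (cos x ^ (j - 1) * sin x ^ (m + 1))) + m * (cos x ^ (j + 1) * sin x ^ (m - 1))) x := by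
  refine HasDerivAt.congr_deriv (((hasDerivAt_cos x).pow j).mul ((hasDerivAt_sin x).pow m)) ?_
  simp only [Pi.pow_apply]
  ring

lemma dd_bas (a : ℝ) (j m : ℕ) (x : ℝ) :
    (dd ℝ (bas a (j + m) j)).1 x = exp (a * cos (2 * x)) * (-2 * a * sin (2 * x) *
      (cos x ^ j * sin x ^ m)
      + (-(j * (cos x ^ (j - 1) * sin x ^ (m + 1))) + m * (cos x ^ (j + 1) * sin x ^ (m - 1)))) := by
  apply dd_eq
  have h1 : HasDerivAt (fun x => exp (a * cos (2 * x)))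
      (exp (a * cos (2 * x)) * (-2 * a * sin (2 * x))) x := by
    have h0 : HasDerivAt (fun x : ℝ => 2 * x) 2 x := by
      simpa using (hasDerivAt_id x).const_mul (2 : ℝ)
    refine HasDerivAt.congr_deriv ((h0.cos.const_mul a).exp) ?_
    ring
  have h2 := h1.mul (mon_deriv j m x)
  have h3 : (bas a (j + m) j).1 = (fun x => exp (a * cos (2 * x))) *
      (fun x => cos x ^ j * sin x ^ m) := by
    funext x
    rw [bas_apply, Nat.add_sub_cancel_left]; rfl
  rw [h3]
  refine h2.congr_deriv ?_
  ring

lemma dd_dd_bas (a : ℝ) (j m : ℕ) (x : ℝ) :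
    (dd ℝ (dd ℝ (bas a (j + m) j))).1 x = exp (a * cos (2 * x)) * (
      (4 * a ^ 2 * sin (2 * x) ^ 2 - 4 * a * cos (2 * x)) * (cos x ^ j * sin x ^ m)
      - 4 * a * sin (2 * x) * (-(j * (cos x ^ (j - 1) * sin x ^ (m + 1))) +
          m * (cos x ^ (j + 1) * sin x ^ (m - 1)))
      + (-(j * (-((j - 1 : ℕ) * (cos x ^ (j - 1 - 1) * sin x ^ (m + 1 + 1))) +
            (m + 1 : ℕ) * (cos x ^ (j - 1 + 1) * sin x ^ (m + 1 - 1))))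
         + m * (-((j + 1 : ℕ) * (cos x ^ (j + 1 - 1) * sin x ^ (m - 1 + 1))) +
            (m - 1 : ℕ) * (cos x ^ (j + 1 + 1) * sin x ^ (m - 1 - 1))))) := by
  apply dd_eq
  have h0 : HasDerivAt (fun x : ℝ => 2 * x) 2 x := by
    simpa using (hasDerivAt_id x).const_mul (2 : ℝ)
  have h1 : HasDerivAt (fun x => exp (a * cos (2 * x)))
      (exp (a * cos (2 * x)) * (-2 * a * sin (2 * x))) x := by
    refine HasDerivAt.congr_deriv ((h0.cos.const_mul a).exp) ?_
    ring
  have h2 := h1.mul ((((h0.sin).const_mul (-2 * a)).mul (mon_deriv j m x)).add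
    ((((mon_deriv (j - 1) (m + 1) x).const_mul (j : ℝ)).neg).add
      ((mon_deriv (j + 1) (m - 1) x).const_mul (m : ℝ))))
  refine HasDerivAt.congr_deriv (h2.congr_of_eventuallyEq (Filter.Eventually.of_forall
    (fun x => ?_))) ?_
  · rw [dd_bas]
    simp only [Pi.mul_apply, Pi.add_apply, Pi.neg_apply]
  · simp only [Pi.mul_apply, Pi.add_apply, Pi.neg_apply]
    ring

lemma Lop_bas (a : ℝ) (j m : ℕ) :
    Lop a (j + m) (bas a (j + m) j) =
      (-((j : ℝ) * (j - 1))) • bas a (j + m) (j - 2) + (-((m : ℝ) * (m - 1))) • bas a (j + m) (j + 2)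
      + ((j : ℝ) * (m + 1) + m * (j + 1) + 4 * a * (m - j) - 2 * a ^ 2) • bas a (j + m) j := by
  ext x
  change (Lop a (j + m) (bas a (j + m) j)).1 x =
    -((j : ℝ) * (j - 1)) * (bas a (j + m) (j - 2)).1 x
    + -((m : ℝ) * (m - 1)) * (bas a (j + m) (j + 2)).1 x
    + ((j : ℝ) * (m + 1) + m * (j + 1) + 4 * a * (m - j) - 2 * a ^ 2) * (bas a (j + m) j).1 x
  rw [Lop_apply, dd_dd_bas, bas_apply, bas_apply, bas_apply]
  unfold pot
  rw [show 4 * x = 2 * (2 * x) by ring, cos_two_mul (2 * x), ← mul_assoc]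
  have hs2 : sin (2 * x) ^ 2 = 1 - cos (2 * x) ^ 2 := sin_sq _
  rw [hs2, sin_two_mul, cos_two_mul]
  set e := exp (a * (2 * cos x ^ 2 - 1))
  have key : sin x ^ 2 = 1 - cos x ^ 2 := sin_sq x
  set c := cos x
  set s := sin x
  have A1 : (j : ℝ) * c ^ (j - 1 + 1) = j * c ^ j := by
    rcases j with _ | j <;> simp
  have A2 : (m : ℝ) * s ^ (m - 1 + 1) = m * s ^ m := by
    rcases m with _ | m <;> simp
  have A3 : (j : ℝ) * (j - 1 : ℕ) = j * (j - 1) := by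
    rcases j with _ | j <;> simp
  have A4 : (m : ℝ) * (m - 1 : ℕ) = m * (m - 1) := by
    rcases m with _ | m <;> simp
  have A5 : (j : ℝ) * (j - 1) * s ^ (j + m - (j - 2)) = j * (j - 1) * s ^ (m + 2) := by
    rcases j with _ | _ | j
    · simp
    · simp
    · congr 2; omega
  rw [show j + m - (j + 2) = m - 2 by omega, show j + m - j = m by omega]
  rw [show j - 1 - 1 = j - 2 by omega, show m - 1 - 1 = m - 2 by omega, Nat.add_sub_cancel,
    Nat.add_sub_cancel]
  push_cast
  have A1' : (j : ℝ) * (c ^ (j - 1) * c) = j * c ^ j := by rw [← pow_succ, A1]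
  have A2' : (m : ℝ) * (s ^ (m - 1) * s) = m * s ^ m := by rw [← pow_succ, A2]
  linear_combination (-8 * a * e * s ^ (m + 2) + e * (m + 1) * s ^ m) * A1' +
    (8 * a * e * c ^ (j + 2) + e * (j + 1) * c ^ j) * A2' - e * c ^ (j - 2) * s ^ (m + 2) * A3
    - e * c ^ (j + 2) * s ^ (m - 2) * A4 + e * c ^ (j - 2) * A5 - 8 * a * j * e * c ^ j * s ^ m * key

lemma Lop_V {a : ℝ} {N : ℕ} {u : Sm ℝ} (hu : u ∈ V a N) : Lop a N u ∈ V a N := by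
  have : V a N ≤ (V a N).comap (Lop a N) := by
    conv_lhs => rw [V]
    rw [Submodule.span_le]
    rintro _ ⟨⟨j, hj⟩, rfl⟩
    obtain ⟨m, rfl⟩ := Nat.exists_eq_add_of_le (Nat.lt_succ_iff.1 hj)
    change Lop a (j + m) (bas a (j + m) j) ∈ V a (j + m)
    rw [Lop_bas]
    refine Submodule.add_mem _ (Submodule.add_mem _ ?_ ?_) ?_
    · exact Submodule.smul_mem _ _ (bas_mem _ _ _ (by omega))
    · rcases m with _ | _ | m
      · simp
      · simp
      · exact Submodule.smul_mem _ _ (bas_mem _ _ _ (by omega))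
    · exact Submodule.smul_mem _ _ (bas_mem _ _ _ (by omega))
  exact this hu

lemma bas_indep (a : ℝ) (N : ℕ) : LinearIndependent ℝ (fun j : Fin (N + 1) => bas a N j) := by
  rw [Fintype.linearIndependent_iff]
  intro g hg
  set P : Polynomial ℝ := ∑ j : Fin (N + 1), Polynomial.monomial (j : ℕ) (g j) with hP
  have h1 : P = 0 := by
    apply Polynomial.funext
    intro t
    have h2 := congrArg (fun f : Sm ℝ => f.1 (π / 2 - arctan t)) hg
    have h3 : (∑ j : Fin (N + 1), g j • bas a N j).1 (π / 2 - arctan t) =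
        ∑ j : Fin (N + 1), g j * (bas a N j).1 (π / 2 - arctan t) := by
      rw [AddSubmonoidClass.coe_finset_sum, Finset.sum_apply]; rfl
    change (∑ j : Fin (N + 1), g j • bas a N j).1 (π / 2 - arctan t) = 0 at h2
    rw [h3] at h2
    set d := exp (a * cos (2 * (π / 2 - arctan t))) with hd
    have hc : cos (arctan t) ≠ 0 := (cos_arctan_pos t).ne'
    have hs : sin (arctan t) = t * cos (arctan t) := by
      have := tan_arctan t
      rw [tan_eq_sin_div_cos] at this
      field_simp at this
      linarith
    have h4 : ∀ j : Fin (N + 1), g j * (bas a N j).1 (π / 2 - arctan t) =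
        (d * cos (arctan t) ^ N) * (g j * t ^ (j : ℕ)) := by
      intro j
      rw [bas_apply, cos_pi_div_two_sub, sin_pi_div_two_sub, hs, mul_pow]
      have : cos (arctan t) ^ N = cos (arctan t) ^ (j : ℕ) * cos (arctan t) ^ (N - (j : ℕ)) := by
        rw [← pow_add]; congr 1; omega
      rw [this]; ring
    rw [Finset.sum_congr rfl (fun j _ => h4 j), ← Finset.mul_sum] at h2
    have h5 := (mul_eq_zero.1 h2).resolve_left (mul_ne_zero (exp_pos _).ne' (pow_ne_zero _ hc))
    rw [hP, Polynomial.eval_finset_sum]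
    simpa using h5
  intro i
  have h2 : P.coeff i = 0 := by rw [h1]; simp
  rw [hP, Polynomial.finset_sum_coeff] at h2
  simp only [Polynomial.coeff_monomial] at h2
  rw [Finset.sum_eq_single i] at h2
  · simpa using h2
  · intro b _ hb
    rw [if_neg (fun h => hb (Fin.ext h))]
  · simp

lemma finrank_V (a : ℝ) (N : ℕ) : Module.finrank ℝ (V a N) = N + 1 := by
  rw [V, finrank_span_eq_card (bas_indep a N), Fintype.card_fin]

instance fin_V (a : ℝ) (N : ℕ) : FiniteDimensional ℝ (V a N) := by
  rw [V]; exact FiniteDimensional.span_of_finite ℝ (Set.finite_range _)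

/-- abstract spectral theorem for a symmetric form -/
lemma spectral {W : Type} [AddCommGroup W] [Module ℝ W] [FiniteDimensional ℝ W] {n : ℕ}
    (hn : Module.finrank ℝ W = n) (B : W → W → ℝ) (hB : ∀ x y, B x y = B y x)
    (hadd : ∀ x y z, B (x + y) z = B x z + B y z) (hsm : ∀ (c : ℝ) x y, B (c • x) y = c * B x y)
    (hpos : ∀ x, x ≠ 0 → 0 < B x x) (T : W →ₗ[ℝ] W) (hT : ∀ x y, B (T x) y = B x (T y)) :
    ∃ (lam : Fin n → ℝ) (b : Fin n → W), (∀ i j, B (b i) (b j) = if i = j then 1 else 0) ∧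
      (∀ i, T (b i) = lam i • b i) ∧ (∀ w, w ∈ Submodule.span ℝ (Set.range b)) := by
  let core : InnerProductSpace.Core ℝ W :=
    { inner := B
      conj_inner_symm := fun x y => by simp [hB x y]
      re_inner_nonneg := fun x => by
        by_cases hx : x = 0
        · have : B x x = 0 := by
            have := hsm 0 x x
            simp only [zero_smul, zero_mul] at this
            rw [hx] at this ⊢; exact this
          simp [this]
        · exact (hpos x hx).le
      add_left := hadd
      smul_left := fun x y c => by simp [hsm]
      definite := fun x hx => by
        by_contra h
        exact (hpos x h).ne' hx }
  letI : NormedAddCommGroup W := core.toNormedAddCommGroup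
  letI : InnerProductSpace ℝ W := InnerProductSpace.ofCore core.toCore
  have hsymm : T.IsSymmetric := fun x y => hT x y
  refine ⟨hsymm.eigenvalues hn, hsymm.eigenvectorBasis hn, ?_, ?_, ?_⟩
  · intro i j
    exact (orthonormal_iff_ite.1 (hsymm.eigenvectorBasis hn).orthonormal) i j
  · intro i
    exact hsymm.apply_eigenvectorBasis hn i
  · intro w
    have := (hsymm.eigenvectorBasis hn).toBasis.span_eq
    rw [OrthonormalBasis.coe_toBasis] at this
    rw [this]; trivial

lemma spectral_V (a : ℝ) (N : ℕ) :
    ∃ (lam : Fin (N + 1) → ℝ) (b : Fin (N + 1) → Sm ℝ),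
      (∀ i j, ip (b i) (b j) = if i = j then 1 else 0) ∧
      (∀ i, Lop a N (b i) = lam i • b i) ∧ (∀ i, b i ∈ V a N) ∧
      (V a N ≤ Submodule.span ℝ (Set.range b)) := by
  obtain ⟨lam, b, h1, h2, h3⟩ := spectral (W := V a N) (finrank_V a N)
    (fun x y => ip x.1 y.1) (fun x y => ip_comm _ _) (fun x y z => ip_add_left _ _ _)
    (fun c x y => ip_smul_left _ _ _)
    (fun x hx => ip_pos (V_le_Per a N x.2) (fun h => hx (Subtype.ext h)))
    ((Lop a N).restrict (fun u hu => Lop_V hu))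
    (fun x y => Lop_symm (V_le_Per a N x.2) (V_le_Per a N y.2))
  refine ⟨lam, fun i => (b i).1, h1, fun i => congrArg Subtype.val (h2 i), fun i => (b i).2, ?_⟩
  intro u hu
  have h4 := Submodule.mem_map_of_mem (f := (V a N).subtype) (h3 ⟨u, hu⟩)
  rw [Submodule.map_span, ← Set.range_comp] at h4
  exact h4

end WH

namespace WH
open scoped ContDiff
open Filter Topology

/-- initial data -/
def iniMap (a : ℝ) (N : ℕ) (mu : ℝ) : E a N mu →ₗ[ℝ] ℝ × ℝ where
  toFun f := (f.1.1 0, (dd ℝ f.1).1 0)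
  map_add' f g := by
    refine Prod.ext rfl ?_
    change (dd ℝ (f.1 + g.1)).1 0 = _
    rw [map_add]; rfl
  map_smul' c f := by
    refine Prod.ext rfl ?_
    change (dd ℝ (c • f.1)).1 0 = _
    rw [map_smul]; rfl

lemma iniMap_inj (a : ℝ) (N : ℕ) (mu : ℝ) : Function.Injective (iniMap a N mu) := by
  refine (injective_iff_map_eq_zero _).2 (fun f hf => ?_)
  have h1 : f.1.1 0 = 0 := congrArg Prod.fst hf
  have h2 : (dd ℝ f.1).1 0 = 0 := congrArg Prod.snd hf
  exact Subtype.ext (ode_unique (mem_E.1 f.2).2 h1 h2)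

instance fin_E (a : ℝ) (N : ℕ) (mu : ℝ) : FiniteDimensional ℝ (E a N mu) :=
  FiniteDimensional.of_injective _ (iniMap_inj a N mu)

lemma finrank_E_le (a : ℝ) (N : ℕ) (mu : ℝ) : Module.finrank ℝ (E a N mu) ≤ 2 := by
  have := LinearMap.finrank_le_finrank_of_injective (iniMap_inj a N mu)
  simpa using this

lemma refl_E {a : ℝ} {N : ℕ} {mu : ℝ} {f : Sm ℝ} (hf : f ∈ E a N mu) :
    (aff (-1) 0 f : Sm ℝ) ∈ E a N mu := by
  obtain ⟨h1, h2⟩ := mem_E.1 hf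
  refine mem_E.2 ⟨?_, ?_⟩
  · change ∀ x, _
    intro x
    have h3 : f.1 (-x - π + π) = (-1) ^ N * f.1 (-x - π) := h1 (-x - π)
    rw [aff_apply, aff_apply]
    rw [sub_add_cancel] at h3
    rw [show -1 * (x + π) + 0 = -x - π by ring, show -1 * x + 0 = -x by ring, h3, ← mul_assoc,
      ← mul_pow]
    simp
  · apply eig_of
    intro x
    rw [dd_aff, map_smul, dd_aff]
    have h3 := eig_apply h2 (-x)
    have h4 : pot a N (-x) = pot a N x := by
      unfold pot; simp
    rw [h4] at h3
    change ((-1 : ℝ) : ℝ) * (((-1 : ℝ) : ℝ) * (dd ℝ (dd ℝ f)).1 (-1 * x + 0)) = _ * f.1 (-1 * x + 0)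
    rw [show -1 * x + 0 = -x by ring, h3]
    ring

lemma two_le {M : Type*} [AddCommGroup M] [Module ℝ M] (p : Submodule ℝ M) [FiniteDimensional ℝ p]
    {x y : M} (hx : x ∈ p) (hy : y ∈ p) (h : ∀ s t : ℝ, s • x + t • y = 0 → s = 0 ∧ t = 0) :
    2 ≤ Module.finrank ℝ p := by
  have hind : LinearIndependent ℝ ![(⟨x, hx⟩ : p), ⟨y, hy⟩] :=
    LinearIndependent.pair_iff.2 (fun s t hst => h s t (congrArg Subtype.val hst))
  simpa using hind.fintype_card_le_finrank

lemma fin_set {p : ℕ → Prop} (h : Finite {k // p k}) : {k | p k}.Finite := by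
  have : Function.Injective (fun k : {k | p k} => (⟨k.1, k.2⟩ : {k // p k})) := by
    intro a b hab
    exact Subtype.ext (congrArg Subtype.val hab)
  exact Set.finite_coe_iff.1 (Finite.of_injective _ this)

lemma finrank_tail {a : ℝ} {N : ℕ} {mu : ℝ} (hE : E a N mu ≠ ⊥)
    (hV : ∀ f ∈ E a N mu, ∀ u ∈ V a N, ip f u = 0) : Module.finrank ℝ (E a N mu) = 2 := by
  apply le_antisymm (finrank_E_le a N mu)
  obtain ⟨f, hf, hf0⟩ := Submodule.exists_mem_ne_zero_of_ne_bot hE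
  obtain ⟨ε, h, hε, hh, h0, hpar⟩ : ∃ (ε : ℝ) (h : Sm ℝ), ε ≠ 0 ∧ h ∈ E a N mu ∧ h ≠ 0 ∧
      ∀ x, h.1 (-x) = ε * h.1 x := by
    have hr := refl_E hf
    have hra : ∀ x, (aff (-1) 0 f : Sm ℝ).1 x = f.1 (-x) := by
      intro x; rw [aff_apply, show -1 * x + 0 = -x by ring]
    by_cases h1 : f + aff (-1) 0 f = 0
    · refine ⟨-1, f, by norm_num, hf, hf0, fun x => ?_⟩
      have h2 := congrArg (fun g : Sm ℝ => g.1 x) h1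
      change f.1 x + (aff (-1) 0 f : Sm ℝ).1 x = 0 at h2
      rw [hra] at h2
      linarith
    · refine ⟨1, f + aff (-1) 0 f, by norm_num, Submodule.add_mem _ hf hr, h1, fun x => ?_⟩
      change f.1 (-x) + (aff (-1) 0 f : Sm ℝ).1 (-x) = 1 * (f.1 x + (aff (-1) 0 f : Sm ℝ).1 x)
      rw [hra, hra, neg_neg]; ring
  obtain ⟨h2, hh2, h20, hpar2⟩ := partner hh h0 (hV h hh) hpar
  have hind : ∀ s t : ℝ, s • h + t • h2 = 0 → s = 0 ∧ t = 0 := by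
    intro s t hst
    have e1 : ∀ x, s * h.1 x + t * h2.1 x = 0 := fun x =>
      congrArg (fun g : Sm ℝ => g.1 x) hst
    have e2 : ∀ x, s * h.1 x = 0 := by
      intro x
      have q1 := e1 x
      have q2 := e1 (-x)
      rw [hpar, hpar2] at q2
      have : ε * (s * h.1 x) = 0 := by linear_combination (ε * q1 + q2) / 2
      exact (mul_eq_zero.1 this).resolve_left hε
    have e3 : ∀ x, t * h2.1 x = 0 := by
      intro x; have := e1 x; rw [e2 x, zero_add] at this; exact this
    constructor
    · by_contra hs
      exact h0 (by ext x; exact (mul_eq_zero.1 (e2 x)).resolve_left hs)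
    · by_contra hs
      exact h20 (by ext x; exact (mul_eq_zero.1 (e3 x)).resolve_left hs)
  exact two_le (E a N mu) hh hh2 hind

/-- Structure of the spectrum. -/
theorem structure_thm (a : ℝ) (N : ℕ) : ∃ lam : Fin (N + 1) → ℝ,
    (∀ mu, mu ∈ Set.range lam →
      Module.finrank ℝ (E a N mu) = (Finset.univ.filter (fun i => lam i = mu)).card) ∧
    (∀ mu, mu ∉ Set.range lam → E a N mu ≠ ⊥ →
      Module.finrank ℝ (E a N mu) = 2 ∧ ∀ i, lam i < mu) := by
  obtain ⟨lam, b, hb, hL, hbV, hsp⟩ := spectral_V a N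
  have hb0 : ∀ i, b i ≠ 0 := by
    intro i h
    have h1 := hb i i
    rw [if_pos rfl, h] at h1
    have h2 : ip 0 0 = 0 := (ipL 0).map_zero
    rw [h2] at h1; exact zero_ne_one h1
  have hbP : ∀ i, b i ∈ Per N := fun i => V_le_Per a N (hbV i)
  have horth : ∀ g : Sm ℝ, (∀ i, ip g (b i) = 0) → ∀ u ∈ V a N, ip g u = 0 := by
    intro g hg u hu
    have h1 : Submodule.span ℝ (Set.range b) ≤ LinearMap.ker (ipL g) := by
      rw [Submodule.span_le]
      rintro _ ⟨i, rfl⟩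
      change ip (b i) g = 0
      rw [ip_comm]; exact hg i
    have h2 : ip u g = 0 := h1 (hsp hu)
    rw [ip_comm]; exact h2
  have hzero : ∀ mu, ∀ f ∈ E a N mu, ∀ i, lam i ≠ mu → ip f (b i) = 0 := by
    intro mu f hf i hi
    obtain ⟨h1, h2⟩ := mem_E.1 hf
    have h3 := Lop_symm (a := a) h1 (hbP i)
    rw [h2, hL, ip_smul_left, ip_comm f (lam i • b i), ip_smul_left, ip_comm (b i)] at h3
    have : (lam i - mu) * ip f (b i) = 0 := by linarith
    exact (mul_eq_zero.1 this).resolve_left (sub_ne_zero.2 hi)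
  refine ⟨lam, ?_, ?_⟩
  · rintro mu ⟨i₀, hi₀⟩
    set s := Finset.univ.filter (fun i => lam i = mu) with hs
    have hbi : LinearIndependent ℝ b := by
      rw [Fintype.linearIndependent_iff]
      intro g hg i
      have h1 := congrArg (ipL (b i)) hg
      rw [map_sum, map_zero] at h1
      simp only [map_smul, ipL_apply, hb, smul_eq_mul, mul_ite, mul_one, mul_zero,
        Finset.sum_ite_eq', Finset.mem_univ, if_true] at h1
      exact h1
    have hE : E a N mu = Submodule.span ℝ (Set.range (fun i : s => b i)) := by
      apply le_antisymm
      · intro f hf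
        set p := ∑ i : s, ip f (b i) • b (i : Fin (N + 1)) with hp
        have hps : p ∈ Submodule.span ℝ (Set.range (fun i : s => b i)) :=
          Submodule.sum_mem _ (fun i _ => Submodule.smul_mem _ _ (Submodule.subset_span ⟨i, rfl⟩))
        have hpE : p ∈ E a N mu := by
          refine Submodule.sum_mem _ (fun i _ => Submodule.smul_mem _ _ ?_)
          refine mem_E.2 ⟨hbP _, ?_⟩
          rw [hL, (Finset.mem_filter.1 i.2).2]
        have hgE : f - p ∈ E a N mu := Submodule.sub_mem _ hf hpE
        have hg : ∀ j, ip (f - p) (b j) = 0 := by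
          intro j
          by_cases hj : lam j = mu
          · rw [← ipL_apply, map_sub, hp, map_sum]
            simp only [map_smul, ipL_apply, hb, smul_eq_mul, mul_ite, mul_one, mul_zero]
            have hjs : j ∈ s := by rw [hs]; simp [hj]
            rw [Finset.sum_eq_single ⟨j, hjs⟩]
            · simp
            · intro c _ hc
              rw [if_neg]
              intro h
              exact hc (Subtype.ext h)
            · simp
          · exact hzero mu _ hgE j hj
        have hz : f - p = 0 := by
          by_contra h
          have := order hgE h (horth _ hg) (hbV i₀) (hb0 i₀) (hL i₀)
          rw [hi₀] at this
          exact lt_irrefl _ this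
        rw [sub_eq_zero.1 hz]; exact hps
      · rw [Submodule.span_le]
        rintro _ ⟨i, rfl⟩
        refine mem_E.2 ⟨hbP _, ?_⟩
        dsimp only
        rw [hL, (Finset.mem_filter.1 i.2).2]
    rw [hE]
    refine (finrank_span_eq_card
      (hbi.comp (fun i : s => (i : Fin (N + 1))) Subtype.val_injective)).trans ?_
    simp
  · intro mu hmu hE
    have hV : ∀ f ∈ E a N mu, ∀ u ∈ V a N, ip f u = 0 := by
      intro f hf
      exact horth f (fun i => hzero mu f hf i (fun h => hmu ⟨i, h⟩))
    refine ⟨finrank_tail hE hV, fun i => ?_⟩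
    obtain ⟨f, hf, hf0⟩ := Submodule.exists_mem_ne_zero_of_ne_bot hE
    exact order hf hf0 (hV f hf) (hbV i) (hb0 i) (hL i)

lemma lower_range (S : Finset ℕ) (h : ∀ n ∈ S, ∀ m ≤ n, m ∈ S) : S = Finset.range S.card := by
  have h1 : S ⊆ Finset.range S.card := by
    intro n hn
    have : Finset.range (n + 1) ⊆ S := by
      intro m hm
      exact h n hn m (by simpa [Nat.lt_succ_iff] using hm)
    have := Finset.card_le_card this
    rw [Finset.card_range] at this
    exact Finset.mem_range.2 (by omega)
  exact Finset.eq_of_subset_of_card_le h1 (by simp)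

/-- counting -/
theorem counting {n : ℕ} (lam : Fin (n + 1) → ℝ) (s : ℕ → ℝ) (hs : Monotone s)
    (h1 : ∀ mu, mu ∈ Set.range lam →
      Nat.card {k : ℕ // s k = mu} = (Finset.univ.filter (fun i => lam i = mu)).card)
    (h2 : ∀ k, s k ∉ Set.range lam → Nat.card {j : ℕ // s j = s k} = 2 ∧ ∀ i, lam i < s k) :
    ∀ k, s (n + 1 + 2 * k) = s (n + 2 + 2 * k) := by
  classical
  have hfin : ∀ mu, mu ∈ Set.range lam → {k : ℕ | s k = mu}.Finite := by
    rintro mu ⟨i, hi⟩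
    have h3 := h1 mu ⟨i, hi⟩
    have h4 : 0 < (Finset.univ.filter (fun i => lam i = mu)).card :=
      Finset.card_pos.2 ⟨i, by simp [hi]⟩
    rw [← h3] at h4
    exact fin_set (Nat.finite_of_card_ne_zero h4.ne')
  set Λ : Finset ℝ := Finset.univ.image lam with hΛ
  have hΛm : ∀ mu, mu ∈ Λ ↔ mu ∈ Set.range lam := by intro mu; simp [hΛ]
  have hSfin : {k : ℕ | s k ∈ Set.range lam}.Finite := by
    have : {k : ℕ | s k ∈ Set.range lam} = ⋃ mu ∈ Λ, {k : ℕ | s k = mu} := by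
      ext k; simp [hΛ, eq_comm]
    rw [this]
    exact Λ.finite_toSet.biUnion (fun mu hmu => hfin mu ((hΛm mu).1 hmu))
  set S := hSfin.toFinset with hS
  have hSm : ∀ k, k ∈ S ↔ s k ∈ Set.range lam := by intro k; rw [hS, Set.Finite.mem_toFinset]; rfl
  have hcard : S.card = n + 1 := by
    have e1 : S.card = ∑ mu ∈ Λ, (S.filter (fun k => s k = mu)).card :=
      Finset.card_eq_sum_card_fiberwise (fun k hk => (hΛm _).2 ((hSm k).1 hk))
    have e2 : (Finset.univ : Finset (Fin (n + 1))).card =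
        ∑ mu ∈ Λ, (Finset.univ.filter (fun i => lam i = mu)).card :=
      Finset.card_eq_sum_card_fiberwise (fun k hk => by simp [hΛ])
    rw [Finset.card_univ, Fintype.card_fin] at e2
    rw [e1, e2]
    refine Finset.sum_congr rfl (fun mu hmu => ?_)
    have hmu' := (hΛm mu).1 hmu
    rw [← h1 mu hmu']
    have e3 := Nat.subtype_card (p := fun k => s k = mu) (S.filter (fun k => s k = mu)) (by
      intro k
      rw [Finset.mem_filter, hSm]
      constructor
      · exact fun h => h.2
      · intro h; exact ⟨by rw [h]; exact hmu', h⟩)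
    exact e3.symm
  have hlow : ∀ k ∈ S, ∀ m ≤ k, m ∈ S := by
    intro k hk m hmk
    by_contra hm
    rw [hSm] at hk hm
    obtain ⟨i, hi⟩ := hk
    have h3 := (h2 m hm).2 i
    have h4 := hs hmk
    linarith
  have hSr := lower_range S hlow
  rw [hcard] at hSr
  have htail : ∀ k, n + 1 ≤ k → s k ∉ Set.range lam := by
    intro k hk h
    have := (hSm k).2 h
    rw [hSr, Finset.mem_range] at this
    omega
  have hfib : ∀ k, n + 1 ≤ k → ∃ F : Finset ℕ, F.card = 2 ∧ ∀ j, j ∈ F ↔ s j = s k := by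
    intro k hk
    have h3 := (h2 k (htail k hk)).1
    have hf : {j : ℕ | s j = s k}.Finite := fin_set (Nat.finite_of_card_ne_zero (by omega))
    refine ⟨hf.toFinset, ?_, fun j => by simp⟩
    rw [← h3]
    exact (Nat.subtype_card (p := fun j => s j = s k) hf.toFinset (by intro j; simp)).symm
  have step : ∀ k, s (n + 2 * k) < s (n + 1 + 2 * k) →
      s (n + 1 + 2 * k) = s (n + 2 + 2 * k) ∧ s (n + 2 + 2 * k) < s (n + 3 + 2 * k) := by
    intro k hk
    obtain ⟨F, hF, hFm⟩ := hfib (n + 1 + 2 * k) (by omega)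
    have e1 : s (n + 1 + 2 * k) = s (n + 2 + 2 * k) := by
      by_contra h
      have hlt : s (n + 1 + 2 * k) < s (n + 2 + 2 * k) := lt_of_le_of_ne (hs (by omega)) h
      have : F ⊆ {n + 1 + 2 * k} := by
        intro j hj
        rw [hFm] at hj
        rw [Finset.mem_singleton]
        by_contra hne
        rcases Nat.lt_or_gt_of_ne hne with h' | h'
        · have := hs (show j ≤ n + 2 * k by omega)
          linarith
        · have := hs (show n + 2 + 2 * k ≤ j by omega)
          linarith
      have := Finset.card_le_card this
      rw [hF, Finset.card_singleton] at this
      omega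
    refine ⟨e1, lt_of_le_of_ne (hs (by omega)) (fun h => ?_)⟩
    have : ({n + 1 + 2 * k, n + 2 + 2 * k, n + 3 + 2 * k} : Finset ℕ) ⊆ F := by
      intro j hj
      rw [hFm]
      simp only [Finset.mem_insert, Finset.mem_singleton] at hj
      rcases hj with rfl | rfl | rfl
      · rfl
      · exact e1.symm
      · rw [← h, e1]
    have := Finset.card_le_card this
    rw [hF, Finset.card_eq_three.2 ⟨_, _, _, by omega, by omega, by omega, rfl⟩] at this
    omega
  have hlt : ∀ k, s (n + 2 * k) < s (n + 1 + 2 * k) := by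
    intro k
    induction k with
    | zero =>
      have h3 : n ∈ S := by rw [hSr]; simp
      obtain ⟨i, hi⟩ := (hSm n).1 h3
      have := (h2 (n + 1) (htail _ le_rfl)).2 i
      rw [hi] at this
      simpa using this
    | succ k ih =>
      have := (step k ih).2
      rwa [show n + 2 + 2 * k = n + 2 * (k + 1) by ring,
        show n + 3 + 2 * k = n + 1 + 2 * (k + 1) by ring] at this
  exact fun k => (step k (hlt k)).1

end WH

namespace WH
open scoped ContDiff

lemma bootstrap {v f : ℝ → ℝ} {lam : ℝ} (hv : ContDiff ℝ ∞ v) (hf : ContDiff ℝ 2 f)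
    (h : ∀ x, -(deriv (deriv f) x) + v x * f x = lam * f x) : ContDiff ℝ ∞ f := by
  have h2 : deriv (deriv f) = fun x => (v x - lam) * f x := by
    funext x; linarith [h x]
  have hd : Differentiable ℝ f := hf.differentiable (by norm_num)
  have hd1 : ContDiff ℝ 1 (deriv f) := by
    have : ContDiff ℝ (1 + 1) f := by
      rw [show (1 + 1 : WithTop ℕ∞) = 2 by norm_num]; exact hf
    exact (contDiff_succ_iff_deriv.1 this).2.2
  have hd' : Differentiable ℝ (deriv f) := hd1.differentiable (by norm_num)
  have key : ∀ n : ℕ, ContDiff ℝ n f ∧ ContDiff ℝ n (deriv f) := by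
    intro n
    induction n with
    | zero =>
      exact ⟨by simpa using hd.continuous, by simpa using hd'.continuous⟩
    | succ n ih =>
      have e : ContDiff ℝ n (deriv (deriv f)) := by
        rw [h2]
        exact ((hv.of_le (by exact_mod_cast le_top)).sub contDiff_const).mul ih.1
      constructor
      · push_cast
        exact contDiff_succ_iff_deriv.2 ⟨hd, by simp, ih.2⟩
      · push_cast
        exact contDiff_succ_iff_deriv.2 ⟨hd', by simp, e⟩
  exact contDiff_infty.2 (fun n => (key n).1)

lemma set_eq (a : ℝ) (N : ℕ) (lam : ℝ) :
    {f : ℝ → ℝ | ContDiff ℝ 2 f ∧ (∀ x, -(deriv (deriv f) x) + pot a N x * f x = lam * f x) ∧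
      ∀ x, f (x + Real.pi) = (-1) ^ N * f x} =
    ((E a N lam).map (Sm ℝ).subtype : Set (ℝ → ℝ)) := by
  ext f
  constructor
  · rintro ⟨h1, h2, h3⟩
    have hs := bootstrap (pot_smooth a N) h1 h2
    refine ⟨⟨f, hs⟩, mem_E.2 ⟨h3, ?_⟩, rfl⟩
    ext x
    exact h2 x
  · rintro ⟨g, hg, rfl⟩
    obtain ⟨h1, h2⟩ := mem_E.1 hg
    refine ⟨by exact_mod_cast contDiff_infty.1 (Sm_smooth g) 2, fun x => ?_, h1⟩
    exact congrArg (fun g : Sm ℝ => g.1 x) h2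

lemma finrank_eq (a : ℝ) (N : ℕ) (lam : ℝ) :
    Module.finrank ℝ (Submodule.span ℝ
      {f : ℝ → ℝ | ContDiff ℝ 2 f ∧ (∀ x, -(deriv (deriv f) x) + pot a N x * f x = lam * f x) ∧
      ∀ x, f (x + Real.pi) = (-1) ^ N * f x}) = Module.finrank ℝ (E a N lam) := by
  rw [set_eq, Submodule.span_eq]
  exact (LinearEquiv.finrank_eq (Submodule.equivMapOfInjective _
    (Submodule.subtype_injective _) _)).symm

lemma main (a : ℝ) (N : ℕ) (s : ℕ → ℝ) (hs : Monotone s)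
    (h1 : ∀ n, ∃ f : ℝ → ℝ, f ≠ 0 ∧ ContDiff ℝ 2 f ∧
      (∀ x, -(deriv (deriv f) x) + pot a N x * f x = s n * f x) ∧
      ∀ x, f (x + Real.pi) = (-1) ^ N * f x)
    (h2 : ∀ lam, Nat.card {n : ℕ // s n = lam} = Module.finrank ℝ (Submodule.span ℝ
      {f : ℝ → ℝ | ContDiff ℝ 2 f ∧ (∀ x, -(deriv (deriv f) x) + pot a N x * f x = lam * f x) ∧
      ∀ x, f (x + Real.pi) = (-1) ^ N * f x})) :
    ∀ k, s (N + 1 + 2 * k) = s (N + 2 + 2 * k) := by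
  obtain ⟨lam, hl1, hl2⟩ := structure_thm a N
  refine counting lam s hs (fun mu hmu => ?_) (fun k hk => ?_)
  · rw [h2, finrank_eq, hl1 mu hmu]
  · have hne : E a N (s k) ≠ ⊥ := by
      obtain ⟨f, hf0, hf⟩ := h1 k
      have hf' : f ∈ ((E a N (s k)).map (Sm ℝ).subtype : Set (ℝ → ℝ)) := by
        rw [← set_eq]; exact hf
      obtain ⟨g, hg, hgf⟩ := hf'
      intro hb
      rw [hb] at hg
      apply hf0
      rw [← hgf, (Submodule.mem_bot ℝ).1 hg]; rfl
    obtain ⟨q1, q2⟩ := hl2 _ hk hne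
    exact ⟨by rw [h2, finrank_eq, q1], q2⟩

lemma param {B C r : ℝ} (hC : 0 < C) (N : ℕ) (hr : r = ((N : ℝ) + 1) / 2)
    (h : B / (4 * Real.sqrt (2 * C)) = r ∨ B / (4 * Real.sqrt (2 * C)) = -r) :
    ∃ a : ℝ, (fun x => -(B * Real.cos (2 * x) + C * Real.cos (4 * x))) = pot a N := by
  have hq : 0 < Real.sqrt (2 * C) := Real.sqrt_pos.2 (by linarith)
  have hsq : Real.sqrt (2 * C) ^ 2 = 2 * C := Real.sq_sqrt (by linarith)
  set q := Real.sqrt (2 * C)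
  have key : ∀ a : ℝ, B = 4 * a * (N + 1) → C = 2 * a ^ 2 →
      (fun x => -(B * Real.cos (2 * x) + C * Real.cos (4 * x))) = pot a N := by
    intro a h1 h2
    funext x
    unfold pot
    rw [← h1, ← h2]
  rcases h with h | h
  · refine ⟨q / 2, key _ ?_ (by linarith)⟩
    rw [div_eq_iff (by positivity), hr] at h
    rw [h]; ring
  · refine ⟨-q / 2, key _ ?_ (by linarith)⟩
    rw [div_eq_iff (by positivity), hr] at h
    rw [h]; ring

end WH

theorem stmt10 (B C : ℝ) (hC : 0 < C) (lamP lamM : ℕ → ℝ)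
    (hP : EnumPer (fun x => -(B * Real.cos (2 * x) + C * Real.cos (4 * x))) lamP)
    (hM : EnumSemi (fun x => -(B * Real.cos (2 * x) + C * Real.cos (4 * x))) lamM) :
    (∀ n : ℕ,
      (B / (4 * Real.sqrt (2 * C)) = (n : ℝ) + 1 / 2 ∨
        B / (4 * Real.sqrt (2 * C)) = -((n : ℝ) + 1 / 2)) →
      ∀ m : ℕ, n < m → gapLen lamP lamM (2 * m) = 0) ∧
    (∀ n : ℕ,
      (B / (4 * Real.sqrt (2 * C)) = (n : ℝ) + 1 ∨
        B / (4 * Real.sqrt (2 * C)) = -((n : ℝ) + 1)) →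
      ∀ m : ℕ, n + 2 ≤ m → gapLen lamP lamM (2 * m - 1) = 0) := by
  refine ⟨?_, ?_⟩
  · intro n hn m hm
    obtain ⟨a, ha⟩ := WH.param hC (2 * n) (by push_cast; ring) hn
    rw [ha] at hP
    obtain ⟨h1, h2, h3⟩ := hP
    have hpow : (-1 : ℝ) ^ (2 * n) = 1 := by rw [pow_mul]; simp
    have key := WH.main a (2 * n) lamP h1 (fun k => by
      obtain ⟨f, hf, g1, g2, g3⟩ := h2 k
      exact ⟨f, hf, g1, g2, fun x => by rw [hpow, one_mul]; exact g3 x⟩) (fun lam => by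
      have hset : {f : ℝ → ℝ | IsPerEF (WH.pot a (2 * n)) lam f} = {f : ℝ → ℝ | ContDiff ℝ 2 f ∧
          (∀ x, -(deriv (deriv f) x) + WH.pot a (2 * n) x * f x = lam * f x) ∧
          ∀ x, f (x + Real.pi) = (-1) ^ (2 * n) * f x} := by
        ext f
        simp only [IsPerEF, hpow, one_mul]
      rw [h3 lam, perMult, hset])
    obtain ⟨k, rfl⟩ := Nat.exists_eq_add_of_le (show n + 1 ≤ m from hm)
    have := key k
    unfold gapLen
    rw [if_neg (by simp)]
    rw [show 2 * (n + 1 + k) - 1 = 2 * n + 1 + 2 * k by omega,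
      show 2 * (n + 1 + k) = 2 * n + 2 + 2 * k by ring, this, sub_self]
  · intro n hn m hm
    obtain ⟨a, ha⟩ := WH.param hC (2 * n + 1) (by push_cast; ring) hn
    rw [ha] at hM
    obtain ⟨h1, h2, h3⟩ := hM
    have hpow : (-1 : ℝ) ^ (2 * n + 1) = -1 := by rw [pow_succ, pow_mul]; simp
    have key := WH.main a (2 * n + 1) (fun k => lamM (k + 1))
      (fun i j hij => h1 (show 1 ≤ i + 1 by omega) (show 1 ≤ j + 1 by omega) (by omega))
      (fun k => by
        obtain ⟨f, hf, g1, g2, g3⟩ := h2 (k + 1) (by omega)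
        exact ⟨f, hf, g1, g2, fun x => by rw [hpow, neg_one_mul]; exact g3 x⟩) (fun lam => by
      have e : Nat.card {k : ℕ // lamM (k + 1) = lam} =
          Nat.card {k : ℕ // 1 ≤ k ∧ lamM k = lam} := by
        refine Nat.card_congr
          { toFun := fun k => ⟨k.1 + 1, by omega, k.2⟩
            invFun := fun k => ⟨k.1 - 1, by
              have h4 := k.2.1
              rw [Nat.sub_add_cancel h4]; exact k.2.2⟩
            left_inv := fun k => Subtype.ext (by simp)
            right_inv := fun k => Subtype.ext (Nat.sub_add_cancel k.2.1) }
      have hset : {f : ℝ → ℝ | IsSemiEF (WH.pot a (2 * n + 1)) lam f} =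
          {f : ℝ → ℝ | ContDiff ℝ 2 f ∧
          (∀ x, -(deriv (deriv f) x) + WH.pot a (2 * n + 1) x * f x = lam * f x) ∧
          ∀ x, f (x + Real.pi) = (-1) ^ (2 * n + 1) * f x} := by
        ext f
        simp only [IsSemiEF, hpow, neg_one_mul]
      rw [e, h3 lam, semiMult, hset])
    obtain ⟨k, rfl⟩ := Nat.exists_eq_add_of_le hm
    have h4 := key k
    unfold gapLen
    rw [if_pos ⟨n + 1 + k, by omega⟩]
    rw [show 2 * (n + 2 + k) - 1 + 1 = 2 * n + 1 + 2 + 2 * k + 1 by omega,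
      show 2 * (n + 2 + k) - 1 = 2 * n + 1 + 1 + 2 * k + 1 by omega, h4, sub_self]
end
end

section
/- For every positive integer n, the sum over all integers i with i ≡ n (mod 2) and i ∉ {n, −n} of 1/|n² − i²| satisfies Σ_i 1/|n² − i²| ≤ (1 + log n)/n. -/
open Real

lemma aux_part (n : ℕ) (hn : 0 < n) (M : ℕ) :
    ∑ m ∈ Finset.range M, (1 : ℝ) / (4 * (m + 1) * (m + 1 + n)) =
      ((harmonic n : ℝ) + (harmonic M : ℝ) - (harmonic (M + n) : ℝ)) / (4 * n) := by
  have hn' : (0 : ℝ) < n := by exact_mod_cast hn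
  induction M with
  | zero => simp
  | succ M ih =>
    rw [Finset.sum_range_succ, ih, show M + 1 + n = (M + n) + 1 by ring, harmonic_succ, harmonic_succ]
    push_cast
    have h1 : (M : ℝ) + 1 ≠ 0 := by positivity
    have h2 : (M : ℝ) + n + 1 ≠ 0 := by positivity
    have h3 : (M : ℝ) + 1 + n ≠ 0 := by positivity
    field_simp
    ring

lemma aux_le (n : ℕ) (hn : 0 < n) (M : ℕ) :
    ∑ m ∈ Finset.range M, (1 : ℝ) / (4 * (m + 1) * (m + 1 + n)) ≤ (harmonic n : ℝ) / (4 * n) := by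
  rw [aux_part n hn]
  have : harmonic M ≤ harmonic (M + n) := by
    unfold harmonic
    apply Finset.sum_le_sum_of_subset_of_nonneg
    · intro x; simp; omega
    · intros; positivity
  have : (harmonic M : ℝ) ≤ harmonic (M + n) := by exact_mod_cast this
  gcongr
  linarith

lemma aux_sum (n : ℕ) (hn : 0 < n) :
    Summable (fun m : ℕ => (1 : ℝ) / (4 * (m + 1) * (m + 1 + n))) :=
  summable_of_sum_range_le (fun _ => by positivity) (aux_le n hn)

lemma aux_tsum (n : ℕ) (hn : 0 < n) :
    ∑' m : ℕ, (1 : ℝ) / (4 * (m + 1) * (m + 1 + n)) ≤ (harmonic n : ℝ) / (4 * n) :=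
  Real.tsum_le_of_sum_range_le (fun _ => by positivity) (aux_le n hn)

lemma aux_mid (p : ℕ) :
    ∑ k ∈ Finset.range p, (1 : ℝ) / |4 * (k + 1) * ((p : ℝ) - k)| =
      (2 * (harmonic p : ℝ)) / (4 * (p + 1)) := by
  have hH : (harmonic p : ℝ) = ∑ k ∈ Finset.range p, (1 : ℝ) / (k + 1) := by
    simp [harmonic]
  have hH2 : (harmonic p : ℝ) = ∑ k ∈ Finset.range p, (1 : ℝ) / (p - k) := by
    rw [hH, ← Finset.sum_range_reflect]
    refine Finset.sum_congr rfl fun k hk => ?_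
    have hk := Finset.mem_range.1 hk
    rw [Nat.cast_sub (by omega), Nat.cast_sub (by omega)]
    push_cast
    ring_nf
  have : 2 * (harmonic p : ℝ) = ∑ k ∈ Finset.range p, ((1 : ℝ) / (k + 1) + 1 / (p - k)) := by
    rw [Finset.sum_add_distrib, ← hH, ← hH2]; ring
  rw [this, Finset.sum_div]
  refine Finset.sum_congr rfl fun k hk => ?_
  have hk : (k : ℝ) < p := by exact_mod_cast Finset.mem_range.1 hk
  have h1 : (0 : ℝ) < p - k := by linarith
  rw [abs_of_pos (by positivity)]
  field_simp
  ring

lemma aux_main (n : ℕ) (hn : 0 < n) :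
    Summable (fun k : ℤ => (1 : ℝ) / |4 * (k : ℝ) * (n + k)|) ∧
    ∑' k : ℤ, (1 : ℝ) / |4 * (k : ℝ) * (n + k)| ≤ (harmonic n : ℝ) / n := by
  set f : ℤ → ℝ := fun k : ℤ => (1 : ℝ) / |4 * (k : ℝ) * (n + k)| with hf
  have hS := aux_sum n hn
  have hT := aux_tsum n hn
  have e1 : (fun m : ℕ => f ((m + 1 : ℕ) : ℤ)) = fun m : ℕ => (1 : ℝ) / (4 * (m + 1) * (m + 1 + n)) := by
    ext m
    simp only [hf]
    push_cast
    rw [abs_of_nonneg (by positivity)]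
    ring_nf
  have s1 : Summable (fun m : ℕ => f (m : ℤ)) := by
    rw [← summable_nat_add_iff 1, e1]; exact hS
  have t1 : ∑' m : ℕ, f (m : ℤ) ≤ (harmonic n : ℝ) / (4 * n) := by
    rw [← s1.sum_add_tsum_nat_add 1, e1]
    simpa [hf] using hT
  have e2 : (fun m : ℕ => f (-(((m + n : ℕ) : ℤ) + 1))) =
      fun m : ℕ => (1 : ℝ) / (4 * (m + 1) * (m + 1 + n)) := by
    ext m
    simp only [hf]
    push_cast
    rw [show 4 * -((m : ℝ) + n + 1) * (n + -((m : ℝ) + n + 1)) = 4 * (m + 1) * (m + 1 + n) by ring,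
      abs_of_nonneg (by positivity)]
  have s2 : Summable (fun m : ℕ => f (-((m : ℤ) + 1))) := by
    rw [← summable_nat_add_iff n, e2]; exact hS
  have t2 : ∑' m : ℕ, f (-((m : ℤ) + 1)) ≤
      2 * (harmonic n : ℝ) / (4 * n) + (harmonic n : ℝ) / (4 * n) := by
    rw [← s2.sum_add_tsum_nat_add n, e2]
    refine add_le_add ?_ hT
    obtain ⟨p, rfl⟩ : ∃ p, n = p + 1 := ⟨n - 1, by omega⟩
    rw [Finset.sum_range_succ]
    have hz : f (-((p : ℤ) + 1)) = 0 := by simp [hf]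
    have hm : ∑ k ∈ Finset.range p, f (-((k : ℤ) + 1)) = (2 * (harmonic p : ℝ)) / (4 * (p + 1)) := by
      rw [← aux_mid]
      refine Finset.sum_congr rfl fun k _ => ?_
      simp only [hf]
      push_cast
      rw [show 4 * -((k : ℝ) + 1) * (p + 1 + -((k : ℝ) + 1)) = -(4 * (k + 1) * (p - k)) by ring, abs_neg]
    rw [hz, hm, harmonic_succ]
    push_cast
    rw [add_zero]
    gcongr
    simp only [le_add_iff_nonneg_right]
    positivity
  refine ⟨Summable.of_nat_of_neg_add_one s1 s2, ?_⟩
  rw [tsum_of_nat_of_neg_add_one s1 s2]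
  have hn' : (0 : ℝ) < n := by exact_mod_cast hn
  have : (harmonic n : ℝ) / n = (harmonic n : ℝ) / (4 * n) +
    (2 * (harmonic n : ℝ) / (4 * n) + (harmonic n : ℝ) / (4 * n)) := by
    field_simp; ring
  rw [this]
  exact add_le_add t1 t2

theorem stmt15 (n : ℕ) (hn : 0 < n) :
    Summable (fun i : {i : ℤ // (2 : ℤ) ∣ (i - (n : ℤ)) ∧ i ≠ (n : ℤ) ∧ i ≠ -(n : ℤ)} =>
      1 / |(n : ℝ) ^ 2 - (i.1 : ℝ) ^ 2|) ∧
    ∑' i : {i : ℤ // (2 : ℤ) ∣ (i - (n : ℤ)) ∧ i ≠ (n : ℤ) ∧ i ≠ -(n : ℤ)},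
        1 / |(n : ℝ) ^ 2 - (i.1 : ℝ) ^ 2| ≤
      (1 + Real.log n) / n := by
  obtain ⟨hs, ht⟩ := aux_main n hn
  let g : {i : ℤ // (2 : ℤ) ∣ (i - (n : ℤ)) ∧ i ≠ (n : ℤ) ∧ i ≠ -(n : ℤ)} → ℤ :=
    fun i => (i.1 - n) / 2
  have hg : ∀ i, i.1 = n + 2 * g i := by
    intro i
    have := i.2.1
    simp only [g]
    omega
  have hinj : Function.Injective g := by
    intro a b h
    apply Subtype.ext
    rw [hg a, hg b, h]
  have he : (fun i : {i : ℤ // (2 : ℤ) ∣ (i - (n : ℤ)) ∧ i ≠ (n : ℤ) ∧ i ≠ -(n : ℤ)} =>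
      1 / |(n : ℝ) ^ 2 - (i.1 : ℝ) ^ 2|) = (fun k : ℤ => (1 : ℝ) / |4 * (k : ℝ) * (n + k)|) ∘ g := by
    ext i
    have : (i.1 : ℝ) = n + 2 * g i := by exact_mod_cast hg i
    simp only [Function.comp]
    rw [this, ← abs_neg]
    ring_nf
  rw [he]
  refine ⟨hs.comp_injective hinj, ?_⟩
  refine (tsum_comp_le_tsum_of_inj hs (fun _ => by positivity) hinj).trans (ht.trans ?_)
  gcongr
  exact harmonic_le_one_add_log n
end

section
/- Let b, c, q, m1, m2 ∈ ℝ with q > 0 and c ≠ 0, and define V : ℤ → ℝ by V(2) = V(−2) = (b/2)·q^{m1}, V(4) = V(−4) = (c/2)·q^{m2}, and V(m) = 0 otherwise. Set K = 40·(|b/2|·q^{m1} + |c/2|·q^{m2} + |b²/(2c)|·q^{2m1−m2}). Then there exists a positive integer n_1 such that for every integer n ≥ n_1, every ξ ∈ X⁺, and every real z with |z| ≤ 1, the family (|B_n(x,z)|)_{x ∈ X_ξ} is summable and Σ_{x ∈ X_ξ} |B_n(x,z)| ≤ |B_n(ξ,z)|·K·(log n)/n. -/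
open Real

noncomputable section

/-- The `s`-th interior vertex `j_{s+1} = -n + x_1 + ⋯ + x_{s+1}` of a walk starting at `-n`
with steps `step 0, …, step ν`. -/
def vertexOf (n : ℕ) {ν : ℕ} (step : Fin (ν + 1) → ℤ) (s : Fin ν) : ℤ :=
  -(n : ℤ) + ∑ k ∈ Finset.univ.filter (fun k : Fin (ν + 1) => (k : ℕ) ≤ (s : ℕ)), step k

/-- A walk from `-n` to `n` with `ν + 1` steps, each equal to `±2` or `±4`, whose interior
vertices avoid `±n`.  The set of all such walks is `X`. -/
structure Walk (n : ℕ) where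
  ν : ℕ
  step : Fin (ν + 1) → ℤ
  step_mem : ∀ k, step k = -4 ∨ step k = -2 ∨ step k = 2 ∨ step k = 4
  sum_eq : -(n : ℤ) + ∑ k, step k = (n : ℤ)
  vertex_ne : ∀ s : Fin ν, vertexOf n step s ≠ (n : ℤ) ∧ vertexOf n step s ≠ -(n : ℤ)

/-- A walk belongs to `X⁺` iff all its steps equal `2` or `4`. -/
def Walk.IsPos {n : ℕ} (w : Walk n) : Prop := ∀ k, w.step k = 2 ∨ w.step k = 4

/-- The vertex sequence of `ξ` is a subsequence of the vertex sequence of `x`. -/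
def VertexSubseq (n : ℕ) (ξ x : Walk n) : Prop :=
  ∃ e : Fin ξ.ν → Fin x.ν, StrictMono e ∧
    ∀ s, vertexOf n x.step (e s) = vertexOf n ξ.step s

/-- The weight `B_n(x, z)` of a walk. -/
def Bwt (V : ℤ → ℝ) (n : ℕ) (z : ℝ) (x : Walk n) : ℝ :=
  (∏ k, V (x.step k)) /
    ∏ s : Fin x.ν, ((n : ℝ) ^ 2 - (vertexOf n x.step s : ℝ) ^ 2 + z)


/-! ### Auxiliary machinery -/

open scoped ENNReal

/-- Value of the step with code `x`. -/
def sv (x : Fin 4) : ℤ := ![-4, -2, 2, 4] x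

/-- Code of a step. -/
def si (x : ℤ) : Fin 4 := if x = -4 then 0 else if x = -2 then 1 else if x = 2 then 2 else 3

lemma sv_si {x : ℤ} (h : x = -4 ∨ x = -2 ∨ x = 2 ∨ x = 4) : sv (si x) = x := by
  rcases h with rfl | rfl | rfl | rfl <;> simp [si, sv]

def ssum (l : List (Fin 4)) : ℤ := (l.map sv).sum

@[simp] lemma ssum_nil : ssum [] = 0 := rfl
@[simp] lemma ssum_cons (x : Fin 4) (l : List (Fin 4)) : ssum (x :: l) = sv x + ssum l := by
  simp [ssum]
@[simp] lemma ssum_append (l l' : List (Fin 4)) : ssum (l ++ l') = ssum l + ssum l' := by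
  simp [ssum]

/-- weight including the starting vertex -/
def Qw (g : ℤ → ℝ) (w : Fin 4 → ℝ) : ℤ → List (Fin 4) → ℝ
  | _, [] => 1
  | u, x :: l => g u * w x * Qw g w (u + sv x) l

/-- weight with only the interior vertices -/
def Fw (g : ℤ → ℝ) (w : Fin 4 → ℝ) (u : ℤ) : List (Fin 4) → ℝ
  | [] => 0
  | x :: l => w x * Qw g w (u + sv x) l

lemma Qw_nonneg {g : ℤ → ℝ} {w : Fin 4 → ℝ} (hg : ∀ j, 0 ≤ g j) (hw : ∀ x, 0 ≤ w x)
    (u : ℤ) (l : List (Fin 4)) : 0 ≤ Qw g w u l := by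
  induction l generalizing u with
  | nil => simp [Qw]
  | cons x l ih =>
    simp only [Qw]
    exact mul_nonneg (mul_nonneg (hg _) (hw _)) (ih _)

lemma Fw_nonneg {g : ℤ → ℝ} {w : Fin 4 → ℝ} (hg : ∀ j, 0 ≤ g j) (hw : ∀ x, 0 ≤ w x)
    (u : ℤ) (l : List (Fin 4)) : 0 ≤ Fw g w u l := by
  cases l with
  | nil => simp [Fw]
  | cons x l => exact mul_nonneg (hw _) (Qw_nonneg hg hw _ _)

lemma Qw_append (g : ℤ → ℝ) (w : Fin 4 → ℝ) (u : ℤ) (l l' : List (Fin 4)) :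
    Qw g w u (l ++ l') = Qw g w u l * Qw g w (u + ssum l) l' := by
  induction l generalizing u with
  | nil => simp [Qw]
  | cons x l ih => simp only [List.cons_append, Qw, ih, ssum_cons, add_assoc]; ring

lemma Qw_eq (g : ℤ → ℝ) (w : Fin 4 → ℝ) (u : ℤ) (l : List (Fin 4)) (h : l ≠ []) :
    Qw g w u l = g u * Fw g w u l := by
  cases l with
  | nil => simp at h
  | cons x l => simp only [Qw, Fw]; ring

lemma Fw_append (g : ℤ → ℝ) (w : Fin 4 → ℝ) (u : ℤ) (l l' : List (Fin 4)) (h : l ≠ []) :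
    Fw g w u (l ++ l') = Fw g w u l * Qw g w (u + ssum l) l' := by
  cases l with
  | nil => simp at h
  | cons x l => simp only [List.cons_append, Fw, Qw_append, ssum_cons, add_assoc]; ring

/-- refinement of step lists -/
def Ref : List (Fin 4) → List (Fin 4) → Prop
  | [], x => x = []
  | y :: ys, x => ∃ l l', x = l ++ l' ∧ ssum l = sv y ∧ Ref ys l'

lemma Ref_refl (ys : List (Fin 4)) : Ref ys ys := by
  induction ys with
  | nil => rfl
  | cons y ys ih => exact ⟨[y], ys, rfl, by simp, ih⟩

lemma tsum_Ref_cons (y : Fin 4) (ys : List (Fin 4)) (f f1 f2 : List (Fin 4) → ℝ≥0∞)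
    (h : ∀ l l', ssum l = sv y → f (l ++ l') ≤ f1 l * f2 l') :
    ∑' x : {x // Ref (y :: ys) x}, f x ≤
      (∑' l : {l // ssum l = sv y}, f1 l) * ∑' l : {l // Ref ys l}, f2 l := by
  have key : ∀ x : {x // Ref (y :: ys) x}, ∃ p : {l // ssum l = sv y} × {l // Ref ys l},
      x.1 = p.1.1 ++ p.2.1 := by
    rintro ⟨x, l, l', hx, h1, h2⟩
    exact ⟨⟨⟨l, h1⟩, ⟨l', h2⟩⟩, hx⟩
  choose φ hφ using key
  have hinj : Function.Injective φ := by
    intro a b hab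
    apply Subtype.ext
    rw [hφ a, hφ b, hab]
  calc ∑' x : {x // Ref (y :: ys) x}, f x
      ≤ ∑' x : {x // Ref (y :: ys) x}, f1 (φ x).1 * f2 (φ x).2 := by
        refine ENNReal.tsum_le_tsum fun x => ?_
        rw [hφ x]
        exact h _ _ (φ x).1.2
    _ ≤ ∑' p : {l // ssum l = sv y} × {l // Ref ys l}, f1 p.1 * f2 p.2 :=
        ENNReal.tsum_comp_le_tsum_of_injective hinj
          (fun p : {l // ssum l = sv y} × {l // Ref ys l} => f1 p.1 * f2 p.2)
    _ = _ := by
        rw [ENNReal.tsum_prod (f := fun (a : {l // ssum l = sv y}) (b : {l // Ref ys l}) =>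
          f1 a * f2 b)]
        simp only [ENNReal.tsum_mul_left, ENNReal.tsum_mul_right]

/-- product of the correction factors -/
def Ew (ε : ℤ → ℝ) : ℤ → List (Fin 4) → ℝ
  | _, [] => 1
  | u, y :: ys => (1 + ε u) * Ew ε (u + sv y) ys

lemma Ew_nonneg {ε : ℤ → ℝ} (hε : ∀ u, 0 ≤ ε u) (u : ℤ) (ys : List (Fin 4)) :
    0 ≤ Ew ε u ys := by
  induction ys generalizing u with
  | nil => simp [Ew]
  | cons y ys ih => exact mul_nonneg (by linarith [hε u]) (ih _)

lemma ne_nil_of_ssum {l : List (Fin 4)} {y : Fin 4} (h : ssum l = sv y) : l ≠ [] := by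
  rintro rfl
  fin_cases y <;> simp [sv] at h

lemma tsum_Q_le {g : ℤ → ℝ} {w : Fin 4 → ℝ} {ε : ℤ → ℝ} (hg : ∀ j, 0 ≤ g j)
    (hw : ∀ x, 0 ≤ w x) (hε : ∀ u, 0 ≤ ε u) (ys : List (Fin 4))
    (hS : ∀ u, ∀ y ∈ ys, ∑' l : {l // ssum l = sv y}, ENNReal.ofReal (Fw g w u l) ≤
      ENNReal.ofReal (w y * (1 + ε u))) (u : ℤ) :
    ∑' x : {x // Ref ys x}, ENNReal.ofReal (Qw g w u x) ≤
      ENNReal.ofReal (Qw g w u ys * Ew ε u ys) := by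
  induction ys generalizing u with
  | nil =>
    have : Unique {x // Ref [] x} := ⟨⟨⟨[], rfl⟩⟩, fun a => Subtype.ext a.2⟩
    rw [tsum_fintype, Fintype.sum_unique]
    have h : (default : {x // Ref [] x}).1 = [] := (default : {x // Ref [] x}).2
    rw [h]; simp [Ew]
  | cons y ys ih =>
    refine (tsum_Ref_cons y ys (fun x => ENNReal.ofReal (Qw g w u x))
      (fun l => ENNReal.ofReal (g u) * ENNReal.ofReal (Fw g w u l))
      (fun l => ENNReal.ofReal (Qw g w (u + sv y) l)) ?_).trans ?_
    · intro l l' hl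
      rw [Qw_append, hl, Qw_eq _ _ _ _ (ne_nil_of_ssum hl),
        ENNReal.ofReal_mul (mul_nonneg (hg _) (Fw_nonneg hg hw _ _)), ENNReal.ofReal_mul (hg _)]
    · rw [ENNReal.tsum_mul_left]
      have h1 := hS u y (by simp)
      have h2 := ih (fun u y hy => hS u y (by simp [hy])) (u + sv y)
      calc _ ≤ ENNReal.ofReal (g u) * ENNReal.ofReal (w y * (1 + ε u)) *
            ENNReal.ofReal (Qw g w (u + sv y) ys * Ew ε (u + sv y) ys) := by gcongr
        _ = _ := by
          rw [← ENNReal.ofReal_mul (hg _), ← ENNReal.ofReal_mul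
            (mul_nonneg (hg _) (mul_nonneg (hw _) (by linarith [hε u])))]
          congr 1
          simp only [Qw, Ew]; ring

lemma tsum_F_le {g : ℤ → ℝ} {w : Fin 4 → ℝ} {ε : ℤ → ℝ} (hg : ∀ j, 0 ≤ g j)
    (hw : ∀ x, 0 ≤ w x) (hε : ∀ u, 0 ≤ ε u) (ys : List (Fin 4)) (hne : ys ≠ [])
    (hS : ∀ u, ∀ y ∈ ys, ∑' l : {l // ssum l = sv y}, ENNReal.ofReal (Fw g w u l) ≤
      ENNReal.ofReal (w y * (1 + ε u))) (u : ℤ) :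
    ∑' x : {x // Ref ys x}, ENNReal.ofReal (Fw g w u x) ≤
      ENNReal.ofReal (Fw g w u ys * Ew ε u ys) := by
  cases ys with
  | nil => simp at hne
  | cons y ys =>
    refine (tsum_Ref_cons y ys (fun x => ENNReal.ofReal (Fw g w u x))
      (fun l => ENNReal.ofReal (Fw g w u l))
      (fun l => ENNReal.ofReal (Qw g w (u + sv y) l)) ?_).trans ?_
    · intro l l' hl
      rw [Fw_append _ _ _ _ _ (ne_nil_of_ssum hl), hl,
        ENNReal.ofReal_mul (Fw_nonneg hg hw _ _)]
    · have h1 := hS u y (by simp)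
      have h2 := tsum_Q_le hg hw hε ys (fun u y hy => hS u y (by simp [hy])) (u + sv y)
      calc _ ≤ ENNReal.ofReal (w y * (1 + ε u)) *
            ENNReal.ofReal (Qw g w (u + sv y) ys * Ew ε (u + sv y) ys) := by gcongr
        _ = _ := by
          rw [← ENNReal.ofReal_mul (mul_nonneg (hw _) (by linarith [hε u]))]
          congr 1
          simp only [Fw, Ew]; ring

lemma Ew_le_exp {ε : ℤ → ℝ} (hε : ∀ u, 0 ≤ ε u) (ys : List (Fin 4))
    (hy : ∀ y ∈ ys, sv y = 2 ∨ sv y = 4) (u : ℤ) (m : ℕ) (hm : ssum ys = 2 * m) :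
    Ew ε u ys ≤ Real.exp (∑ i ∈ Finset.range m, ε (u + 2 * i)) := by
  induction ys generalizing u m with
  | nil =>
    simp only [Ew]
    exact Real.one_le_exp (Finset.sum_nonneg fun i _ => hε _)
  | cons y ys ih =>
    have hpos : 0 ≤ ssum ys := by
      have : ∀ zs : List (Fin 4), (∀ y ∈ zs, sv y = 2 ∨ sv y = 4) → 0 ≤ ssum zs := by
        intro zs hz
        apply List.sum_nonneg
        intro a ha
        obtain ⟨b, hb, rfl⟩ := List.mem_map.1 ha
        rcases hz b hb with h | h <;> omega
      exact this ys fun y h => hy y (by simp [h])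
    have hy' : ∀ y ∈ ys, sv y = 2 ∨ sv y = 4 := fun y h => hy y (by simp [h])
    simp only [ssum_cons] at hm
    have step : ∀ x : ℝ, 1 + x ≤ Real.exp x := fun x => by linarith [Real.add_one_le_exp x]
    simp only [Ew]
    rcases hy y (by simp) with h | h
    · obtain ⟨k, rfl⟩ : ∃ k, m = k + 1 := ⟨m - 1, by omega⟩
      have := ih hy' (u + sv y) k (by push_cast at hm; omega)
      rw [Finset.sum_range_succ', Real.exp_add, mul_comm (Real.exp _)]
      refine mul_le_mul ?_ (this.trans (Real.exp_le_exp.2 (le_of_eq ?_))) (Ew_nonneg hε _ _)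
        (Real.exp_nonneg _)
      · simpa using step (ε u)
      · refine Finset.sum_congr rfl fun i _ => ?_
        rw [h]; congr 1; push_cast; ring
    · obtain ⟨k, rfl⟩ : ∃ k, m = k + 2 := ⟨m - 2, by omega⟩
      have := ih hy' (u + sv y) k (by push_cast at hm; omega)
      rw [Finset.sum_range_succ', Finset.sum_range_succ', Real.exp_add, mul_comm (Real.exp _)]
      refine mul_le_mul ?_ (this.trans (Real.exp_le_exp.2 ?_)) (Ew_nonneg hε _ _)
        (Real.exp_nonneg _)
      · simpa using step (ε u)
      · refine le_trans (le_of_eq ?_) (le_add_of_nonneg_right (hε _))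
        refine Finset.sum_congr rfl fun i _ => ?_
        rw [h]; congr 1; push_cast; ring

/-- iterated sum over lists of length `k` -/
def Tk (f : List (Fin 4) → ℝ≥0∞) : ℕ → List (Fin 4) → ℝ≥0∞
  | 0, p => f p
  | k + 1, p => ∑ x : Fin 4, Tk f k (p ++ [x])

lemma Tk_eq (f : List (Fin 4) → ℝ≥0∞) (k : ℕ) (p : List (Fin 4)) :
    ∑ s : Fin k → Fin 4, f (p ++ List.ofFn s) = Tk f k p := by
  induction k generalizing p with
  | zero => simp [Tk]
  | succ k ih =>
    rw [← (Fin.consEquiv (fun _ : Fin (k + 1) => Fin 4)).sum_comp, Fintype.sum_prod_type]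
    simp only [Tk]
    refine Finset.sum_congr rfl fun x _ => ?_
    rw [← ih]
    refine Finset.sum_congr rfl fun s _ => ?_
    have : List.ofFn ((Fin.consEquiv (fun _ : Fin (k + 1) => Fin 4)) (x, s)) = x :: List.ofFn s :=
      List.ofFn_cons x s
    rw [this]; simp

lemma tsum_list (f : List (Fin 4) → ℝ≥0∞) :
    ∑' l, f l = ∑' k : ℕ, ∑ s : Fin k → Fin 4, f (List.ofFn s) := by
  rw [← (List.equivSigmaTuple (α := Fin 4)).symm.tsum_eq, ENNReal.tsum_sigma'
    ]
  refine tsum_congr fun k => ?_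
  rw [tsum_fintype]
  rfl

/-- product of step weights -/
def wprod (w : Fin 4 → ℝ) (l : List (Fin 4)) : ℝ := (l.map w).prod

@[simp] lemma wprod_nil (w : Fin 4 → ℝ) : wprod w [] = 1 := rfl
@[simp] lemma wprod_cons (w : Fin 4 → ℝ) (x : Fin 4) (l : List (Fin 4)) :
    wprod w (x :: l) = w x * wprod w l := by simp [wprod]

lemma wprod_nonneg {w : Fin 4 → ℝ} (hw : ∀ x, 0 ≤ w x) (l : List (Fin 4)) : 0 ≤ wprod w l := by
  induction l with
  | nil => simp
  | cons x l ih => rw [wprod_cons]; exact mul_nonneg (hw x) ih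

lemma wprod_le {w : Fin 4 → ℝ} {M : ℝ} (hw : ∀ x, 0 ≤ w x) (hM : ∀ x, w x ≤ M)
    (l : List (Fin 4)) : wprod w l ≤ M ^ l.length := by
  induction l with
  | nil => simp
  | cons x l ih =>
    rw [wprod_cons, List.length_cons, pow_succ']
    exact mul_le_mul (hM x) ih (wprod_nonneg hw l) ((hw x).trans (hM x))

lemma Qw_le {g : ℤ → ℝ} {w : Fin 4 → ℝ} {δ : ℝ} (hg : ∀ j, 0 ≤ g j) (hgδ : ∀ j, g j ≤ δ)
    (hw : ∀ x, 0 ≤ w x) (u : ℤ) (l : List (Fin 4)) :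
    Qw g w u l ≤ δ ^ l.length * wprod w l := by
  induction l generalizing u with
  | nil => simp [Qw]
  | cons x l ih =>
    have hδ : 0 ≤ δ := (hg 0).trans (hgδ 0)
    simp only [Qw, wprod_cons, List.length_cons]
    calc g u * w x * Qw g w (u + sv x) l ≤ δ * w x * (δ ^ l.length * wprod w l) := by
          refine mul_le_mul (mul_le_mul_of_nonneg_right (hgδ u) (hw x)) (ih _)
            (Qw_nonneg hg hw _ _) (mul_nonneg hδ (hw x))
      _ = _ := by ring

lemma Fw_le {g : ℤ → ℝ} {w : Fin 4 → ℝ} {δ : ℝ} (hg : ∀ j, 0 ≤ g j) (hgδ : ∀ j, g j ≤ δ)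
    (hw : ∀ x, 0 ≤ w x) (u : ℤ) (l : List (Fin 4)) (k : ℕ) (hk : l.length = k + 1) :
    Fw g w u l ≤ δ ^ k * wprod w l := by
  cases l with
  | nil => simp at hk
  | cons x l =>
    simp only [List.length_cons, add_left_inj] at hk
    subst hk
    simp only [Fw, wprod_cons]
    calc _ ≤ w x * (δ ^ l.length * wprod w l) :=
          mul_le_mul_of_nonneg_left (Qw_le hg hgδ hw _ _) (hw x)
      _ = _ := by ring

def wt (β γ : ℝ) : Fin 4 → ℝ := ![γ, β, β, γ]

lemma wt_nonneg {β γ : ℝ} (hβ : 0 ≤ β) (hγ : 0 < γ) (x : Fin 4) : 0 ≤ wt β γ x := by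
  fin_cases x <;> simp [wt, hβ, hγ.le]

lemma wt_le {β γ : ℝ} (hβ : 0 ≤ β) (hγ : 0 < γ) (x : Fin 4) : wt β γ x ≤ β + γ := by
  fin_cases x <;> simp [wt, hβ, hγ.le]

lemma wprod_parity {β γ : ℝ} (hβ : 0 ≤ β) (hγ : 0 < γ) (l : List (Fin 4))
    (h : ¬ (4 ∣ ssum l)) : wprod (wt β γ) l * (β + γ) ≤ β * (β + γ) ^ l.length := by
  have hM : 0 < β + γ := by linarith
  induction l with
  | nil => simp at h
  | cons x l ih =>
    rw [ssum_cons] at h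
    rw [wprod_cons, List.length_cons]
    have h1 := wprod_le (wt_nonneg hβ hγ) (wt_le hβ hγ) l
    have c1 : wt β γ x = β → wt β γ x * wprod (wt β γ) l * (β + γ) ≤
        β * (β + γ) ^ (l.length + 1) := by
      intro hx
      rw [hx]
      calc _ = β * (β + γ) * wprod (wt β γ) l := by ring
        _ ≤ β * (β + γ) * (β + γ) ^ l.length := by gcongr
        _ = _ := by ring
    have c2 : ¬ (4 ∣ ssum l) → wt β γ x * wprod (wt β γ) l * (β + γ) ≤
        β * (β + γ) ^ (l.length + 1) := by
      intro hx
      have := ih hx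
      have h2 := wt_le hβ hγ x
      have h3 := wt_nonneg hβ hγ x
      calc _ = wt β γ x * (wprod (wt β γ) l * (β + γ)) := by ring
        _ ≤ (β + γ) * (β * (β + γ) ^ l.length) := by
          refine mul_le_mul h2 this ?_ hM.le
          exact mul_nonneg (wprod_nonneg (wt_nonneg hβ hγ) l) hM.le
        _ = _ := by ring
    fin_cases x
    · apply c2; simp [sv] at h; omega
    · apply c1; simp [wt]
    · apply c1; simp [wt]
    · apply c2; simp [sv] at h; omega

lemma wprod_bound {β γ : ℝ} (hβ : 0 ≤ β) (hγ : 0 < γ) (l : List (Fin 4)) (y : Fin 4)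
    (hl : ssum l = sv y) : wprod (wt β γ) l * γ ≤ wt β γ y * (β + γ) ^ l.length := by
  have hM : 0 < β + γ := by linarith
  have h1 := wprod_le (wt_nonneg hβ hγ) (wt_le hβ hγ) l
  have h0 := wprod_nonneg (wt_nonneg hβ hγ) l
  have c1 : wt β γ y = γ → wprod (wt β γ) l * γ ≤ wt β γ y * (β + γ) ^ l.length := by
    intro h
    rw [h, mul_comm]
    gcongr
  have c2 : wt β γ y = β → ¬ (4 ∣ ssum l) →
      wprod (wt β γ) l * γ ≤ wt β γ y * (β + γ) ^ l.length := by
    intro h h'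
    rw [h]
    refine le_trans ?_ (wprod_parity hβ hγ l h')
    gcongr; linarith
  rw [hl] at c2
  fin_cases y
  · exact c1 (by simp [wt])
  · exact c2 (by simp [wt]) (by simp [sv])
  · exact c2 (by simp [wt]) (by simp [sv])
  · exact c1 (by simp [wt])

def epsw (g : ℤ → ℝ) (β γ δ : ℝ) (u : ℤ) : ℝ :=
  (γ + β ^ 2 / γ) * (g (u - 2) + g (u + 2) + g (u + 4)) + 128 * (β + γ) ^ 3 / γ * δ ^ 2

lemma S_bound {g : ℤ → ℝ} {β γ δ : ℝ} (hβ : 0 ≤ β) (hγ : 0 < γ) (hg : ∀ j, 0 ≤ g j)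
    (hgδ : ∀ j, g j ≤ δ) (hδ : 4 * (β + γ) * δ ≤ 1 / 2) (u : ℤ) (y : Fin 4)
    (hy : sv y = 2 ∨ sv y = 4) :
    ∑' l : {l // ssum l = sv y}, ENNReal.ofReal (Fw g (wt β γ) u l) ≤
      ENNReal.ofReal (wt β γ y * (1 + epsw g β γ δ u)) := by
  have hw := wt_nonneg hβ hγ
  have hδ0 : 0 ≤ δ := (hg 0).trans (hgδ 0)
  have hM : 0 < β + γ := by linarith
  set f : List (Fin 4) → ℝ≥0∞ := fun l =>
    if ssum l = sv y then ENNReal.ofReal (Fw g (wt β γ) u l) else 0 with hf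
  have e1 : ∑' l : {l // ssum l = sv y}, ENNReal.ofReal (Fw g (wt β γ) u l) = ∑' l, f l := by
    refine (tsum_subtype {l | ssum l = sv y}
      (fun l => ENNReal.ofReal (Fw g (wt β γ) u l))).trans ?_
    refine tsum_congr fun l => ?_
    simp only [Set.indicator_apply, Set.mem_ofPred_eq, hf]
  rw [e1, tsum_list, ← Summable.sum_add_tsum_nat_add' (k := 3) ENNReal.summable]
  -- the tail
  set c : ℝ := wt β γ y / γ * 64 * (β + γ) ^ 3 * δ ^ 2 with hc
  have hc0 : 0 ≤ c := by have := hw y; positivity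
  have tail : ∑' k : ℕ, ∑ s : Fin (k + 3) → Fin 4, f (List.ofFn s) ≤ ENNReal.ofReal (2 * c) := by
    have h1 : ∀ k : ℕ, ∑ s : Fin (k + 3) → Fin 4, f (List.ofFn s) ≤
        ENNReal.ofReal c * (2⁻¹ : ℝ≥0∞) ^ k := by
      intro k
      have h2 : ∀ s : Fin (k + 3) → Fin 4, f (List.ofFn s) ≤
          ENNReal.ofReal (wt β γ y / γ * (β + γ) ^ (k + 3) * δ ^ (k + 2)) := by
        intro s
        simp only [hf]
        split_ifs with h
        · apply ENNReal.ofReal_le_ofReal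
          have a1 := Fw_le hg hgδ hw u (List.ofFn s) (k + 2) (by simp)
          have a2 := wprod_bound hβ hγ _ y h
          rw [List.length_ofFn] at a2
          have a3 : wprod (wt β γ) (List.ofFn s) ≤ wt β γ y / γ * (β + γ) ^ (k + 3) := by
            rw [div_mul_eq_mul_div, le_div_iff₀ hγ]; exact a2
          calc _ ≤ _ := a1
            _ ≤ δ ^ (k + 2) * (wt β γ y / γ * (β + γ) ^ (k + 3)) := by gcongr
            _ = _ := by ring
        · exact zero_le
      calc _ ≤ ∑ s : Fin (k + 3) → Fin 4,
            ENNReal.ofReal (wt β γ y / γ * (β + γ) ^ (k + 3) * δ ^ (k + 2)) :=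
            Finset.sum_le_sum fun s _ => h2 s
        _ = ENNReal.ofReal (c * (4 * (β + γ) * δ) ^ k) := by
            rw [Finset.sum_const, nsmul_eq_mul, ← ENNReal.ofReal_natCast,
              ← ENNReal.ofReal_mul (Nat.cast_nonneg _)]
            congr 1
            simp only [Finset.card_univ, Fintype.card_pi, Fintype.card_fin, Finset.prod_const, hc]
            push_cast
            generalize β + γ = D
            ring
        _ ≤ ENNReal.ofReal (c * (1 / 2) ^ k) := by
            apply ENNReal.ofReal_le_ofReal
            gcongr
        _ = _ := by
            rw [ENNReal.ofReal_mul hc0, ENNReal.ofReal_pow (by norm_num)]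
            congr 2
            rw [one_div, ENNReal.ofReal_inv_of_pos (by norm_num)]
            simp
    calc _ ≤ ∑' k : ℕ, ENNReal.ofReal c * (2⁻¹ : ℝ≥0∞) ^ k := ENNReal.tsum_le_tsum h1
      _ = ENNReal.ofReal (2 * c) := by
        rw [ENNReal.tsum_mul_left, ENNReal.tsum_geometric, ENNReal.one_sub_inv_two, inv_inv,
          mul_comm 2 c, ENNReal.ofReal_mul hc0]
        simp
  have hsmall : ∑ k ∈ Finset.range 3, ∑ s : Fin k → Fin 4, f (List.ofFn s) ≤
      ENNReal.ofReal (wt β γ y * (1 + (γ + β ^ 2 / γ) * (g (u - 2) + g (u + 2) + g (u + 4)))) := by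
    have hT : ∀ k, ∑ s : Fin k → Fin 4, f (List.ofFn s) = Tk f k [] := fun k => by
      rw [← Tk_eq]; simp
    simp only [hT]
    simp only [Finset.sum_range_succ, Finset.sum_range_zero, Tk, Fin.sum_univ_four,
      List.nil_append, List.cons_append, hf, ssum_cons, ssum_nil, Fw, Qw]
    have p1 := hg (u - 2)
    have p2 := hg (u + 2)
    have p3 := hg (u + 4)
    have hA : 0 ≤ β ^ 2 / γ := by positivity
    fin_cases y
    · simp [sv] at hy
    · simp [sv] at hy
    · simp [sv, wt, ← sub_eq_add_neg]
      rw [← ENNReal.ofReal_add (by positivity) (by positivity),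
        ← ENNReal.ofReal_add (by positivity) (by positivity)]
      apply ENNReal.ofReal_le_ofReal
      have : 0 ≤ β * (γ * g (u + 2) + β ^ 2 / γ * (g (u - 2) + g (u + 2) + g (u + 4))) := by
        positivity
      linarith
    · simp [sv, wt]
      rw [← ENNReal.ofReal_add (by positivity) (by positivity)]
      apply ENNReal.ofReal_le_ofReal
      have e : β ^ 2 = γ * (β ^ 2 / γ) := by field_simp
      have : 0 ≤ γ * (γ * (g (u - 2) + g (u + 2) + g (u + 4)) +
        β ^ 2 / γ * (g (u - 2) + g (u + 4))) := by positivity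
      have e' : β * (g (u + 2) * β) = γ * (β ^ 2 / γ) * g (u + 2) := by rw [← e]; ring
      linarith
  refine (add_le_add hsmall tail).trans (le_of_eq ?_)
  have p1 := hg (u - 2)
  have p2 := hg (u + 2)
  have p3 := hg (u + 4)
  have := hw y
  rw [← ENNReal.ofReal_add (by positivity) (by positivity)]
  congr 1
  simp only [epsw, hc]; ring

/-- reciprocal of the absolute value of the denominators -/
def gz (n : ℕ) (z : ℝ) (j : ℤ) : ℝ :=
  if j = n ∨ j = -n then 0 else |(n : ℝ) ^ 2 - (j : ℝ) ^ 2 + z|⁻¹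

lemma gz_nonneg (n : ℕ) (z : ℝ) (j : ℤ) : 0 ≤ gz n z j := by
  unfold gz; split_ifs <;> positivity

lemma gz_le {n : ℕ} {z : ℝ} (hn : 2 ≤ n) (hz : |z| ≤ 1) (j : ℤ) : gz n z j ≤ 1 / n := by
  have hn' : (2 : ℝ) ≤ n := by exact_mod_cast hn
  unfold gz
  split_ifs with h
  · positivity
  · push Not at h
    obtain ⟨h1, h2⟩ := h
    rw [one_div]
    apply inv_anti₀ (by linarith)
    obtain ⟨z1, z2⟩ := abs_le.1 hz
    rcases lt_or_ge |j| (n : ℤ) with hj | hj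
    · have a : |j| ≤ (n : ℤ) - 1 := by omega
      have a' : |(j : ℝ)| ≤ (n : ℝ) - 1 := by exact_mod_cast a
      have a2 : (j : ℝ) ^ 2 ≤ ((n : ℝ) - 1) ^ 2 := by
        rw [← sq_abs (j : ℝ)]; exact pow_le_pow_left₀ (abs_nonneg _) a' 2
      refine le_trans ?_ (le_abs_self _)
      nlinarith
    · have a : (n : ℤ) + 1 ≤ |j| := by
        rcases abs_cases j with ⟨e, _⟩ | ⟨e, _⟩ <;> omega
      have a' : (n : ℝ) + 1 ≤ |(j : ℝ)| := by exact_mod_cast a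
      have a2 : ((n : ℝ) + 1) ^ 2 ≤ (j : ℝ) ^ 2 := by
        rw [← sq_abs (j : ℝ)]; exact pow_le_pow_left₀ (by linarith) a' 2
      refine le_trans ?_ (neg_le_abs _)
      nlinarith

lemma gz_pt {n : ℕ} {z : ℝ} (hn : 2 ≤ n) (hz : |z| ≤ 1) (i : ℕ) (hi : i < n + 3) :
    gz n z (-n + 2 * ((i : ℤ) - 1)) ≤
      3 / (2 * n) * (1 / ((i : ℝ) + 1) + 1 / ((n : ℝ) + 3 - i)) := by
  have hn' : (2 : ℝ) ≤ n := by exact_mod_cast hn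
  have hi' : (i : ℝ) + 1 ≤ n + 3 := by exact_mod_cast hi
  have q1 : (0 : ℝ) < (i : ℝ) + 1 := by positivity
  have q2 : (0 : ℝ) < (n : ℝ) + 3 - i := by linarith
  have hb : ∀ b : ℝ, 1 ≤ b → (1 : ℝ) / n ≤ 3 / (2 * n) * b := by
    intro b hb
    have : (1 : ℝ) / n ≤ 3 / (2 * n) * 1 := by
      rw [mul_one, div_le_div_iff₀ (by positivity) (by positivity)]; linarith
    exact this.trans (by gcongr)
  by_cases h0 : i = 0
  · refine (gz_le hn hz _).trans (hb _ ?_)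
    subst h0
    have : (0 : ℝ) ≤ 1 / ((n : ℝ) + 3 - (0 : ℕ)) := by positivity
    simp at this ⊢; exact this
  by_cases h2 : i = n + 2
  · refine (gz_le hn hz _).trans (hb _ ?_)
    subst h2
    have : (0 : ℝ) ≤ 1 / (((n + 2 : ℕ) : ℝ) + 1) := by positivity
    have e : (n : ℝ) + 3 - ((n + 2 : ℕ) : ℝ) = 1 := by push_cast; ring
    rw [e]; linarith
  unfold gz
  split_ifs with h
  · positivity
  · have k1 : 2 ≤ i := by omega
    have k2 : i ≤ n := by omega
    have k1' : (2 : ℝ) ≤ i := by exact_mod_cast k1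
    have k2' : (i : ℝ) ≤ n := by exact_mod_cast k2
    obtain ⟨z1, z2⟩ := abs_le.1 hz
    have hk : (1 : ℝ) ≤ (i : ℝ) - 1 := by linarith
    have hk2 : (1 : ℝ) ≤ (n : ℝ) + 1 - i := by linarith
    have m1 : (1 : ℝ) ≤ ((i : ℝ) - 1) * ((n : ℝ) + 1 - i) := by nlinarith
    have : 2 * (((i : ℝ) - 1) * ((n : ℝ) + 1 - i)) ≤
        |(n : ℝ) ^ 2 - ((-n + 2 * ((i : ℤ) - 1) : ℤ) : ℝ) ^ 2 + z| := by
      refine le_trans ?_ (le_abs_self _)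
      push_cast
      nlinarith
    calc _ ≤ (2 * (((i : ℝ) - 1) * ((n : ℝ) + 1 - i)))⁻¹ := inv_anti₀ (by linarith) this
      _ = 1 / (2 * n) * (1 / ((i : ℝ) - 1) + 1 / ((n : ℝ) + 1 - i)) := by
        have : (i : ℝ) - 1 ≠ 0 := by linarith
        have : (n : ℝ) + 1 - i ≠ 0 := by linarith
        have : (n : ℝ) ≠ 0 := by linarith
        field_simp
        ring
      _ ≤ 1 / (2 * n) * (3 / ((i : ℝ) + 1) + 3 / ((n : ℝ) + 3 - i)) := by
        have r1 : 1 / ((i : ℝ) - 1) ≤ 3 / ((i : ℝ) + 1) := by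
          rw [div_le_div_iff₀ (by linarith) (by linarith)]; linarith
        have r2 : 1 / ((n : ℝ) + 1 - i) ≤ 3 / ((n : ℝ) + 3 - i) := by
          rw [div_le_div_iff₀ (by linarith) (by linarith)]; linarith
        gcongr
      _ = _ := by ring

lemma gz_sum {n : ℕ} {z : ℝ} (hn : 2 ≤ n) (hz : |z| ≤ 1) :
    ∑ i ∈ Finset.range (n + 3), gz n z (-n + 2 * ((i : ℤ) - 1)) ≤
      3 / n * (3 + Real.log n) := by
  have hn' : (2 : ℝ) ≤ n := by exact_mod_cast hn
  have har : ∑ i ∈ Finset.range (n + 3), 1 / ((i : ℝ) + 1) ≤ 3 + Real.log n := by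
    have h := harmonic_le_one_add_log (n + 3)
    have e : ((harmonic (n + 3) : ℚ) : ℝ) = ∑ i ∈ Finset.range (n + 3), 1 / ((i : ℝ) + 1) := by
      simp [harmonic]
    rw [e] at h
    have h4 : Real.log ((n + 3 : ℕ) : ℝ) ≤ Real.log (4 * n) := by
      apply Real.log_le_log (by positivity)
      push_cast; linarith
    rw [Real.log_mul (by norm_num) (by linarith)] at h4
    have h5 : Real.log 4 ≤ 2 := by
      have : (4 : ℝ) = 2 ^ 2 := by norm_num
      rw [this, Real.log_pow]
      have := Real.log_two_lt_d9
      push_cast; linarith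
    linarith
  have har2 : ∑ i ∈ Finset.range (n + 3), 1 / ((n : ℝ) + 3 - i) ≤ 3 + Real.log n := by
    refine le_trans (le_of_eq ?_) har
    rw [← Finset.sum_range_reflect]
    refine Finset.sum_congr rfl fun i hi => ?_
    have hi' := Finset.mem_range.1 hi
    have : ((n + 3 - 1 - i : ℕ) : ℝ) = (n : ℝ) + 2 - i := by
      rw [Nat.cast_sub (by omega)]; push_cast; ring
    rw [this]; congr 1; ring
  calc _ ≤ ∑ i ∈ Finset.range (n + 3),
        3 / (2 * n) * (1 / ((i : ℝ) + 1) + 1 / ((n : ℝ) + 3 - i)) :=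
        Finset.sum_le_sum fun i hi => gz_pt hn hz i (Finset.mem_range.1 hi)
    _ = 3 / (2 * n) * (∑ i ∈ Finset.range (n + 3), 1 / ((i : ℝ) + 1) +
          ∑ i ∈ Finset.range (n + 3), 1 / ((n : ℝ) + 3 - i)) := by
        rw [← Finset.mul_sum, Finset.sum_add_distrib]
    _ ≤ 3 / (2 * n) * ((3 + Real.log n) + (3 + Real.log n)) := by gcongr
    _ = _ := by field_simp; ring

lemma sum_shift_le {H : ℕ → ℝ} (hH : ∀ i, 0 ≤ H i) (n c : ℕ) (hc : c ≤ 3) :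
    ∑ i ∈ Finset.range n, H (c + i) ≤ ∑ i ∈ Finset.range (n + 3), H i := by
  have h1 : ∑ i ∈ Finset.range n, H (c + i) ≤ ∑ i ∈ Finset.range (c + n), H i := by
    rw [Finset.sum_range_add]
    exact le_add_of_nonneg_left (Finset.sum_nonneg fun i _ => hH i)
  refine h1.trans (Finset.sum_le_sum_of_subset_of_nonneg ?_ fun i _ _ => hH i)
  exact Finset.range_mono (by omega)

lemma eps_sum {n : ℕ} {z β γ : ℝ} (hβ : 0 ≤ β) (hγ : 0 < γ) (hn : 2 ≤ n) (hz : |z| ≤ 1) :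
    ∑ i ∈ Finset.range n, epsw (gz n z) β γ (1 / n) (-n + 2 * i) ≤
      (9 * (γ + β ^ 2 / γ) * (3 + Real.log n) + 128 * (β + γ) ^ 3 / γ) / n := by
  have hn' : (2 : ℝ) ≤ n := by exact_mod_cast hn
  set H : ℕ → ℝ := fun i => gz n z (-n + 2 * ((i : ℤ) - 1)) with hH
  have hH0 : ∀ i, 0 ≤ H i := fun i => gz_nonneg _ _ _
  have hs : ∑ i ∈ Finset.range (n + 3), H i ≤ 3 / n * (3 + Real.log n) := gz_sum hn hz
  have e : ∀ i : ℕ, epsw (gz n z) β γ (1 / n) (-n + 2 * i) =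
      (γ + β ^ 2 / γ) * (H (0 + i) + H (2 + i) + H (3 + i)) +
        128 * (β + γ) ^ 3 / γ * (1 / n) ^ 2 := by
    intro i
    simp only [epsw, hH]
    have e1 : (-n + 2 * i - 2 : ℤ) = -n + 2 * (((0 + i : ℕ) : ℤ) - 1) := by push_cast; ring
    have e2 : (-n + 2 * i + 2 : ℤ) = -n + 2 * (((2 + i : ℕ) : ℤ) - 1) := by push_cast; ring
    have e3 : (-n + 2 * i + 4 : ℤ) = -n + 2 * (((3 + i : ℕ) : ℤ) - 1) := by push_cast; ring
    rw [e1, e2, e3]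
  rw [Finset.sum_congr rfl fun i _ => e i, Finset.sum_add_distrib, ← Finset.mul_sum,
    Finset.sum_add_distrib, Finset.sum_add_distrib, Finset.sum_const, Finset.card_range,
    nsmul_eq_mul]
  have s0 := (sum_shift_le hH0 n 0 (by norm_num)).trans hs
  have s2 := (sum_shift_le hH0 n 2 (by norm_num)).trans hs
  have s3 := (sum_shift_le hH0 n 3 (by norm_num)).trans hs
  have hA : 0 ≤ γ + β ^ 2 / γ := by positivity
  calc _ ≤ (γ + β ^ 2 / γ) * (3 / n * (3 + Real.log n) + 3 / n * (3 + Real.log n) +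
        3 / n * (3 + Real.log n)) + n * (128 * (β + γ) ^ 3 / γ * (1 / n) ^ 2) := by gcongr
    _ = _ := by field_simp; ring

/-! ### Walks as lists -/

lemma Qw_ofFn (g : ℤ → ℝ) (w : Fin 4 → ℝ) (m : ℕ) (s : Fin m → Fin 4) (u : ℤ) :
    Qw g w u (List.ofFn s) =
      ∏ k, (w (s k) * g (u + ssum ((List.ofFn s).take k))) := by
  induction m generalizing u with
  | zero => simp [Qw]
  | succ m ih =>
    rw [List.ofFn_succ, Fin.prod_univ_succ]
    simp only [Qw, ih, Fin.val_zero, List.take_zero, ssum_nil, add_zero, Fin.val_succ,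
      List.take_succ_cons, ssum_cons, add_assoc]
    ring

lemma Fw_ofFn (g : ℤ → ℝ) (w : Fin 4 → ℝ) (m : ℕ) (s : Fin (m + 1) → Fin 4) (u : ℤ) :
    Fw g w u (List.ofFn s) =
      (∏ k, w (s k)) * ∏ k : Fin m, g (u + ssum ((List.ofFn s).take (k + 1))) := by
  rw [List.ofFn_succ, Fin.prod_univ_succ]
  simp only [Fw, Qw_ofFn, List.take_succ_cons, ssum_cons, add_assoc, Finset.prod_mul_distrib]
  ring

def wl {n : ℕ} (x : Walk n) : List (Fin 4) := List.ofFn fun k => si (x.step k)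

lemma map_wl {n : ℕ} (x : Walk n) : (wl x).map sv = List.ofFn x.step := by
  rw [wl, List.map_ofFn]
  congr 1
  funext k
  exact sv_si (x.step_mem k)

lemma wl_injective {n : ℕ} : Function.Injective (wl (n := n)) := by
  intro x y h
  have h' : List.ofFn x.step = List.ofFn y.step := by rw [← map_wl, ← map_wl, h]
  obtain ⟨ν, s, a, b, c⟩ := x
  obtain ⟨ν', s', a', b', c'⟩ := y
  simp only at h'
  have hl := congrArg List.length h'
  simp only [List.length_ofFn, add_left_inj] at hl
  subst hl
  have := List.ofFn_injective h'
  subst this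
  rfl

lemma vertexOf_eq {n : ℕ} (x : Walk n) (s : Fin x.ν) :
    vertexOf n x.step s = -n + ssum ((wl x).take (s + 1)) := by
  rw [ssum, List.map_take, map_wl, List.sum_take_ofFn, vertexOf]
  simp only [Nat.lt_succ_iff]

lemma ssum_wl {n : ℕ} (x : Walk n) : ssum (wl x) = 2 * n := by
  rw [ssum, map_wl, List.sum_ofFn]
  have := x.sum_eq
  linarith

lemma length_wl {n : ℕ} (x : Walk n) : (wl x).length = x.ν + 1 := by simp [wl]

lemma abs_Bwt {V : ℤ → ℝ} {β γ : ℝ} (h2 : |V 2| = β) (h2' : |V (-2)| = β) (h4 : |V 4| = γ)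
    (h4' : |V (-4)| = γ) (n : ℕ) (z : ℝ) (x : Walk n) :
    |Bwt V n z x| = Fw (gz n z) (wt β γ) (-n) (wl x) := by
  rw [wl, Fw_ofFn, Bwt, abs_div, Finset.abs_prod, Finset.abs_prod, div_eq_mul_inv,
    ← Finset.prod_inv_distrib]
  congr 1
  · refine Finset.prod_congr rfl fun k _ => ?_
    rcases x.step_mem k with h | h | h | h <;> rw [h] <;> simp [si, wt, *]
  · refine Finset.prod_congr rfl fun k _ => ?_
    have e := vertexOf_eq x k
    have hv := x.vertex_ne k
    rw [wl] at e
    rw [← e, gz, if_neg]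
    push Not
    exact hv

lemma Ref_of_pos (ys xs : List (Fin 4)) (p : ℕ → ℕ) (h0 : p 0 = 0)
    (hmono : ∀ i < ys.length, p i ≤ p (i + 1)) (hend : p ys.length = xs.length)
    (hsum : ∀ i ≤ ys.length, ssum (xs.take (p i)) = ssum (ys.take i)) : Ref ys xs := by
  induction ys generalizing xs p with
  | nil =>
    simp only [List.length_nil, h0] at hend
    exact List.length_eq_zero_iff.1 hend.symm
  | cons y ys ih =>
    have hm1 : ∀ i ≤ ys.length, p 1 ≤ p (i + 1) := by
      intro i hi
      induction i with
      | zero => simp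
      | succ i ihi => exact (ihi (by omega)).trans (hmono (i + 1) (by simp; omega))
    have hs1 := hsum 1 (by simp)
    refine ⟨xs.take (p 1), xs.drop (p 1), (List.take_append_drop _ _).symm, by simpa using hs1, ?_⟩
    refine ih (xs.drop (p 1)) (fun i => p (i + 1) - p 1) (by simp) ?_ ?_ ?_
    · intro i hi
      have := hmono (i + 1) (by simp; omega)
      omega
    · simp only [List.length_cons] at hend
      simp [hend]
    · intro i hi
      have h := hsum (i + 1) (by simp; omega)
      have e : p (i + 1) = p 1 + (p (i + 1) - p 1) := by have := hm1 i hi; omega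
      rw [e, List.take_add, ssum_append, hs1] at h
      simpa using h

lemma Ref_of_subseq {n : ℕ} {ξ x : Walk n} (h : VertexSubseq n ξ x) : Ref (wl ξ) (wl x) := by
  obtain ⟨e, he, hv⟩ := h
  refine Ref_of_pos _ _ (fun i => if i = 0 then 0 else
    if hi : i - 1 < ξ.ν then (e ⟨i - 1, hi⟩ : ℕ) + 1 else x.ν + 1) (by simp) ?_ ?_ ?_
  · intro i hi
    rw [length_wl] at hi
    by_cases h0 : i = 0
    · simp [h0]
    · have h1 : i - 1 < ξ.ν := by omega
      simp only [h0, if_false, h1, dif_pos, Nat.add_eq_zero_iff, one_ne_zero, and_false,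
        Nat.add_sub_cancel]
      split_ifs with h2
      · have : e ⟨i - 1, h1⟩ < e ⟨i, h2⟩ := he (by simp [Fin.lt_def]; omega)
        rw [Fin.lt_def] at this
        omega
      · have := (e ⟨i - 1, h1⟩).2
        omega
  · simp [length_wl]
  · intro i hi
    rw [length_wl] at hi
    by_cases h0 : i = 0
    · simp [h0]
    · simp only [h0, if_false]
      split_ifs with h1
      · have := hv ⟨i - 1, h1⟩
        rw [vertexOf_eq, vertexOf_eq] at this
        have e1 : i - 1 + 1 = i := by omega
        simp only [e1] at this
        linarith
      · have e1 : i = ξ.ν + 1 := by omega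
        subst e1
        rw [← length_wl ξ, ← length_wl x, List.take_length, List.take_length, ssum_wl, ssum_wl]

lemma main_bound {V : ℤ → ℝ} {β γ : ℝ} (h2 : |V 2| = β) (h2' : |V (-2)| = β) (h4 : |V 4| = γ)
    (h4' : |V (-4)| = γ) (hγ : 0 < γ) {n : ℕ} (hn : 2 ≤ n)
    (hsmall : 4 * (β + γ) * (1 / n) ≤ 1 / 2)
    {T : ℝ} (hT : T = (9 * (γ + β ^ 2 / γ) * (3 + Real.log n) + 128 * (β + γ) ^ 3 / γ) / n)
    (hT1 : T ≤ 1) (ξ : Walk n) (hξ : ξ.IsPos) {z : ℝ} (hz : |z| ≤ 1) :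
    ∑' x : {x : Walk n // ¬x.IsPos ∧ VertexSubseq n ξ x}, ENNReal.ofReal |Bwt V n z x.1| ≤
      ENNReal.ofReal (|Bwt V n z ξ| * (2 * T)) := by
  have hβ : 0 ≤ β := h2 ▸ abs_nonneg _
  have hg := gz_nonneg n z
  have hw := wt_nonneg hβ hγ
  have hgδ := gz_le hn hz
  set ε := epsw (gz n z) β γ (1 / n) with hεdef
  have hε : ∀ u, 0 ≤ ε u := by
    intro u
    have p1 := hg (u - 2)
    have p2 := hg (u + 2)
    have p3 := hg (u + 4)
    simp only [hεdef, epsw]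
    positivity
  have hys : ∀ y ∈ wl ξ, sv y = 2 ∨ sv y = 4 := by
    intro y hy
    obtain ⟨k, rfl⟩ := (List.mem_ofFn' _ _).1 hy
    rw [sv_si (ξ.step_mem k)]
    exact hξ k
  have hne : wl ξ ≠ [] := by
    intro h
    have := length_wl ξ
    rw [h] at this
    simp at this
  have hF := tsum_F_le hg hw hε (wl ξ) hne
    (fun u y hy => S_bound hβ hγ hg hgδ hsmall u y (hys y hy)) (-n)
  have hE := Ew_le_exp hε (wl ξ) hys (-n) n (ssum_wl ξ)
  have hS := eps_sum hβ hγ hn hz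
  rw [← hT] at hS
  set S := ∑ i ∈ Finset.range n, ε (-n + 2 * i)
  have hS0 : 0 ≤ S := Finset.sum_nonneg fun i _ => hε _
  have hexp : Real.exp S - 1 ≤ 2 * T := by
    have h := Real.abs_exp_sub_one_le (x := S) (by rw [abs_of_nonneg hS0]; linarith)
    rw [abs_of_nonneg hS0] at h
    linarith [le_abs_self (Real.exp S - 1)]
  have hB := abs_Bwt h2 h2' h4 h4' n z
  have hB0 : 0 ≤ Fw (gz n z) (wt β γ) (-n) (wl ξ) := Fw_nonneg hg hw _ _
  rw [ENNReal.tsum_eq_add_tsum_ite (⟨wl ξ, Ref_refl _⟩ : {x // Ref (wl ξ) x})] at hF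
  have hinj : ∑' x : {x : Walk n // ¬x.IsPos ∧ VertexSubseq n ξ x},
      ENNReal.ofReal |Bwt V n z x.1| ≤
      ∑' x : {x // Ref (wl ξ) x}, if x = ⟨wl ξ, Ref_refl _⟩ then 0
        else ENNReal.ofReal (Fw (gz n z) (wt β γ) (-n) x) := by
    let φ : {x : Walk n // ¬x.IsPos ∧ VertexSubseq n ξ x} → {x // Ref (wl ξ) x} :=
      fun x => ⟨wl x.1, Ref_of_subseq x.2.2⟩
    have hφ : Function.Injective φ := by
      intro a b hab
      exact Subtype.ext (wl_injective (congrArg Subtype.val hab))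
    refine le_trans (le_of_eq ?_) (ENNReal.tsum_comp_le_tsum_of_injective hφ _)
    refine tsum_congr fun x => ?_
    rw [if_neg, hB]
    intro h
    have : x.1 = ξ := wl_injective (congrArg Subtype.val h)
    exact x.2.1 (by rw [this]; exact hξ)
  have hsub := ENNReal.le_sub_of_add_le_left ENNReal.ofReal_ne_top hF
  refine (hinj.trans (le_trans (le_of_eq (tsum_congr fun x => by congr)) hsub)).trans ?_
  rw [← ENNReal.ofReal_sub _ hB0]
  apply ENNReal.ofReal_le_ofReal
  rw [hB]
  calc _ = Fw (gz n z) (wt β γ) (-n) (wl ξ) * (Ew ε (-n) (wl ξ) - 1) := by ring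
    _ ≤ _ := by
      apply mul_le_mul_of_nonneg_left _ hB0
      linarith

lemma exists_large {β γ : ℝ} (hγ : 0 < γ) :
    ∃ n₁ : ℕ, 0 < n₁ ∧ ∀ n : ℕ, n₁ ≤ n → 2 ≤ n ∧ 4 * (β + γ) * (1 / n) ≤ 1 / 2 ∧
      (9 * (γ + β ^ 2 / γ) * (3 + Real.log n) + 128 * (β + γ) ^ 3 / γ) / n ≤ 1 ∧
      2 * (27 * (γ + β ^ 2 / γ) + 128 * (β + γ) ^ 3 / γ) ≤
        22 * (γ + β ^ 2 / γ) * Real.log n := by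
  have hA : 0 < γ + β ^ 2 / γ := by positivity
  have hlog : Filter.Tendsto (fun n : ℕ => Real.log (n : ℝ)) Filter.atTop Filter.atTop :=
    Real.tendsto_log_atTop.comp tendsto_natCast_atTop_atTop
  have hinv : Filter.Tendsto (fun n : ℕ => 1 / (n : ℝ)) Filter.atTop (nhds 0) :=
    tendsto_one_div_atTop_nhds_zero_nat
  have hlogn : Filter.Tendsto (fun n : ℕ => Real.log (n : ℝ) / n) Filter.atTop (nhds 0) :=
    (Real.isLittleO_log_id_atTop.tendsto_div_nhds_zero).comp tendsto_natCast_atTop_atTop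
  have c1 : ∀ᶠ n : ℕ in Filter.atTop, 4 * (β + γ) * (1 / (n : ℝ)) ≤ 1 / 2 := by
    have := hinv.const_mul (4 * (β + γ))
    rw [mul_zero] at this
    exact this.eventually_le_const (by norm_num)
  have c2 : ∀ᶠ n : ℕ in Filter.atTop,
      (9 * (γ + β ^ 2 / γ) * (3 + Real.log n) + 128 * (β + γ) ^ 3 / γ) / (n : ℝ) ≤ 1 := by
    have := (hlogn.const_mul (9 * (γ + β ^ 2 / γ))).add
      (hinv.const_mul (27 * (γ + β ^ 2 / γ) + 128 * (β + γ) ^ 3 / γ))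
    simp only [mul_zero, add_zero] at this
    filter_upwards [this.eventually_le_const (zero_lt_one)] with n h
    refine le_trans (le_of_eq ?_) h
    ring
  have c3 : ∀ᶠ n : ℕ in Filter.atTop, 2 * (27 * (γ + β ^ 2 / γ) + 128 * (β + γ) ^ 3 / γ) ≤
        22 * (γ + β ^ 2 / γ) * Real.log n :=
    (hlog.const_mul_atTop (by positivity : 0 < 22 * (γ + β ^ 2 / γ))).eventually_ge_atTop _
  obtain ⟨N, hN⟩ := Filter.eventually_atTop.1
    ((Filter.eventually_ge_atTop 2).and (c1.and (c2.and c3)))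
  exact ⟨N + 1, by omega, fun n hn => hN n (by omega)⟩

theorem stmt19 (b c q m1 m2 : ℝ) (hq : 0 < q) (hc : c ≠ 0)
    (V : ℤ → ℝ) (hV2 : V 2 = b / 2 * q ^ m1) (hV2' : V (-2) = b / 2 * q ^ m1)
    (hV4 : V 4 = c / 2 * q ^ m2) (hV4' : V (-4) = c / 2 * q ^ m2)
    (hV0 : ∀ m : ℤ, m ≠ 2 → m ≠ -2 → m ≠ 4 → m ≠ -4 → V m = 0)
    (K : ℝ)
    (hK : K = 40 * (|b / 2 * q ^ m1| + |c / 2 * q ^ m2| +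
      |b ^ 2 / (2 * c) * q ^ (2 * m1 - m2)|)) :
    ∃ n₁ : ℕ, 0 < n₁ ∧ ∀ n : ℕ, n₁ ≤ n → ∀ ξ : Walk n, ξ.IsPos → ∀ z : ℝ, |z| ≤ 1 →
      Summable (fun x : {x : Walk n // ¬x.IsPos ∧ VertexSubseq n ξ x} => |Bwt V n z x.1|) ∧
      ∑' x : {x : Walk n // ¬x.IsPos ∧ VertexSubseq n ξ x}, |Bwt V n z x.1| ≤
        |Bwt V n z ξ| * K * Real.log n / n := by
  set β := |b / 2 * q ^ m1| with hβ
  set γ := |c / 2 * q ^ m2| with hγ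
  have hγ0 : 0 < γ := by
    have := Real.rpow_pos_of_pos hq m2
    rw [hγ]
    exact abs_pos.2 (by positivity)
  have hK3 : |b ^ 2 / (2 * c) * q ^ (2 * m1 - m2)| = β ^ 2 / γ := by
    rw [hβ, hγ, ← abs_pow, ← abs_div]
    congr 1
    have e : q ^ (2 * m1 - m2) = (q ^ m1) ^ 2 / q ^ m2 := by
      rw [Real.rpow_sub hq, two_mul, Real.rpow_add hq, sq]
    have := (Real.rpow_pos_of_pos hq m2).ne'
    rw [e]
    field_simp
  rw [hK3] at hK
  have hβ0 : 0 ≤ β := abs_nonneg _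
  obtain ⟨n₁, hn₁, hlarge⟩ := exists_large (β := β) hγ0
  refine ⟨n₁, hn₁, fun n hn ξ hξ z hz => ?_⟩
  obtain ⟨l1, l2, l3, l4⟩ := hlarge n hn
  have hmain := main_bound (V := V) (by rw [hV2]) (by rw [hV2']) (by rw [hV4]) (by rw [hV4'])
    hγ0 l1 l2 rfl l3 ξ hξ hz
  have hsum : Summable
      (fun x : {x : Walk n // ¬x.IsPos ∧ VertexSubseq n ξ x} => |Bwt V n z x.1|) := by
    have := ENNReal.summable_toReal (ne_top_of_le_ne_top ENNReal.ofReal_ne_top hmain)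
    simpa using this
  refine ⟨hsum, ?_⟩
  rw [← ENNReal.ofReal_tsum_of_nonneg (fun _ => abs_nonneg _) hsum] at hmain
  have hn0 : (0 : ℝ) < n := by exact_mod_cast (by omega : 0 < n)
  have hl0 : 0 ≤ Real.log n := Real.log_natCast_nonneg n
  have hT0 : 0 ≤ (9 * (γ + β ^ 2 / γ) * (3 + Real.log n) + 128 * (β + γ) ^ 3 / γ) / n := by
    positivity
  have hmain' := (ENNReal.ofReal_le_ofReal_iff
    (mul_nonneg (abs_nonneg _) (mul_nonneg zero_le_two hT0))).1 hmain
  refine hmain'.trans ?_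
  have : 2 * ((9 * (γ + β ^ 2 / γ) * (3 + Real.log n) + 128 * (β + γ) ^ 3 / γ) / n) ≤
      K * Real.log n / n := by
    rw [← mul_div_assoc]
    apply div_le_div_of_nonneg_right _ hn0.le
    have : 0 ≤ β * Real.log n := mul_nonneg hβ0 hl0
    rw [hK]
    linarith
  calc _ ≤ |Bwt V n z ξ| * (K * Real.log n / n) := mul_le_mul_of_nonneg_left this (abs_nonneg _)
    _ = _ := by ring
end
end
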